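/- arXiv:2602.14852 — 2 statements merged into one kernel-verified Lean document; each statement's English description precedes it below -/
import Mathlib

section
/- Let G be any st-graph that is not an st-path and has at least three vertices. Then there exists a constant C < ∞ (depending on G but not on n) such that c₁(TC(G^{⊘n})) ≥ C⁻¹·log|V(G^{⊘n})| for every n ≥ 0. -/
open Finset MeasureTheory

open Finset MeasureTheory

/-- The transportation cost norm of a zero-total-mass signed measure `μ` (represented as a
function `V → ℝ`) on a finite metric space with distance `d`: the infimum of costs of
transportation plans representing `μ`. -/
noncomputable def TCnorm {V : Type*} [Fintype V] [DecidableEq V]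
    (d : V → V → ℝ) (μ : V → ℝ) : ℝ :=
  sInf { c : ℝ | ∃ (n : ℕ) (a : Fin n → ℝ) (x y : Fin n → V),
    (∀ i, 0 ≤ a i) ∧
    (∀ z : V, μ z = ∑ i, a i * ((if x i = z then (1 : ℝ) else 0) -
      (if y i = z then (1 : ℝ) else 0))) ∧
    c = ∑ i, a i * d (x i) (y i) }

/-- The `L₁`-distortion of a space `M` equipped with a distance function `ρ`:
the infimum of `D ≥ 1` such that there is a measure space `(Ω, ν)` and a map
`f : M → L₁(ν)` with `ρ x y ≤ ‖f x - f y‖₁ ≤ D * ρ x y` for all `x, y`. -/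
noncomputable def c1OfDist {M : Type*} (ρ : M → M → ℝ) : ℝ :=
  sInf { D : ℝ | 1 ≤ D ∧ ∃ (Ω : Type) (_ : MeasurableSpace Ω) (ν : Measure Ω)
    (f : M → Lp ℝ 1 ν), ∀ x y : M,
      ρ x y ≤ dist (f x) (f y) ∧ dist (f x) (f y) ≤ D * ρ x y }

/-- The `L₁`-distortion of the transportation cost space `TC(V, d)`, i.e. of the space of
zero-total-mass signed measures on `V` with the metric induced by the transportation cost
norm. -/
noncomputable def c1TC {V : Type*} [Fintype V] [DecidableEq V] (d : V → V → ℝ) : ℝ :=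
  c1OfDist (fun μ ν : {μ : V → ℝ // ∑ x, μ x = 0} => TCnorm d (fun x => μ.1 x - ν.1 x))

/-- The support of a signed measure given as a function. -/
def msupp {V : Type*} (μ : V → ℝ) : Set V := {x | μ x ≠ 0}

/-- Diameter of a set with respect to a distance function. -/
noncomputable def sDiam {V : Type*} (d : V → V → ℝ) (S : Set V) : ℝ :=
  sSup { c : ℝ | ∃ x ∈ S, ∃ y ∈ S, c = d x y }

/-- Distance between two sets with respect to a distance function. -/
noncomputable def sDist {V : Type*} (d : V → V → ℝ) (S T : Set V) : ℝ :=
  sInf { c : ℝ | ∃ x ∈ S, ∃ y ∈ T, c = d x y }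
/-- A finite weighted directed graph with distinguished source and sink vertices, edge
lengths, and an edge thickness function. This is the underlying data of an `st`-graph. -/
structure WGraph : Type 1 where
  /-- vertex set -/
  V : Type
  /-- edge index set -/
  ι : Type
  finV : Fintype V
  decV : DecidableEq V
  finι : Fintype ι
  decι : DecidableEq ι
  /-- initial vertex of an edge -/
  src : ι → V
  /-- terminal vertex of an edge -/
  dst : ι → V
  /-- length of an edge -/
  len : ι → ℝ
  /-- thickness of an edge -/
  th : ι → ℝ
  /-- source vertex -/
  s : V
  /-- sink vertex -/
  t : V

attribute [instance] WGraph.finV WGraph.decV WGraph.finι WGraph.decι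

namespace WGraph

/-- Initial vertex of a step (an edge traversed forwards or backwards). -/
def stepSrc (G : WGraph) (p : G.ι × Bool) : G.V := if p.2 then G.src p.1 else G.dst p.1

/-- Terminal vertex of a step. -/
def stepDst (G : WGraph) (p : G.ι × Bool) : G.V := if p.2 then G.dst p.1 else G.src p.1

/-- `G.IsWalk x y l` : the list of steps `l` forms a walk from `x` to `y` in the underlying
undirected graph of `G`. -/
def IsWalk (G : WGraph) : G.V → G.V → List (G.ι × Bool) → Prop
  | x, y, [] => x = y
  | x, y, p :: l => G.stepSrc p = x ∧ G.IsWalk (G.stepDst p) y l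

/-- `G.IsDiWalk x y l` : the list of edges `l` forms a directed walk from `x` to `y`. -/
def IsDiWalk (G : WGraph) : G.V → G.V → List G.ι → Prop
  | x, y, [] => x = y
  | x, y, e :: l => G.src e = x ∧ G.IsDiWalk (G.dst e) y l

/-- The length of a directed walk. -/
def diLen (G : WGraph) (l : List G.ι) : ℝ := (l.map G.len).sum

/-- The weighted shortest-path metric of `G`. -/
noncomputable def gdist (G : WGraph) (x y : G.V) : ℝ :=
  sInf { c : ℝ | ∃ l : List (G.ι × Bool), G.IsWalk x y l ∧
    c = (l.map fun p => G.len p.1).sum }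

end WGraph

/-- `G` is an `st`-graph: it has positive edge lengths and thicknesses, it is connected,
its weighted shortest-path metric satisfies `d(s,t) = 1`, every directed path is a
geodesic, and the thickness function is witnessed by a finite nonempty family of directed
edge paths from `s` to `t` via `th(e) = |{i : e ∈ γ_i}| / |I|`. -/
structure IsSTGraph (G : WGraph) : Prop where
  s_ne_t : G.s ≠ G.t
  len_pos : ∀ e, 0 < G.len e
  th_pos : ∀ e, 0 < G.th e
  conn : ∀ x y : G.V, ∃ l, G.IsWalk x y l
  dist_st : G.gdist G.s G.t = 1
  dir_geodesic : ∀ (x y : G.V) (l : List G.ι), G.IsDiWalk x y l → G.gdist x y = G.diLen l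
  th_witness : ∃ (m : ℕ) (γ : Fin (m + 1) → List G.ι),
    (∀ i, G.IsDiWalk G.s G.t (γ i)) ∧
    ∀ e : G.ι, G.th e = ((Finset.univ.filter fun i => e ∈ γ i).card : ℝ) / (m + 1)

/-- `G` is an `st`-path: it consists of a single directed path from `s` to `t`, and all
edges have thickness `1`. -/
def IsSTPath (G : WGraph) : Prop :=
  ∃ (k : ℕ) (E : Fin k ≃ G.ι) (v : Fin (k + 1) → G.V),
    Function.Bijective v ∧ v 0 = G.s ∧ v (Fin.last k) = G.t ∧
    (∀ i : Fin k, G.src (E i) = v i.castSucc ∧ G.dst (E i) = v i.succ) ∧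
    (∀ e, G.th e = 1)

namespace WGraph

/-- The map sending a vertex of `H` to the corresponding vertex of `G ⊘ H` obtained by
replacing the edge `e` of `G` with a copy of `H` (where `s_H` is identified with the
initial vertex of `e` and `t_H` with the terminal vertex of `e`). -/
def slashEmbed (G H : WGraph) (e : G.ι) (v : H.V) :
    G.V ⊕ (G.ι × {v : H.V // v ≠ H.s ∧ v ≠ H.t}) :=
  if hs : v = H.s then Sum.inl (G.src e)
  else if ht : v = H.t then Sum.inl (G.dst e)
  else Sum.inr (e, ⟨v, hs, ht⟩)

/-- The slash product `G ⊘ H`: every edge of `G` is replaced by a copy of `H`. New edge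
lengths and thicknesses are the products of the corresponding ones of `G` and `H`. -/
def slash (G H : WGraph) : WGraph where
  V := G.V ⊕ (G.ι × {v : H.V // v ≠ H.s ∧ v ≠ H.t})
  ι := G.ι × H.ι
  finV := inferInstance
  decV := inferInstance
  finι := inferInstance
  decι := inferInstance
  src := fun p => slashEmbed G H p.1 (H.src p.2)
  dst := fun p => slashEmbed G H p.1 (H.dst p.2)
  len := fun p => G.len p.1 * H.len p.2
  th := fun p => G.th p.1 * H.th p.2
  s := Sum.inl G.s
  t := Sum.inl G.t

/-- The trivial `st`-path: a single directed edge from `s` to `t` of length 1 and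
thickness 1. -/
def edgeGraph : WGraph where
  V := Bool
  ι := Unit
  finV := inferInstance
  decV := inferInstance
  finι := inferInstance
  decι := inferInstance
  src := fun _ => false
  dst := fun _ => true
  len := fun _ => 1
  th := fun _ => 1
  s := false
  t := true

/-- Slash powers: `G^{⊘0}` is a single directed edge from `s` to `t` of length 1 and
thickness 1, and `G^{⊘(n+1)} = G^{⊘n} ⊘ G`. -/
def slashPow (G : WGraph) : ℕ → WGraph
  | 0 => edgeGraph
  | n + 1 => (G.slashPow n).slash G

end WGraph

open Finset MeasureTheory

namespace SlashTC

/-- sign of a boolean -/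
def sg (b : Bool) : ℝ := if b then 1 else -1

lemma sg_mul_self (b : Bool) : sg b * sg b = 1 := by cases b <;> simp [sg]
lemma sg_not (b : Bool) : sg (!b) = - sg b := by cases b <;> simp [sg]
lemma sg_abs (b : Bool) : |sg b| = 1 := by cases b <;> simp [sg]

lemma sum_sign_mul {S : Type} [Fintype S] [DecidableEq S] (w w' : S) :
    ∑ ε : S → Bool, sg (ε w) * sg (ε w') = if w = w' then (2 : ℝ) ^ Fintype.card S else 0 := by
  split_ifs with h
  · subst h
    simp [sg_mul_self]
  · apply Finset.sum_involution (fun ε _ => Function.update ε w (!(ε w)))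
    · intro ε _
      have h' : w' ≠ w := fun h2 => h h2.symm
      simp [Function.update_of_ne h', sg_not]
    · intro ε _ _ h2
      have := congrFun h2 w
      simp at this
    · intro ε _; simp
    · intro ε _; simp

lemma sum_sign_sq {S : Type} [Fintype S] [DecidableEq S] (c : S → ℝ) :
    ∑ ε : S → Bool, (∑ w, sg (ε w) * c w) ^ 2 = (2 : ℝ) ^ Fintype.card S * ∑ w, c w ^ 2 := by
  have h1 : ∀ ε : S → Bool, (∑ w, sg (ε w) * c w) ^ 2
      = ∑ w, ∑ w', (sg (ε w) * sg (ε w')) * (c w * c w') := by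
    intro ε
    rw [sq, Finset.sum_mul_sum]
    refine Finset.sum_congr rfl fun w _ => Finset.sum_congr rfl fun w' _ => by ring
  simp_rw [h1]
  rw [Finset.sum_comm]
  simp_rw [fun w => Finset.sum_comm (s := (Finset.univ : Finset (S → Bool)))
    (t := (Finset.univ : Finset S)) (f := fun ε w' => (sg (ε w) * sg (ε w')) * (c w * c w'))]
  simp_rw [← Finset.sum_mul, sum_sign_mul]
  simp [Finset.mul_sum, sq]

lemma sum_sign_abs {S : Type} [Fintype S] [DecidableEq S] (c : S → ℝ) :
    ((2 : ℝ) ^ Fintype.card S)⁻¹ * ∑ ε : S → Bool, |∑ w, sg (ε w) * c w|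
      ≤ Real.sqrt (∑ w, c w ^ 2) := by
  apply Real.le_sqrt_of_sq_le
  have h := sq_sum_le_card_mul_sum_sq (s := (Finset.univ : Finset (S → Bool)))
    (f := fun ε => |∑ w, sg (ε w) * c w|)
  simp only [sq_abs, sum_sign_sq] at h
  have hc : ((Finset.univ : Finset (S → Bool)).card : ℝ) = 2 ^ Fintype.card S := by
    simp
  rw [hc] at h
  have hp : (0 : ℝ) < 2 ^ Fintype.card S := by positivity
  rw [mul_pow]
  calc _ ≤ (((2 : ℝ) ^ Fintype.card S)⁻¹) ^ 2 *
        (2 ^ Fintype.card S * (2 ^ Fintype.card S * ∑ w, c w ^ 2)) := by gcongr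
    _ = _ := by field_simp

/-- coarea principle on a finite set -/
lemma coarea {V ι : Type} [Fintype V] [DecidableEq V] [Fintype ι] (src dst : ι → V) (β : ι → ℝ)
    (N : (V → ℝ) → ℝ) (hadd : ∀ g h, N (g + h) ≤ N g + N h)
    (hsmul : ∀ (c : ℝ) g, 0 ≤ c → N (c • g) = c * N g)
    (hconst : ∀ c : ℝ, N (fun _ => c) ≤ 0)
    (hcut : ∀ A : Finset V, N (fun x => if x ∈ A then 1 else 0) ≤
      ∑ e, β e * |(if dst e ∈ A then (1 : ℝ) else 0) - (if src e ∈ A then 1 else 0)|)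
    (g : V → ℝ) : N g ≤ ∑ e, β e * |g (dst e) - g (src e)| := by
  have key : ∀ (k : ℕ) (g : V → ℝ), (∀ x, 0 ≤ g x) →
      (Finset.univ.filter fun x => g x ≠ 0).card = k →
      N g ≤ ∑ e, β e * |g (dst e) - g (src e)| := by
    intro k
    induction k using Nat.strong_induction_on with
    | _ k ih =>
      intro g hg hk
      rcases (Finset.univ.filter fun x => g x ≠ 0).eq_empty_or_nonempty with he | hne
      · have h0 : g = fun _ => 0 := by
          funext x
          by_contra hx
          have : x ∈ (Finset.univ.filter fun x => g x ≠ 0) := by simp [hx]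
          rw [he] at this; simp at this
        subst h0
        simpa using hconst 0
      · set A := Finset.univ.filter fun x => g x ≠ 0 with hA
        obtain ⟨a, ha, hmin⟩ := Finset.exists_min_image A g hne
        set m := g a with hm
        have hmpos : 0 < m := lt_of_le_of_ne (hg a) (by simpa [hA] using ha : g a ≠ 0).symm
        set χ : V → ℝ := fun x => if x ∈ A then 1 else 0 with hχ
        set g' : V → ℝ := fun x => g x - m * χ x with hg'
        have hout : ∀ x, x ∉ A → g x = 0 := by
          intro x hx; by_contra h; exact hx (by simp [hA, h])
        have hg'0 : ∀ x, 0 ≤ g' x := by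
          intro x
          by_cases hx : x ∈ A
          · have := hmin x hx; simp [hg', hχ, hx]; linarith
          · simp [hg', hχ, hx, hout x hx]
        have hcard : (Finset.univ.filter fun x => g' x ≠ 0).card < k := by
          rw [← hk]
          apply Finset.card_lt_card
          refine ⟨?_, ?_⟩
          · intro x hx
            by_contra hxA
            have h1 := hout x hxA
            simp [hg', hχ, hxA, h1] at hx
          · intro hsub
            have := hsub ha
            simp [hg', hχ, ha, hm] at this
        have hrec := ih _ hcard g' hg'0 rfl
        have hsum : g = g' + m • χ := by
          funext x; simp [hg']
        have hc := hcut A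
        calc N g ≤ N g' + N (m • χ) := by rw [hsum]; exact hadd _ _
          _ = N g' + m * N χ := by rw [hsmul _ _ hmpos.le]
          _ ≤ (∑ e, β e * |g' (dst e) - g' (src e)|)
              + m * ∑ e, β e * |χ (dst e) - χ (src e)| := by
            gcongr
          _ = ∑ e, β e * |g (dst e) - g (src e)| := by
            rw [Finset.mul_sum, ← Finset.sum_add_distrib]
            refine Finset.sum_congr rfl fun e _ => ?_
            have : |g (dst e) - g (src e)| = |g' (dst e) - g' (src e)|
                + m * |χ (dst e) - χ (src e)| := by
              by_cases h1 : dst e ∈ A <;> by_cases h2 : src e ∈ A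
              · simp [hg', hχ, h1, h2]
              · have e1 := hmin _ h1
                have e2 := hout _ h2
                simp [hg', hχ, h1, h2, e2]
                rw [abs_of_nonneg (hg _), abs_of_nonneg (by linarith)]; ring
              · have e1 := hmin _ h2
                have e2 := hout _ h1
                simp [hg', hχ, h1, h2, e2]
                rw [abs_of_nonneg (hg _), abs_of_nonpos (by linarith)]; ring
              · simp [hg', hχ, h1, h2]
            rw [this]; ring
  -- shift
  set c : ℝ := ∑ x, |g x| with hc
  have hpos : ∀ x, 0 ≤ g x + c := by
    intro x
    have : |g x| ≤ c := Finset.single_le_sum (f := fun x => |g x|) (fun _ _ => abs_nonneg _)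
      (Finset.mem_univ x)
    have := neg_abs_le (g x)
    linarith
  have h1 := key _ (fun x => g x + c) hpos rfl
  have h2 : g = (fun x => g x + c) + (fun _ => -c) := by funext x; simp
  calc N g ≤ N (fun x => g x + c) + N (fun _ => -c) := by
        conv_lhs => rw [h2]
        exact hadd _ _
    _ ≤ N (fun x => g x + c) := by linarith [hconst (-c)]
    _ ≤ _ := by simpa using h1

lemma geom_trunc (q : ℝ) (hq0 : 0 < q) (hq1 : q < 1) (J : ℕ) :
    ∀ Y : ℝ, 0 ≤ Y → ∑ j ∈ Finset.range J, (if q ^ j ≤ Y then q ^ j else 0) ≤ Y / (1 - q) := by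
  have h1q : 0 < 1 - q := by linarith
  induction J with
  | zero => intro Y hY; simp; positivity
  | succ J ih =>
    intro Y hY
    by_cases h : 1 ≤ Y
    · calc _ ≤ ∑ j ∈ Finset.range (J + 1), q ^ j := by
            refine Finset.sum_le_sum fun j _ => ?_
            split_ifs
            · exact le_rfl
            · positivity
        _ ≤ 1 / (1 - q) := by
          rw [geom_sum_eq hq1.ne, le_div_iff₀ h1q]
          have : (q ^ (J + 1) - 1) / (q - 1) * (1 - q) = 1 - q ^ (J + 1) := by
            have : q - 1 ≠ 0 := by linarith
            field_simp
            ring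
          rw [this]
          have : 0 < q ^ (J + 1) := by positivity
          linarith
        _ ≤ _ := by gcongr
    · rw [Finset.sum_range_succ']
      simp only [pow_zero, h, if_false, add_zero]
      have := ih (Y / q) (by positivity)
      calc _ = q * ∑ j ∈ Finset.range J, (if q ^ j ≤ Y / q then q ^ j else 0) := by
            rw [Finset.mul_sum]
            refine Finset.sum_congr rfl fun j _ => ?_
            simp only [le_div_iff₀ hq0, ← pow_succ]
            split_ifs
            · ring
            · simp
        _ ≤ q * (Y / q / (1 - q)) := by gcongr
        _ = _ := by field_simp

end SlashTC

open Finset MeasureTheory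

namespace SlashTC

set_option linter.unusedSectionVars false

lemma exists_common {Z I : Type} [AddCommGroup Z] [DecidableEq I] (R : ℕ) (hR : 0 < R)
    (v : I → Z) (c : I → ℝ) (s : Finset I) :
    ∀ Ψ : I → Z → ℝ, (∀ i ∈ s, ∀ z, R * c i ≤ ∑ k ∈ Finset.range R, Ψ i (z + k • v i)) →
      ∃ z, ∑ i ∈ s, c i ≤ ∑ i ∈ s, Ψ i z := by
  have hR' : (0 : ℝ) < R := by exact_mod_cast hR
  induction s using Finset.induction_on with
  | empty => intro Ψ _; exact ⟨0, by simp⟩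
  | insert i s hi ih =>
    intro Ψ h
    obtain ⟨z, hz⟩ := ih (fun j z => (R : ℝ)⁻¹ * ∑ k ∈ Finset.range R, Ψ j (z + k • v i)) (by
      intro j hj z
      rw [← Finset.mul_sum, Finset.sum_comm]
      have : ∀ k ∈ Finset.range R, R * c j ≤
          ∑ l ∈ Finset.range R, Ψ j (z + l • v j + k • v i) := by
        intro k _
        have := h j (Finset.mem_insert_of_mem hj) (z + k • v i)
        refine this.trans (le_of_eq ?_)
        refine Finset.sum_congr rfl fun l _ => ?_
        congr 1; abel
      have h2 := Finset.sum_le_sum this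
      simp only [Finset.sum_const, Finset.card_range, nsmul_eq_mul] at h2
      rw [le_inv_mul_iff₀ hR']
      exact h2)
    have hzi := h i (Finset.mem_insert_self _ _) z
    by_contra hcon
    push Not at hcon
    have h3 : ∑ k ∈ Finset.range R, ∑ j ∈ insert i s, Ψ j (z + k • v i)
        < ∑ k ∈ Finset.range R, ∑ j ∈ insert i s, c j :=
      Finset.sum_lt_sum_of_nonempty (by simpa using hR.ne') fun k _ => hcon _
    simp only [Finset.sum_insert hi, Finset.sum_add_distrib, Finset.sum_const, Finset.card_range,
      nsmul_eq_mul] at h3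
    rw [← Finset.mul_sum, le_inv_mul_iff₀ hR'] at hz
    rw [Finset.sum_comm (s := Finset.range R)] at h3
    linarith

section lin
variable {ι E : Type} [Fintype ι] [DecidableEq ι] [NormedAddCommGroup E] [NormedSpace ℝ E]

/-- basis vector -/
abbrev bv (y : ι) : ι → ℤ := Pi.single y 1

/-- averaging operator in a direction -/
noncomputable def av (N : ℕ) (u : ι → ℤ) (φ : (ι → ℤ) → E) : (ι → ℤ) → E :=
  fun z => (N : ℝ)⁻¹ • ∑ k ∈ Finset.range N, φ (z + k • u)

lemma norm_avg_le (N : ℕ) (hN : 0 < N) (a : ℕ → E) (C : ℝ) (h : ∀ k, ‖a k‖ ≤ C) :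
    ‖(N : ℝ)⁻¹ • ∑ k ∈ Finset.range N, a k‖ ≤ C := by
  have hN' : (0 : ℝ) < N := by exact_mod_cast hN
  rw [norm_smul, norm_inv, Real.norm_natCast, inv_mul_le_iff₀ hN']
  calc _ ≤ ∑ k ∈ Finset.range N, ‖a k‖ := norm_sum_le _ _
    _ ≤ ∑ k ∈ Finset.range N, C := Finset.sum_le_sum fun k _ => h k
    _ = _ := by simp

lemma av_diff (N : ℕ) (hN : 0 < N) (u : ι → ℤ) (φ : (ι → ℤ) → E) (a b : ι → ℤ) (C : ℝ)
    (h : ∀ z, ‖φ (z + a) - φ (z + b)‖ ≤ C) (z : ι → ℤ) :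
    ‖av N u φ (z + a) - av N u φ (z + b)‖ ≤ C := by
  unfold av
  rw [← smul_sub, ← Finset.sum_sub_distrib]
  apply norm_avg_le N hN
  intro k
  have := h (z + k • u)
  convert this using 4 <;> abel

lemma av_diff2 (N : ℕ) (hN : 0 < N) (u : ι → ℤ) (φ : (ι → ℤ) → E) (a b : ι → ℤ) (C : ℝ)
    (h : ∀ z, ‖(φ (z + a + b) - φ (z + a)) - (φ (z + b) - φ z)‖ ≤ C) (z : ι → ℤ) :
    ‖(av N u φ (z + a + b) - av N u φ (z + a)) - (av N u φ (z + b) - av N u φ z)‖ ≤ C := by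
  unfold av
  rw [← smul_sub, ← smul_sub, ← smul_sub, ← Finset.sum_sub_distrib, ← Finset.sum_sub_distrib,
    ← Finset.sum_sub_distrib]
  apply norm_avg_le N hN
  intro k
  have := h (z + k • u)
  convert this using 4 <;> · congr 1; abel

lemma av_step (N : ℕ) (u : ι → ℤ) (φ : (ι → ℤ) → E) (z : ι → ℤ) :
    av N u φ (z + u) - av N u φ z = (N : ℝ)⁻¹ • (φ (z + N • u) - φ z) := by
  unfold av
  rw [← smul_sub, ← Finset.sum_sub_distrib]
  congr 1
  have := Finset.sum_range_sub (fun k => φ (z + k • u)) N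
  simp only [zero_smul, add_zero] at this
  rw [← this]
  refine Finset.sum_congr rfl fun k _ => ?_
  congr 2
  rw [succ_nsmul]; abel

lemma smooth (φ : (ι → ℤ) → E) (L : (ι → ℤ) → ℝ) (hL : ∀ v z, ‖φ (z + v) - φ z‖ ≤ L v)
    (Dd : ι → ι → ℝ) (hD : ∀ y y' z, ‖φ (z + bv y) - φ (z + bv y')‖ ≤ Dd y y')
    (N : ℕ) (hN : 0 < N) (s : Finset ι) :
    ∃ F : (ι → ℤ) → E, (∀ v z, ‖F (z + v) - F z‖ ≤ L v) ∧
      (∀ y y' z, ‖F (z + bv y) - F (z + bv y')‖ ≤ Dd y y') ∧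
      (∀ y ∈ s, ∀ v z, ‖(F (z + v + bv y) - F (z + v)) - (F (z + bv y) - F z)‖
        ≤ 2 * (N : ℝ)⁻¹ * L v) ∧
      ∃ B : ℝ, ∀ z, ‖F z - φ z‖ ≤ B := by
  have hN' : (0 : ℝ) < N := by exact_mod_cast hN
  induction s using Finset.induction_on with
  | empty => exact ⟨φ, hL, hD, by simp, 0, by simp⟩
  | insert i s hi ih =>
    obtain ⟨F, h1, h2, h3, B, h4⟩ := ih
    refine ⟨av N (bv i) F, ?_, ?_, ?_, ?_⟩
    · intro v z
      have := av_diff N hN (bv i) F v 0 (L v) (by simpa using h1 v) z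
      simpa using this
    · intro y y' z
      exact av_diff N hN (bv i) F _ _ _ (h2 y y') z
    · intro y hy v z
      rcases Finset.mem_insert.1 hy with rfl | hy
      · rw [av_step, av_step, ← smul_sub, norm_smul, norm_inv, Real.norm_natCast]
        have e1 : (F (z + v + N • bv y) - F (z + v)) - (F (z + N • bv y) - F z)
          = (F (z + N • bv y + v) - F (z + N • bv y)) - (F (z + v) - F z) := by
          rw [show z + v + N • bv y = z + N • bv y + v by abel]; abel
        rw [e1]
        have := (norm_sub_le _ _).trans (add_le_add (h1 v (z + N • bv y)) (h1 v z))
        calc _ ≤ (N : ℝ)⁻¹ * (L v + L v) := by gcongr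
          _ = _ := by ring
      · exact av_diff2 N hN (bv i) F v (bv y) _ (h3 y hy v) z
    · refine ⟨(∑ k ∈ Finset.range N, L (k • bv i)) + B, fun z => ?_⟩
      have hL0 : ∀ v, 0 ≤ L v := fun v => (norm_nonneg _).trans (hL v 0)
      have : ‖av N (bv i) F z - F z‖ ≤ ∑ k ∈ Finset.range N, L (k • bv i) := by
        have e : F z = (N : ℝ)⁻¹ • ∑ k ∈ Finset.range N, F z := by
          rw [Finset.sum_const, Finset.card_range, ← Nat.cast_smul_eq_nsmul ℝ, smul_smul,
            inv_mul_cancel₀ hN'.ne', one_smul]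
        unfold av
        conv_lhs => rw [e]
        rw [← smul_sub, ← Finset.sum_sub_distrib, norm_smul, norm_inv, Real.norm_natCast]
        have hN1 : (N : ℝ)⁻¹ ≤ 1 := inv_le_one_of_one_le₀ (by exact_mod_cast hN)
        calc _ ≤ 1 * ∑ k ∈ Finset.range N, L (k • bv i) := by
              gcongr
              exact (norm_sum_le _ _).trans (Finset.sum_le_sum fun k _ => h1 _ _)
          _ = _ := one_mul _
      calc _ ≤ ‖av N (bv i) F z - F z‖ + ‖F z - φ z‖ := norm_sub_le_norm_sub_add_norm_sub _ _ _
        _ ≤ _ := add_le_add this (h4 z)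

/-- first-order approximation -/
lemma lin_approx (L : (ι → ℤ) → ℝ) (v : ι → ℤ) :
    ∃ C : ℝ, ∀ (F : (ι → ℤ) → E) (η : ℝ),
      (∀ y u z, ‖(F (z + u + bv y) - F (z + u)) - (F (z + bv y) - F z)‖ ≤ η * L u) →
      ∀ z, ‖F (z + v) - F z - ∑ y, (v y : ℝ) • (F (z + bv y) - F z)‖ ≤ C * η := by
  let H : AddSubgroup (ι → ℤ) :=
    { carrier := {v | ∃ C : ℝ, ∀ (F : (ι → ℤ) → E) (η : ℝ),
        (∀ y u z, ‖(F (z + u + bv y) - F (z + u)) - (F (z + bv y) - F z)‖ ≤ η * L u) →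
        ∀ z, ‖F (z + v) - F z - ∑ y, (v y : ℝ) • (F (z + bv y) - F z)‖ ≤ C * η}
      zero_mem' := ⟨0, fun F η _ z => by simp⟩
      add_mem' := by
        rintro a b ⟨Ca, ha⟩ ⟨Cb, hb⟩
        refine ⟨Ca + Cb + (∑ y, |(b y : ℝ)|) * L a, fun F η h z => ?_⟩
        have e1 := ha F η h z
        have e2 := hb F η h (z + a)
        have e3 : ‖∑ y, (b y : ℝ) • ((F (z + a + bv y) - F (z + a)) - (F (z + bv y) - F z))‖
            ≤ (∑ y, |(b y : ℝ)|) * (η * L a) := by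
          rw [Finset.sum_mul]
          refine (norm_sum_le _ _).trans (Finset.sum_le_sum fun y _ => ?_)
          rw [norm_smul, Real.norm_eq_abs]
          gcongr
          exact h y a z
        have e4 : F (z + (a + b)) - F z - ∑ y, (((a + b) y : ℤ) : ℝ) • (F (z + bv y) - F z)
          = (F (z + a) - F z - ∑ y, (a y : ℝ) • (F (z + bv y) - F z))
            + (F (z + a + b) - F (z + a) - ∑ y, (b y : ℝ) • (F (z + a + bv y) - F (z + a)))
            + ∑ y, (b y : ℝ) • ((F (z + a + bv y) - F (z + a)) - (F (z + bv y) - F z)) := by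
          simp only [Pi.add_apply, Int.cast_add, add_smul, Finset.sum_add_distrib, ← add_assoc]
          simp only [smul_sub (_ : ℝ) (F (z + a + bv _) - F (z + a)), Finset.sum_sub_distrib]
          abel
        rw [e4]
        calc _ ≤ Ca * η + Cb * η + (∑ y, |(b y : ℝ)|) * (η * L a) := norm_add_le_of_le (norm_add_le_of_le e1 e2) e3
          _ = _ := by ring
      neg_mem' := by
        rintro a ⟨Ca, ha⟩
        refine ⟨Ca + (∑ y, |(a y : ℝ)|) * L (-a), fun F η h z => ?_⟩
        have e1 := ha F η h (z + -a)
        have e3 : ‖∑ y, (a y : ℝ) • ((F (z + -a + bv y) - F (z + -a)) - (F (z + bv y) - F z))‖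
            ≤ (∑ y, |(a y : ℝ)|) * (η * L (-a)) := by
          rw [Finset.sum_mul]
          refine (norm_sum_le _ _).trans (Finset.sum_le_sum fun y _ => ?_)
          rw [norm_smul, Real.norm_eq_abs]
          gcongr
          exact h y (-a) z
        have e4 : F (z + -a) - F z - ∑ y, (((-a) y : ℤ) : ℝ) • (F (z + bv y) - F z)
          = - (F (z + -a + a) - F (z + -a) - ∑ y, (a y : ℝ) • (F (z + -a + bv y) - F (z + -a)))
            - ∑ y, (a y : ℝ) • ((F (z + -a + bv y) - F (z + -a)) - (F (z + bv y) - F z)) := by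
          simp only [Pi.neg_apply, Int.cast_neg, neg_smul, Finset.sum_neg_distrib,
            neg_add_cancel_right]
          simp only [smul_sub (_ : ℝ) (F (z + -a + bv _) - F (z + -a)), Finset.sum_sub_distrib]
          abel
        rw [e4]
        calc _ ≤ Ca * η + (∑ y, |(a y : ℝ)|) * (η * L (-a)) := by
              refine (norm_sub_le _ _).trans (add_le_add ?_ e3)
              rw [norm_neg]; exact e1
          _ = _ := by ring }
  have hs : ∀ y, bv y ∈ H := by
    intro y
    refine ⟨0, fun F η _ z => ?_⟩
    have : ∑ y', (((bv y : ι → ℤ) y' : ℤ) : ℝ) • (F (z + bv y') - F z) = F (z + bv y) - F z := by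
      rw [Finset.sum_eq_single y]
      · simp
      · intro b _ hb; simp [hb]
      · simp
    rw [this]; simp
  have : v ∈ H := by
    have e : v = ∑ y, v y • (bv y : ι → ℤ) := by
      funext x
      simp [Finset.sum_apply, Pi.single_apply]
    rw [e]
    exact H.sum_mem fun y _ => H.zsmul_mem (hs y) _
  exact this

theorem linearize {I : Type} [Fintype I]
    (φ : (ι → ℤ) → E) (L : (ι → ℤ) → ℝ) (hL : ∀ v z, ‖φ (z + v) - φ z‖ ≤ L v)
    (Dd : ι → ι → ℝ) (hD : ∀ y y' z, ‖φ (z + bv y) - φ (z + bv y')‖ ≤ Dd y y')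
    (v : I → ι → ℤ) (α ℓ : I → ℝ) (hα : ∀ i, 0 ≤ α i)
    (hlow : ∀ i (R : ℕ) z, R * ℓ i ≤ ‖φ (z + R • v i) - φ z‖) (ε : ℝ) (hε : 0 < ε) :
    ∃ g : ι → E, (∀ y y', ‖g y - g y'‖ ≤ Dd y y') ∧
      ∑ i, α i * ℓ i - ε ≤ ∑ i, α i * ‖∑ y, (v i y : ℝ) • g y‖ := by
  classical
  choose C hC using fun i => lin_approx (E := E) L (v i)
  set K := ∑ i, α i * |C i| with hK
  have hK0 : 0 ≤ K := Finset.sum_nonneg fun i _ => mul_nonneg (hα i) (abs_nonneg _)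
  obtain ⟨N, hN⟩ := exists_nat_gt (4 * (K + 1) / ε)
  have hNpos : (0 : ℝ) < N := lt_trans (by positivity) hN
  have hN0 : 0 < N := by exact_mod_cast hNpos
  obtain ⟨F, h1, h2, h3, B, h4⟩ := smooth φ L hL Dd hD N hN0 Finset.univ
  have hB : 0 ≤ B := (norm_nonneg _).trans (h4 0)
  set Sα := ∑ i, α i with hSα
  have hS0 : 0 ≤ Sα := Finset.sum_nonneg fun i _ => hα i
  obtain ⟨R, hR⟩ := exists_nat_gt (4 * (Sα * B + 1) / ε)
  have hRpos : (0 : ℝ) < R := lt_trans (by positivity) hR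
  have hR0 : 0 < R := by exact_mod_cast hRpos
  obtain ⟨x, hx⟩ := exists_common R hR0 v (fun i => α i * (ℓ i - 2 * B / R)) Finset.univ
    (fun i z => α i * ‖F (z + v i) - F z‖) (by
      intro i _ z
      rw [← Finset.mul_sum]
      have e1 : R * (ℓ i - 2 * B / R) ≤
          ∑ k ∈ Finset.range R, ‖F (z + k • v i + v i) - F (z + k • v i)‖ := by
        have t1 := Finset.sum_range_sub (fun k => F (z + k • v i)) R
        simp only [zero_smul, add_zero] at t1
        have t2 : ‖F (z + R • v i) - F z‖ ≤
            ∑ k ∈ Finset.range R, ‖F (z + k • v i + v i) - F (z + k • v i)‖ := by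
          rw [← t1]
          refine (norm_sum_le _ _).trans (le_of_eq ?_)
          refine Finset.sum_congr rfl fun k _ => ?_
          rw [succ_nsmul, add_assoc]
        have t3 := hlow i R z
        have t4 : ‖φ (z + R • v i) - φ z‖ ≤ ‖F (z + R • v i) - F z‖ + 2 * B := by
          have : φ (z + R • v i) - φ z = (F (z + R • v i) - F z)
            + (-(F (z + R • v i) - φ (z + R • v i))) + (F z - φ z) := by abel
          rw [this]
          have := norm_add_le_of_le (norm_add_le_of_le (le_refl ‖F (z + R • v i) - F z‖)
            ((norm_neg _).le.trans (h4 (z + R • v i)))) (h4 z)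
          linarith
        have t5 : R * (ℓ i - 2 * B / R) = R * ℓ i - 2 * B := by field_simp
        rw [t5]; linarith
      calc _ = α i * (R * (ℓ i - 2 * B / R)) := by ring
        _ ≤ _ := mul_le_mul_of_nonneg_left e1 (hα i))
  refine ⟨fun y => F (x + bv y) - F x, fun y y' => ?_, ?_⟩
  · simpa using h2 y y' x
  have hη : ∀ y u z, ‖(F (z + u + bv y) - F (z + u)) - (F (z + bv y) - F z)‖
      ≤ (2 * (N : ℝ)⁻¹) * L u := fun y u z => h3 y (Finset.mem_univ _) u z
  have e1 : ∀ i, α i * ‖F (x + v i) - F x‖ ≤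
      α i * ‖∑ y, (v i y : ℝ) • (F (x + bv y) - F x)‖ + α i * |C i| * (2 * (N : ℝ)⁻¹) := by
    intro i
    have a1 := hC i F _ hη x
    have a2 := norm_le_norm_add_norm_sub' (F (x + v i) - F x)
      (∑ y, (v i y : ℝ) • (F (x + bv y) - F x))
    have a3 : C i * (2 * (N : ℝ)⁻¹) ≤ |C i| * (2 * (N : ℝ)⁻¹) := by
      gcongr; exact le_abs_self _
    calc _ ≤ α i * (‖∑ y, (v i y : ℝ) • (F (x + bv y) - F x)‖ + |C i| * (2 * (N : ℝ)⁻¹)) := by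
          refine mul_le_mul_of_nonneg_left ?_ (hα i)
          linarith
      _ = _ := by ring
  have e2 := Finset.sum_le_sum fun i (_ : i ∈ Finset.univ) => e1 i
  rw [Finset.sum_add_distrib, ← Finset.sum_mul] at e2
  have e3 : ∑ i, α i * (ℓ i - 2 * B / R) = ∑ i, α i * ℓ i - Sα * (2 * B / R) := by
    rw [hSα, Finset.sum_mul, ← Finset.sum_sub_distrib]
    refine Finset.sum_congr rfl fun i _ => by ring
  have e4 : Sα * (2 * B / R) ≤ ε / 2 := by
    rw [div_lt_iff₀ hε] at hR
    rw [mul_div_assoc', div_le_iff₀ hRpos]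
    linarith
  have e5 : K * (2 * (N : ℝ)⁻¹) ≤ ε / 2 := by
    rw [div_lt_iff₀ hε] at hN
    rw [← mul_assoc, ← div_eq_mul_inv, div_le_iff₀ hNpos]
    linarith
  rw [e3] at hx
  linarith

end lin

/-- scalar linear inequalities pass to `L₁` -/
lemma L1_ineq {Ω V I J : Type} [MeasurableSpace Ω] {ν : Measure Ω} [Fintype V] [Fintype I]
    [Fintype J] (α : I → ℝ) (a : I → V → ℝ) (β : J → ℝ) (b : J → V → ℝ)
    (h : ∀ g : V → ℝ, ∑ i, α i * |∑ y, a i y * g y| ≤ ∑ j, β j * |∑ y, b j y * g y|)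
    (g : V → Lp ℝ 1 ν) :
    ∑ i, α i * ‖∑ y, a i y • g y‖ ≤ ∑ j, β j * ‖∑ y, b j y • g y‖ := by
  have hcoe : ∀ c : V → ℝ, ((∑ y, c y • g y : Lp ℝ 1 ν) : Ω → ℝ) =ᵐ[ν]
      fun ω => ∑ y, c y * (g y : Ω → ℝ) ω := by
    intro c
    have h1 := Lp.coeFn_finsetSum (p := 1) (μ := ν) Finset.univ (fun y => c y • g y)
    have h2 : ∀ᵐ ω ∂ν, ∀ y, ((c y • g y : Lp ℝ 1 ν) : Ω → ℝ) ω = c y * (g y : Ω → ℝ) ω := by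
      rw [ae_all_iff]
      intro y
      filter_upwards [Lp.coeFn_smul (c y) (g y)] with ω hω
      simpa using hω
    filter_upwards [h1, h2] with ω h1 h2
    rw [h1, Finset.sum_apply]
    exact Finset.sum_congr rfl fun y _ => h2 y
  have hnorm : ∀ c : V → ℝ, ‖∑ y, c y • g y‖ = ∫ ω, |∑ y, c y * (g y : Ω → ℝ) ω| ∂ν := by
    intro c
    rw [L1.norm_eq_integral_norm]
    apply integral_congr_ae
    filter_upwards [hcoe c] with ω hω
    rw [hω, Real.norm_eq_abs]
  have hIntg : ∀ c : V → ℝ, Integrable (fun ω => |∑ y, c y * (g y : Ω → ℝ) ω|) ν := by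
    intro c
    apply Integrable.abs
    apply integrable_finsetSum
    intro y _
    exact (L1.integrable_coeFn (g y)).const_mul _
  simp_rw [hnorm, ← integral_const_mul]
  rw [← integral_finsetSum _ (fun i _ => (hIntg _).const_mul _),
    ← integral_finsetSum _ (fun i _ => (hIntg _).const_mul _)]
  apply integral_mono
  · exact integrable_finsetSum _ (fun i _ => (hIntg _).const_mul _)
  · exact integrable_finsetSum _ (fun i _ => (hIntg _).const_mul _)
  · intro ω
    exact h fun y => (g y : Ω → ℝ) ω

end SlashTC

open Finset MeasureTheory

namespace SlashTC

open WGraph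

section walks
variable {G : WGraph}

lemma diWalk_append {l₁ : List G.ι} : ∀ {x y : G.V} {l₂ : List G.ι},
    G.IsDiWalk x y (l₁ ++ l₂) ↔ ∃ z, G.IsDiWalk x z l₁ ∧ G.IsDiWalk z y l₂ := by
  induction l₁ with
  | nil => intro x y l₂; simp [IsDiWalk]
  | cons e l ih =>
    intro x y l₂
    simp only [List.cons_append, IsDiWalk, ih]
    constructor
    · rintro ⟨h, z, h1, h2⟩; exact ⟨z, ⟨h, h1⟩, h2⟩
    · rintro ⟨z, ⟨h, h1⟩, h2⟩; exact ⟨h, z, h1, h2⟩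

lemma walk_append {l₁ : List (G.ι × Bool)} : ∀ {x y : G.V} {l₂ : List (G.ι × Bool)},
    G.IsWalk x y (l₁ ++ l₂) ↔ ∃ z, G.IsWalk x z l₁ ∧ G.IsWalk z y l₂ := by
  induction l₁ with
  | nil => intro x y l₂; simp [IsWalk]
  | cons e l ih =>
    intro x y l₂
    simp only [List.cons_append, IsWalk, ih]
    constructor
    · rintro ⟨h, z, h1, h2⟩; exact ⟨z, ⟨h, h1⟩, h2⟩
    · rintro ⟨z, ⟨h, h1⟩, h2⟩; exact ⟨h, z, h1, h2⟩

lemma diLen_append (l₁ l₂ : List G.ι) : G.diLen (l₁ ++ l₂) = G.diLen l₁ + G.diLen l₂ := by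
  simp [diLen]

lemma diLen_pos (hl : ∀ e, 0 < G.len e) (l : List G.ι) (h : l ≠ []) : 0 < G.diLen l := by
  unfold diLen
  apply List.sum_pos
  · intro x hx
    obtain ⟨e, _, rfl⟩ := List.mem_map.1 hx
    exact hl e
  · simpa using h

lemma walk_lip (h : G.V → ℝ) (hh : ∀ e, |h (G.dst e) - h (G.src e)| ≤ G.len e)
    (l : List (G.ι × Bool)) : ∀ {x y : G.V}, G.IsWalk x y l →
      h x - h y ≤ (l.map fun p => G.len p.1).sum := by
  induction l with
  | nil => intro x y hw; simp only [IsWalk] at hw; simp [hw]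
  | cons p l ih =>
    intro x y hw
    obtain ⟨h1, h2⟩ := hw
    have := ih h2
    have h3 := abs_le.1 (hh p.1)
    simp only [List.map_cons, List.sum_cons]
    obtain ⟨e, b⟩ := p
    subst h1
    cases b <;> simp [stepSrc, stepDst] at * <;> linarith

lemma lip_gdist (hc : ∀ x y : G.V, ∃ l, G.IsWalk x y l) (h : G.V → ℝ)
    (hh : ∀ e, |h (G.dst e) - h (G.src e)| ≤ G.len e) (x y : G.V) :
    h x - h y ≤ G.gdist x y := by
  unfold gdist
  apply le_csInf
  · obtain ⟨l, hl⟩ := hc x y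
    exact ⟨_, l, hl, rfl⟩
  · rintro c ⟨l, hl, rfl⟩
    exact walk_lip h hh l hl

lemma gdist_nonneg (hl : ∀ e, 0 < G.len e) (x y : G.V) : 0 ≤ G.gdist x y := by
  unfold gdist
  apply Real.sInf_nonneg
  rintro c ⟨l, _, rfl⟩
  apply List.sum_nonneg
  intro a ha
  obtain ⟨p, _, rfl⟩ := List.mem_map.1 ha
  exact (hl _).le

lemma gdist_le_len (hl : ∀ e, 0 < G.len e) (e : G.ι) :
    G.gdist (G.dst e) (G.src e) ≤ G.len e := by
  unfold gdist
  apply csInf_le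
  · refine ⟨0, ?_⟩
    rintro c ⟨l, _, rfl⟩
    apply List.sum_nonneg
    intro a ha
    obtain ⟨p, _, rfl⟩ := List.mem_map.1 ha
    exact (hl _).le
  · exact ⟨[(e, false)], by simp [IsWalk, stepSrc, stepDst], by simp⟩

/-- vertices along a directed walk -/
lemma walk_vertices (l : List G.ι) : ∀ {x y : G.V}, G.IsDiWalk x y l →
    ∃ v : Fin (l.length + 1) → G.V, v 0 = x ∧ v (Fin.last _) = y ∧
      ∀ i : Fin l.length, G.src (l.get i) = v i.castSucc ∧ G.dst (l.get i) = v i.succ := by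
  induction l with
  | nil => intro x y h; exact ⟨fun _ => x, rfl, h, fun i => i.elim0⟩
  | cons e l ih =>
    rintro x y ⟨h1, h2⟩
    obtain ⟨v, hv0, hvl, hv⟩ := ih h2
    refine ⟨Fin.cons x v, rfl, ?_, ?_⟩
    · rw [← hvl]; rfl
    · intro i
      refine Fin.cases ?_ (fun i => ?_) i
      · exact ⟨h1, hv0.symm⟩
      · exact hv i

lemma walk_tv (ψ : G.V → ℝ) (l : List G.ι) : ∀ {x y : G.V}, G.IsDiWalk x y l →
    |ψ y - ψ x| ≤ (l.map fun e => |ψ (G.dst e) - ψ (G.src e)|).sum := by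
  induction l with
  | nil => intro x y h; simp only [IsDiWalk] at h; simp [h]
  | cons e l ih =>
    rintro x y ⟨h1, h2⟩
    subst h1
    have := ih h2
    simp only [List.map_cons, List.sum_cons]
    have h3 := abs_sub_le (ψ y) (ψ (G.dst e)) (ψ (G.src e))
    linarith

end walks

variable {G : WGraph}

lemma gdist_self (hG : IsSTGraph G) (x : G.V) : G.gdist x x = 0 := by
  have := hG.dir_geodesic x x [] rfl
  simpa [diLen] using this

lemma diWalk_nodup (hG : IsSTGraph G) {x y : G.V} {l : List G.ι} (h : G.IsDiWalk x y l) :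
    l.Nodup := by
  rw [List.nodup_iff_sublist]
  induction l generalizing x with
  | nil => intro a ha; simp at ha
  | cons e l ih =>
    obtain ⟨h1, h2⟩ := h
    intro a ha
    rcases List.sublist_cons_iff.1 ha with h3 | ⟨r, hr, h3⟩
    · exact ih h2 a h3
    · obtain ⟨hae, hr'⟩ := List.cons.inj hr
      subst hae
      have hmem : a ∈ l := by
        rw [← hr'] at h3; exact List.singleton_sublist.1 h3
      obtain ⟨l₁, l₂, rfl⟩ := List.append_of_mem hmem
      obtain ⟨z, hz1, hz2⟩ := diWalk_append.1 h2
      obtain ⟨hz3, _⟩ := hz2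
      have hw : G.IsDiWalk z z (a :: l₁) := ⟨hz3, hz1⟩
      have e1 := hG.dir_geodesic _ _ _ hw
      rw [gdist_self hG] at e1
      have := diLen_pos hG.len_pos (a :: l₁) (by simp)
      linarith

lemma exists_pos (hG : IsSTGraph G) : ∃ pos : G.V → ℝ, pos G.s = 0 ∧ pos G.t = 1 ∧
    ∀ e, pos (G.dst e) - pos (G.src e) = G.len e := by
  refine ⟨fun v => G.gdist G.s v, gdist_self hG _, hG.dist_st, fun e => ?_⟩
  obtain ⟨m, γ, h1, h2⟩ := hG.th_witness
  have hp := hG.th_pos e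
  rw [h2 e] at hp
  have : (Finset.univ.filter fun i => e ∈ γ i).Nonempty := by
    rw [← Finset.card_pos]
    by_contra hc
    have : (Finset.univ.filter fun i => e ∈ γ i).card = 0 := by omega
    rw [this] at hp; simp at hp
  obtain ⟨i, hi⟩ := this
  have hi : e ∈ γ i := by simpa using hi
  obtain ⟨l₁, l₂, hl⟩ := List.append_of_mem hi
  have hw := h1 i
  rw [hl] at hw
  obtain ⟨z, hz1, hz2, hz3⟩ := diWalk_append.1 hw
  subst hz2
  have e1 := hG.dir_geodesic _ _ _ hz1
  have hz4 : G.IsDiWalk G.s (G.dst e) (l₁ ++ [e]) :=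
    diWalk_append.2 ⟨_, hz1, rfl, rfl⟩
  have e2 := hG.dir_geodesic _ _ _ hz4
  rw [diLen_append] at e2
  simp only [e1, e2]
  simp [diLen]

lemma th_avg (hG : IsSTGraph G) : ∃ (m : ℕ) (γ : Fin (m + 1) → List G.ι),
    (∀ i, G.IsDiWalk G.s G.t (γ i)) ∧
    (∀ e : G.ι, G.th e = ((Finset.univ.filter fun i => e ∈ γ i).card : ℝ) / (m + 1)) ∧
    ∀ x : G.ι → ℝ, ∑ e, G.th e * x e = ((m : ℝ) + 1)⁻¹ * ∑ i, ((γ i).map x).sum := by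
  obtain ⟨m, γ, h1, h2⟩ := hG.th_witness
  refine ⟨m, γ, h1, h2, fun x => ?_⟩
  have h3 : ∀ i, ((γ i).map x).sum = ∑ e, if e ∈ γ i then x e else 0 := by
    intro i
    have hn := diWalk_nodup hG (h1 i)
    rw [← List.sum_toFinset x hn, ← Finset.sum_filter]
    congr 1
    ext e; simp
  simp_rw [h3]
  rw [Finset.sum_comm, Finset.mul_sum]
  refine Finset.sum_congr rfl fun e _ => ?_
  rw [h2, ← Finset.sum_filter, Finset.sum_const, nsmul_eq_mul]
  field_simp

lemma sum_th_len (hG : IsSTGraph G) : ∑ e, G.th e * G.len e = 1 := by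
  obtain ⟨m, γ, h1, h2, h3⟩ := th_avg hG
  rw [h3]
  have : ∀ i, ((γ i).map G.len).sum = 1 := by
    intro i
    have := hG.dir_geodesic _ _ _ (h1 i)
    rw [hG.dist_st] at this
    exact this.symm
  simp_rw [this]
  simp
  field_simp

lemma flow_ineq (hG : IsSTGraph G) (ψ : G.V → ℝ) :
    |ψ G.t - ψ G.s| ≤ ∑ e, G.th e * |ψ (G.dst e) - ψ (G.src e)| := by
  obtain ⟨m, γ, h1, h2, h3⟩ := th_avg hG
  rw [h3, le_inv_mul_iff₀ (by positivity)]
  calc _ = ∑ i : Fin (m + 1), |ψ G.t - ψ G.s| := by simp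
    _ ≤ _ := Finset.sum_le_sum fun i _ => walk_tv ψ _ (h1 i)

lemma th_le_one (hG : IsSTGraph G) (e : G.ι) : G.th e ≤ 1 := by
  obtain ⟨m, γ, h1, h2⟩ := hG.th_witness
  rw [h2, div_le_one (by positivity)]
  have := Finset.card_filter_le (Finset.univ : Finset (Fin (m + 1))) (fun i => e ∈ γ i)
  simp only [Finset.card_univ, Fintype.card_fin] at this
  exact_mod_cast this

lemma vertex_ineq (hG : IsSTGraph G) (a : G.V) : ∃ K : ℝ, 0 < K ∧ ∀ ψ : G.V → ℝ,
    |ψ a - ψ G.s| ≤ K * ∑ e, G.th e * |ψ (G.dst e) - ψ (G.src e)| := by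
  obtain ⟨l, hl⟩ := hG.conn G.s a
  have key : ∀ (l : List (G.ι × Bool)) (x y : G.V), G.IsWalk x y l → ∃ K : ℝ, 0 < K ∧
      ∀ ψ : G.V → ℝ, |ψ y - ψ x| ≤ K * ∑ e, G.th e * |ψ (G.dst e) - ψ (G.src e)| := by
    have hTV : ∀ ψ : G.V → ℝ, 0 ≤ ∑ e, G.th e * |ψ (G.dst e) - ψ (G.src e)| := fun ψ =>
      Finset.sum_nonneg fun e _ => mul_nonneg (hG.th_pos e).le (abs_nonneg _)
    intro l
    induction l with
    | nil =>
      intro x y h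
      simp only [IsWalk] at h
      exact ⟨1, one_pos, fun ψ => by simp only [h, sub_self, abs_zero, one_mul]; exact hTV ψ⟩
    | cons p l ih =>
      rintro x y ⟨h1, h2⟩
      obtain ⟨K, hK, hψ⟩ := ih _ _ h2
      refine ⟨K + (G.th p.1)⁻¹, by have := hG.th_pos p.1; positivity, fun ψ => ?_⟩
      have e1 : |ψ (G.stepDst p) - ψ x| = |ψ (G.dst p.1) - ψ (G.src p.1)| := by
        subst h1
        obtain ⟨e, b⟩ := p
        cases b
        · simp [stepSrc, stepDst, abs_sub_comm]
        · simp [stepSrc, stepDst]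
      have e2 : |ψ (G.dst p.1) - ψ (G.src p.1)| ≤ (G.th p.1)⁻¹ *
          ∑ e, G.th e * |ψ (G.dst e) - ψ (G.src e)| := by
        rw [le_inv_mul_iff₀ (hG.th_pos _)]
        exact Finset.single_le_sum (f := fun e => G.th e * |ψ (G.dst e) - ψ (G.src e)|)
          (fun e _ => mul_nonneg (hG.th_pos e).le (abs_nonneg _)) (Finset.mem_univ p.1)
      have e3 := abs_sub_le (ψ y) (ψ (G.stepDst p)) (ψ x)
      rw [add_mul]
      have := hψ ψ
      linarith
  exact key l _ _ hl

lemma exists_thin (hG : IsSTGraph G) (hnp : ¬ IsSTPath G) : ∃ e, G.th e < 1 := by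
  by_contra hcon
  push Not at hcon
  apply hnp
  have hth : ∀ e, G.th e = 1 := fun e => le_antisymm (th_le_one hG e) (hcon e)
  obtain ⟨m, γ, h1, h2⟩ := hG.th_witness
  have hmem : ∀ e, e ∈ γ 0 := by
    intro e
    have h3 := hth e
    rw [h2, div_eq_one_iff_eq (by positivity)] at h3
    have h4 : (Finset.univ.filter fun i => e ∈ γ i).card = m + 1 := by exact_mod_cast h3
    have h5 : (Finset.univ.filter fun i => e ∈ γ i) = Finset.univ := by
      apply Finset.eq_univ_of_card
      rw [h4]; simp
    have : (0 : Fin (m + 1)) ∈ (Finset.univ.filter fun i => e ∈ γ i) := by rw [h5]; simp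
    simpa using this
  have hnd := diWalk_nodup hG (h1 0)
  obtain ⟨v, hv0, hvl, hv⟩ := walk_vertices _ (h1 0)
  obtain ⟨pos, hp0, hp1, hpe⟩ := exists_pos hG
  have hinj : Function.Injective v := by
    have : StrictMono (pos ∘ v) := by
      rw [Fin.strictMono_iff_lt_succ]
      intro i
      have := hpe ((γ 0).get i)
      rw [(hv i).1, (hv i).2] at this
      have := hG.len_pos ((γ 0).get i)
      simp only [Function.comp]
      linarith
    exact this.injective.of_comp
  refine ⟨(γ 0).length, Equiv.ofBijective (γ 0).get ⟨?_, ?_⟩, v, ⟨hinj, ?_⟩, hv0, hvl, ?_, hth⟩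
  · exact List.nodup_iff_injective_get.1 hnd
  · intro e
    obtain ⟨i, hi⟩ := List.mem_iff_get.1 (hmem e)
    exact ⟨i, hi⟩
  · have hsrc : ∀ e, ∃ i, v i = G.src e := by
      intro e
      obtain ⟨i, hi⟩ := List.mem_iff_get.1 (hmem e)
      exact ⟨_, by rw [← hi, (hv i).1]⟩
    have hdst : ∀ e, ∃ i, v i = G.dst e := by
      intro e
      obtain ⟨i, hi⟩ := List.mem_iff_get.1 (hmem e)
      exact ⟨_, by rw [← hi, (hv i).2]⟩
    intro x
    obtain ⟨l, hl⟩ := hG.conn x G.s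
    cases l with
    | nil => exact ⟨0, by rw [hv0]; exact hl.symm⟩
    | cons p l =>
      obtain ⟨h3, _⟩ := hl
      obtain ⟨e, b⟩ := p
      cases b
      · obtain ⟨i, hi⟩ := hdst e
        exact ⟨i, by rw [hi, ← h3]; simp [stepSrc]⟩
      · obtain ⟨i, hi⟩ := hsrc e
        exact ⟨i, by rw [hi, ← h3]; simp [stepSrc]⟩
  · intro i
    exact hv i

end SlashTC

open Finset MeasureTheory

namespace SlashTC

open WGraph

lemma sum_slash (H G : WGraph) (f : (H.slash G).ι → ℝ) :
    ∑ p, f p = ∑ e : H.ι, ∑ e' : G.ι, f (e, e') :=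
  Fintype.sum_prod_type (α₁ := H.ι) (α₂ := G.ι) f

lemma emb_s (H G : WGraph) (e : H.ι) : slashEmbed H G e G.s = Sum.inl (H.src e) := by
  simp [slashEmbed]

lemma emb_t (H G : WGraph) (hst : G.s ≠ G.t) (e : H.ι) :
    slashEmbed H G e G.t = Sum.inl (H.dst e) := by
  simp [slashEmbed, hst.symm]

lemma emb_int (H G : WGraph) (e : H.ι) (v : G.V) (h1 : v ≠ G.s) (h2 : v ≠ G.t) :
    slashEmbed H G e v = Sum.inr (e, ⟨v, h1, h2⟩) := by
  simp [slashEmbed, h1, h2]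

/-- reachability -/
def Reach (G : WGraph) (x y : G.V) : Prop := ∃ l, G.IsWalk x y l

lemma Reach.refl {G : WGraph} (x : G.V) : Reach G x x := ⟨[], rfl⟩

lemma Reach.trans {G : WGraph} {x y z : G.V} (h1 : Reach G x y) (h2 : Reach G y z) :
    Reach G x z := by
  obtain ⟨l1, h1⟩ := h1
  obtain ⟨l2, h2⟩ := h2
  exact ⟨l1 ++ l2, walk_append.2 ⟨y, h1, h2⟩⟩

lemma reach_emb (H G : WGraph) (e : H.ι) (l : List (G.ι × Bool)) :
    ∀ {x y : G.V}, G.IsWalk x y l →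
      Reach (H.slash G) (slashEmbed H G e x) (slashEmbed H G e y) := by
  induction l with
  | nil => intro x y h; simp only [IsWalk] at h; rw [h]; exact Reach.refl (G := H.slash G) _
  | cons p l ih =>
    rintro x y ⟨h1, h2⟩
    refine Reach.trans (G := H.slash G) (y := slashEmbed H G e (G.stepDst p)) ?_ (ih h2)
    subst h1
    refine ⟨[((e, p.1), p.2)], ?_⟩
    obtain ⟨e', b⟩ := p
    cases b <;> exact ⟨rfl, rfl⟩

lemma slash_conn (H G : WGraph) (hst : G.s ≠ G.t)
    (hH : ∀ x y : H.V, ∃ l, H.IsWalk x y l) (hG : ∀ x y : G.V, ∃ l, G.IsWalk x y l) :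
    ∀ x y : (H.slash G).V, ∃ l, (H.slash G).IsWalk x y l := by
  have hemb : ∀ (e : H.ι) (v w : G.V),
      Reach (H.slash G) (slashEmbed H G e v) (slashEmbed H G e w) := by
    intro e v w
    obtain ⟨l, hl⟩ := hG v w
    exact reach_emb H G e l hl
  have hinl : ∀ (l : List (H.ι × Bool)) (x y : H.V), H.IsWalk x y l →
      Reach (H.slash G) (Sum.inl x) (Sum.inl y) := by
    intro l
    induction l with
    | nil => intro x y h; simp only [IsWalk] at h; rw [h]; exact Reach.refl (G := H.slash G) _
    | cons p l ih =>
      rintro x y ⟨h1, h2⟩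
      refine Reach.trans (G := H.slash G) (y := Sum.inl (H.stepDst p)) ?_ (ih _ _ h2)
      subst h1
      obtain ⟨e, b⟩ := p
      cases b
      · have := hemb e G.t G.s
        rw [emb_s, emb_t H G hst] at this
        exact this
      · have := hemb e G.s G.t
        rw [emb_s, emb_t H G hst] at this
        exact this
  have hinl' : ∀ x y : H.V, Reach (H.slash G) (Sum.inl x) (Sum.inl y) := by
    intro x y
    obtain ⟨l, hl⟩ := hH x y
    exact hinl l x y hl
  have hto : ∀ x : (H.slash G).V, ∃ y : H.V, Reach (H.slash G) x (Sum.inl y) ∧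
      Reach (H.slash G) (Sum.inl y) x := by
    intro x
    rcases x with x | ⟨e, v, h1, h2⟩
    · exact ⟨x, Reach.refl (G := H.slash G) _, Reach.refl (G := H.slash G) _⟩
    · refine ⟨H.src e, ?_, ?_⟩
      · have := hemb e v G.s
        rw [emb_s, emb_int H G e v h1 h2] at this
        exact this
      · have := hemb e G.s v
        rw [emb_s, emb_int H G e v h1 h2] at this
        exact this
  intro x y
  obtain ⟨x', hx, _⟩ := hto x
  obtain ⟨y', _, hy⟩ := hto y
  exact (hx.trans (hinl' x' y')).trans hy

section pow
variable {G : WGraph}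

lemma pow_conn (hG : IsSTGraph G) (n : ℕ) : ∀ x y : (G.slashPow n).V, ∃ l, (G.slashPow n).IsWalk x y l := by
  induction n with
  | zero =>
    intro x y
    change ∃ l, edgeGraph.IsWalk x y l
    change Bool at x y
    cases x <;> cases y
    · exact ⟨[], rfl⟩
    · exact ⟨[((), true)], rfl, rfl⟩
    · exact ⟨[((), false)], rfl, rfl⟩
    · exact ⟨[], rfl⟩
  | succ n ih => exact slash_conn _ _ hG.s_ne_t ih hG.conn

lemma pow_len_pos (hG : IsSTGraph G) (n : ℕ) : ∀ e, 0 < (G.slashPow n).len e := by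
  induction n with
  | zero => intro e; exact one_pos
  | succ n ih => intro e; exact mul_pos (ih _) (hG.len_pos _)

lemma pow_th_pos (hG : IsSTGraph G) (n : ℕ) : ∀ e, 0 < (G.slashPow n).th e := by
  induction n with
  | zero => intro e; exact one_pos
  | succ n ih => intro e; exact mul_pos (ih _) (hG.th_pos _)

lemma pow_sum (hG : IsSTGraph G) (n : ℕ) : ∑ e, (G.slashPow n).th e * (G.slashPow n).len e = 1 := by
  induction n with
  | zero =>
    change ∑ e : Unit, (1 : ℝ) * 1 = 1
    simp
  | succ n ih =>
    change ∑ e : ((G.slashPow n).slash G).ι, _ = (1 : ℝ)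
    rw [sum_slash]
    change ∑ e, ∑ e', ((G.slashPow n).th e * G.th e') * ((G.slashPow n).len e * G.len e') = 1
    have : ∀ e, ∑ e', ((G.slashPow n).th e * G.th e') * ((G.slashPow n).len e * G.len e')
        = (G.slashPow n).th e * (G.slashPow n).len e := by
      intro e
      calc _ = ∑ e', ((G.slashPow n).th e * (G.slashPow n).len e) * (G.th e' * G.len e') :=
            Finset.sum_congr rfl fun _ _ => by ring
        _ = _ := by rw [← Finset.mul_sum, sum_th_len hG, mul_one]
    simp_rw [this]
    exact ih

lemma pow_int (M : ℝ) (hM : ∀ e, ∃ k : ℤ, G.th e * M = k) (n : ℕ) :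
    ∀ e, ∃ k : ℤ, (G.slashPow n).th e * M ^ n = k := by
  induction n with
  | zero => intro e; exact ⟨1, by simp [slashPow, edgeGraph]⟩
  | succ n ih =>
    intro e
    obtain ⟨k, hk⟩ := ih e.1
    obtain ⟨k', hk'⟩ := hM e.2
    refine ⟨k * k', ?_⟩
    change ((G.slashPow n).th e.1 * G.th e.2) * M ^ (n + 1) = _
    push_cast
    rw [← hk, ← hk']; ring

lemma pow_card_ι (n : ℕ) : Fintype.card (G.slashPow n).ι = Fintype.card G.ι ^ n := by
  induction n with
  | zero => rfl
  | succ n ih =>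
    change Fintype.card ((G.slashPow n).ι × G.ι) = _
    rw [Fintype.card_prod, ih, pow_succ]

lemma pow_card_V (n : ℕ) : Fintype.card (G.slashPow n).V ≤
    (Fintype.card G.ι + Fintype.card G.V + 2) ^ (n + 1) := by
  induction n with
  | zero =>
    change Fintype.card Bool ≤ _
    simp
  | succ n ih =>
    set B := Fintype.card G.ι + Fintype.card G.V + 2 with hB
    change Fintype.card ((G.slashPow n).V ⊕
      ((G.slashPow n).ι × {v : G.V // v ≠ G.s ∧ v ≠ G.t})) ≤ _
    rw [Fintype.card_sum, Fintype.card_prod, pow_card_ι]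
    have h1 : Fintype.card {v : G.V // v ≠ G.s ∧ v ≠ G.t} ≤ B :=
      (Fintype.card_subtype_le _).trans (by omega)
    have h2 : Fintype.card G.ι ^ n ≤ B ^ n := Nat.pow_le_pow_left (by omega) _
    calc _ ≤ B ^ (n + 1) + B ^ n * B := add_le_add ih (Nat.mul_le_mul h2 h1)
      _ = B ^ (n + 1) * 2 := by ring
      _ ≤ B ^ (n + 1) * B := Nat.mul_le_mul_left _ (by omega)
      _ = _ := by ring

end pow

open Classical in
/-- existence of a good family of test words in `H` relative to the covered edge set `c` -/
def PP (H : WGraph) (c : H.ι → Prop) (τ η M K c0 : ℝ) : Prop :=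
  ∃ (S : Type) (_ : Fintype S) (A B : S → H.V) (t ℓ : S → ℝ),
    (∀ w, τ * η ≤ t w ∧ t w ≤ η ∧ ∃ k : ℤ, t w * M = k) ∧
    (∀ g : H.V → ℝ, ∑ w, t w * |g (A w) - g (B w)| ≤
      K * ∑ e, if c e then H.th e * |g (H.dst e) - g (H.src e)| else 0) ∧
    (∑ e, (if c e then H.th e * H.len e else 0) ≤ ∑ w, t w * ℓ w) ∧
    ∀ ε : S → Bool, ∃ h : H.V → ℝ, (∀ e, |h (H.dst e) - h (H.src e)| ≤ H.len e) ∧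
      (∀ e, ¬ c e → h (H.dst e) = h (H.src e)) ∧
      ∀ w, h (A w) - h (B w) = sg (ε w) * (c0 * ℓ w)

lemma sum_subtype_ite {α : Type} [Fintype α] (p : α → Prop) [DecidablePred p] (f : α → ℝ) :
    ∑ x : {x // p x}, f x.1 = ∑ x, if p x then f x else 0 := by
  rw [← Finset.sum_filter]
  exact (Finset.sum_subtype _ (by simp) f).symm

lemma PP_step {G : WGraph} (hG : IsSTGraph G) (H : WGraph) (c : H.ι → Prop)
    (τ η M M' K c0 : ℝ) (hK : 0 < K) (hc0 : 0 < c0) (a : G.V) (has : a ≠ G.s) (hat : a ≠ G.t)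
    (hKa : ∀ ψ : G.V → ℝ, |ψ a - ψ G.s| ≤ K * ∑ e, G.th e * |ψ (G.dst e) - ψ (G.src e)|)
    (hlen : ∀ e, c0 ≤ G.len e)
    (hM' : ∃ k : ℤ, M' = k) (hHth : ∀ e, 0 < H.th e) (hHlen : ∀ e, 0 < H.len e)
    (hHM : ∀ e, ∃ k : ℤ, H.th e * M = k)
    (hc1 : ∀ e, c e → H.th e ≤ η) (hc2 : ∀ e, ¬ c e → τ * η ≤ H.th e)
    (h : PP H c τ η M K c0) :
    PP (H.slash G) (fun e => H.th e.1 ≤ η) τ η (M * M') K c0 := by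
  classical
  obtain ⟨S, _, A, B, t, ℓ, hi, hii, hiii, hiv⟩ := h
  obtain ⟨pos, hp0, hp1, hpe⟩ := exists_pos hG
  obtain ⟨m', hm'⟩ := hM'
  refine ⟨S ⊕ {e : H.ι // H.th e ≤ η ∧ ¬ c e}, inferInstance,
    Sum.elim (fun w => Sum.inl (A w)) (fun e => Sum.inr (e.1, ⟨a, has, hat⟩)),
    Sum.elim (fun w => Sum.inl (B w)) (fun e => Sum.inl (H.src e.1)),
    Sum.elim t (fun e => H.th e.1), Sum.elim ℓ (fun e => H.len e.1), ?_, ?_, ?_, ?_⟩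
  · rintro (w | ⟨e, he1, he2⟩)
    · obtain ⟨h1, h2, k, hk⟩ := hi w
      refine ⟨h1, h2, k * m', ?_⟩
      push_cast
      rw [← hk, hm']
      simp only [Sum.elim_inl]; ring
    · obtain ⟨k, hk⟩ := hHM e
      refine ⟨hc2 e he2, he1, k * m', ?_⟩
      push_cast
      rw [← hk, hm']
      simp only [Sum.elim_inr]; ring
  · intro g
    rw [Fintype.sum_sum_type]
    change (∑ w, t w * |g (Sum.inl (A w)) - g (Sum.inl (B w))|) +
      (∑ e : {e : H.ι // H.th e ≤ η ∧ ¬ c e}, H.th e.1 *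
        |g (Sum.inr (e.1, ⟨a, has, hat⟩)) - g (Sum.inl (H.src e.1))|) ≤ _
    have h1 := hii fun x => g (Sum.inl x)
    rw [sum_slash]
    rw [sum_subtype_ite (fun e => H.th e ≤ η ∧ ¬ c e)
      (fun e => H.th e * |g (Sum.inr (e, ⟨a, has, hat⟩)) - g (Sum.inl (H.src e))|)]
    refine (add_le_add_left h1 _).trans ?_
    rw [Finset.mul_sum, Finset.mul_sum, ← Finset.sum_add_distrib]
    refine Finset.sum_le_sum fun e _ => ?_
    set T := ∑ e' : G.ι, G.th e' * |g (slashEmbed H G e (G.dst e'))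
      - g (slashEmbed H G e (G.src e'))| with hT
    have eT : ∑ e' : G.ι, (if H.th e ≤ η then (H.slash G).th (e, e') *
        |g ((H.slash G).dst (e, e')) - g ((H.slash G).src (e, e'))| else 0)
        = if H.th e ≤ η then H.th e * T else 0 := by
      split_ifs
      · rw [hT, Finset.mul_sum]
        refine Finset.sum_congr rfl fun e' _ => ?_
        simp only [slash]; ring
      · simp
    have f1 := flow_ineq hG fun v => g (slashEmbed H G e v)
    have f2 := hKa fun v => g (slashEmbed H G e v)
    simp only [emb_s, emb_t H G hG.s_ne_t] at f1 f2
    rw [emb_int H G e a has hat] at f2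
    have eT' : (∑ e' : G.ι, if H.th (e, e').1 ≤ η then (H.slash G).th (e, e') *
        |g ((H.slash G).dst (e, e')) - g ((H.slash G).src (e, e'))| else 0)
        = if H.th e ≤ η then H.th e * T else 0 := eT
    refine le_of_le_of_eq ?_ (congrArg (fun x => K * x) eT').symm
    by_cases hce : c e
    · simp only [hce, if_true, not_true, and_false, if_false, add_zero, hc1 e hce]
      have := hHth e
      gcongr
    · by_cases hth : H.th e ≤ η
      · simp only [hce, hth, if_true, if_false, not_false_eq_true, and_true, mul_zero, zero_add]
        have := mul_le_mul_of_nonneg_left f2 (hHth e).le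
        calc _ ≤ _ := this
          _ = _ := by ring
      · simp [hce, hth]
  · rw [Fintype.sum_sum_type, sum_slash]
    simp only [Sum.elim_inl, Sum.elim_inr]
    rw [sum_subtype_ite (fun e => H.th e ≤ η ∧ ¬ c e) (fun e => H.th e * H.len e)]
    refine le_trans ?_ (add_le_add_left hiii _)
    rw [← Finset.sum_add_distrib]
    refine Finset.sum_le_sum fun e _ => ?_
    have eT : (∑ e' : G.ι, if H.th (e, e').1 ≤ η then (H.slash G).th (e, e') *
        (H.slash G).len (e, e') else 0)
        = if H.th e ≤ η then H.th e * H.len e else 0 := by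
      simp only
      split_ifs
      · calc _ = ∑ e' : G.ι, (H.th e * H.len e) * (G.th e' * G.len e') := by
              refine Finset.sum_congr rfl fun e' _ => ?_
              simp only [slash]; ring
          _ = _ := by rw [← Finset.mul_sum, sum_th_len hG, mul_one]
      · simp
    refine le_of_eq_of_le eT ?_
    by_cases hce : c e
    · simp [hce, hc1 e hce]
    · simp [hce]
  · intro ε
    obtain ⟨h, h1, h2, h3⟩ := hiv fun w => ε (Sum.inl w)
    set σ : H.ι → ℝ := fun e => if hn : H.th e ≤ η ∧ ¬ c e then sg (ε (Sum.inr ⟨e, hn⟩)) else 0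
      with hσ
    set h' : (H.slash G).V → ℝ := Sum.elim h (fun p => h (H.src p.1)
      + (h (H.dst p.1) - h (H.src p.1)) * pos p.2.1
      + if p.2.1 = a then σ p.1 * (c0 * H.len p.1) else 0) with hh'
    have hemb : ∀ e v, h' (slashEmbed H G e v) = h (H.src e)
        + (h (H.dst e) - h (H.src e)) * pos v + if v = a then σ e * (c0 * H.len e) else 0 := by
      intro e v
      by_cases hvs : v = G.s
      · subst hvs
        rw [emb_s]
        simp [hh', hp0, has.symm]
      · by_cases hvt : v = G.t
        · subst hvt
          rw [emb_t H G hG.s_ne_t]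
          simp [hh', hp1, hat.symm]
        · rw [emb_int H G e v hvs hvt]
          simp [hh']
    refine ⟨h', ?_, ?_, ?_⟩
    · rintro ⟨e, e'⟩
      change |h' (slashEmbed H G e (G.dst e')) - h' (slashEmbed H G e (G.src e'))|
        ≤ H.len e * G.len e'
      rw [hemb, hemb]
      have hl := hG.len_pos e'
      by_cases hn : H.th e ≤ η ∧ ¬ c e
      · rw [h2 e hn.2]
        have hs : |σ e| = 1 := by simp only [hσ, hn, not_false_eq_true, and_self, dite_true]; exact sg_abs _
        have hx : |σ e * (c0 * H.len e)| ≤ H.len e * G.len e' := by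
          rw [abs_mul, hs, one_mul, abs_of_nonneg (mul_pos hc0 (hHlen e)).le, mul_comm]
          exact mul_le_mul_of_nonneg_left (hlen e') (hHlen e).le
        have h0 : 0 ≤ H.len e * G.len e' := (mul_pos (hHlen e) hl).le
        split_ifs <;> simp only [sub_self, zero_mul, add_zero, add_sub_cancel_left, abs_zero]
          <;> first | exact h0 | exact hx | skip
        rw [abs_sub_comm]; simpa using hx
      · have hs : σ e = 0 := by simp only [hσ, hn, dite_false]
        rw [hs]
        simp only [zero_mul, ite_self, add_zero]
        have : h (H.src e) + (h (H.dst e) - h (H.src e)) * pos (G.dst e') -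
          (h (H.src e) + (h (H.dst e) - h (H.src e)) * pos (G.src e'))
          = (h (H.dst e) - h (H.src e)) * G.len e' := by rw [← hpe e']; ring
        rw [this, abs_mul, abs_of_pos hl]
        exact mul_le_mul_of_nonneg_right (h1 e) hl.le
    · rintro ⟨e, e'⟩ hne
      change ¬ (H.th e ≤ η) at hne
      change h' (slashEmbed H G e (G.dst e')) = h' (slashEmbed H G e (G.src e'))
      have hs : σ e = 0 := by simp [hσ, hne]
      rw [hemb, hemb, hs, h2 e (fun hc => hne (hc1 e hc))]
      simp
    · rintro (w | ⟨e, hn⟩)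
      · exact h3 w
      · have hs : σ e = sg (ε (Sum.inr ⟨e, hn⟩)) := by simp only [hσ, hn, not_false_eq_true, and_self, dite_true]
        have := hemb e a
        rw [emb_int H G e a has hat] at this
        change h' (Sum.inr (e, ⟨a, has, hat⟩)) - h (H.src e)
          = sg (ε (Sum.inr ⟨e, hn⟩)) * (c0 * H.len e)
        rw [this, h2 e hn.2, hs]
        simp

end SlashTC

open Finset MeasureTheory

namespace SlashTC

open WGraph

/-- covered edges at level `n` for the threshold `η` -/
def cov (G : WGraph) (η : ℝ) : (n : ℕ) → (G.slashPow n).ι → Prop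
  | 0, _ => False
  | n + 1, e => (G.slashPow n).th (Prod.fst e) ≤ η

/-- the number of branching choices along an edge -/
noncomputable def cnt (G : WGraph) : (n : ℕ) → (G.slashPow n).ι → ℕ
  | 0, _ => 0
  | n + 1, e => cnt G n (Prod.fst e) + (if G.th (Prod.snd e) < 1 then 1 else 0)

lemma PP_all {G : WGraph} (hG : IsSTGraph G) (τ η M K c0 : ℝ) (hK : 0 < K) (hc0 : 0 < c0)
    (a : G.V) (has : a ≠ G.s) (hat : a ≠ G.t)
    (hKa : ∀ ψ : G.V → ℝ, |ψ a - ψ G.s| ≤ K * ∑ e, G.th e * |ψ (G.dst e) - ψ (G.src e)|)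
    (hlen : ∀ e, c0 ≤ G.len e) (hτ0 : 0 < τ) (hτ1 : τ ≤ 1) (hη0 : 0 < η) (hη1 : η ≤ 1)
    (hτ : ∀ e, τ ≤ G.th e) (hMi : ∃ k : ℤ, M = k) (hM : ∀ e, ∃ k : ℤ, G.th e * M = k) (n : ℕ) :
    PP (G.slashPow n) (cov G η n) τ η (M ^ n) K c0 := by
  induction n with
  | zero =>
    refine ⟨Empty, inferInstance, Empty.elim, Empty.elim, Empty.elim, Empty.elim,
      fun w => w.elim, ?_, ?_, ?_⟩
    · intro g
      simp [cov]
    · simp [cov]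
    · intro ε
      refine ⟨fun _ => 0, fun e => ?_, fun _ _ => rfl, fun w => w.elim⟩
      simpa using (pow_len_pos hG 0 e).le
  | succ n ih =>
    rw [pow_succ]
    refine PP_step hG (G.slashPow n) (cov G η n) τ η (M ^ n) M K c0 hK hc0 a has hat hKa hlen
      hMi (pow_th_pos hG n) (pow_len_pos hG n) (pow_int M hM n) ?_ ?_ ih
    · intro e he
      cases n with
      | zero => exact he.elim
      | succ n =>
        change (G.slashPow n).th e.1 * G.th e.2 ≤ η
        have h1 : (G.slashPow n).th e.1 ≤ η := he
        have h2 := th_le_one hG e.2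
        have h3 := pow_th_pos hG n e.1
        nlinarith
    · intro e he
      cases n with
      | zero =>
        change τ * η ≤ 1
        nlinarith
      | succ n =>
        change τ * η ≤ (G.slashPow n).th e.1 * G.th e.2
        have h1 : η < (G.slashPow n).th e.1 := not_le.1 he
        have h2 := hτ e.2
        nlinarith

lemma cnt_le (G : WGraph) (n : ℕ) : ∀ e, cnt G n e ≤ n := by
  induction n with
  | zero => intro e; exact le_rfl
  | succ n ih =>
    intro e
    change cnt G n e.1 + (if G.th e.2 < 1 then 1 else 0) ≤ n + 1
    have := ih e.1
    split_ifs <;> omega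

lemma th_le_cnt {G : WGraph} (hG : IsSTGraph G) (θ : ℝ) (h0 : 0 < θ)
    (hθ : ∀ e, G.th e < 1 → G.th e ≤ θ) (n : ℕ) :
    ∀ e, (G.slashPow n).th e ≤ θ ^ cnt G n e := by
  induction n with
  | zero => intro e; exact le_of_eq (pow_zero θ).symm
  | succ n ih =>
    intro e
    change (G.slashPow n).th e.1 * G.th e.2 ≤
      θ ^ (cnt G n e.1 + (if G.th e.2 < 1 then 1 else 0))
    rw [pow_add]
    refine mul_le_mul (ih _) ?_ (hG.th_pos _).le (pow_pos h0 _).le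
    split_ifs with h
    · simpa using hθ _ h
    · simpa using th_le_one hG e.2

lemma cnt_sum {G : WGraph} (hG : IsSTGraph G) (n : ℕ) :
    ∑ e, (G.slashPow n).th e * (G.slashPow n).len e * (cnt G n e : ℝ)
      = n * ∑ e, (if G.th e < 1 then G.th e * G.len e else 0) := by
  induction n with
  | zero => simp [cnt]
  | succ n ih =>
    set p := ∑ e, (if G.th e < 1 then G.th e * G.len e else 0) with hp
    have hsl := sum_slash (G.slashPow n) G fun e =>
      ((G.slashPow n).slash G).th e * ((G.slashPow n).slash G).len e * (cnt G (n + 1) e : ℝ)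
    refine hsl.trans ?_
    have : ∀ e : (G.slashPow n).ι, ∑ e' : G.ι, ((G.slashPow n).slash G).th (e, e') *
        ((G.slashPow n).slash G).len (e, e') * (cnt G (n + 1) (e, e') : ℝ)
        = (G.slashPow n).th e * (G.slashPow n).len e * (cnt G n e : ℝ)
          + ((G.slashPow n).th e * (G.slashPow n).len e) * p := by
      intro e
      have h1 : ∀ e' : G.ι, ((G.slashPow n).slash G).th (e, e') *
        ((G.slashPow n).slash G).len (e, e') * (cnt G (n + 1) (e, e') : ℝ)
        = ((G.slashPow n).th e * (G.slashPow n).len e * (cnt G n e : ℝ)) * (G.th e' * G.len e')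
          + ((G.slashPow n).th e * (G.slashPow n).len e) *
            (if G.th e' < 1 then G.th e' * G.len e' else 0) := by
        intro e'
        change ((G.slashPow n).th e * G.th e') * ((G.slashPow n).len e * G.len e') *
          ((cnt G n e + (if G.th e' < 1 then 1 else 0) : ℕ) : ℝ) = _
        split_ifs <;> push_cast <;> ring
      rw [Finset.sum_congr rfl fun e' _ => h1 e', Finset.sum_add_distrib, ← Finset.mul_sum,
        ← Finset.mul_sum, sum_th_len hG, mul_one]
    rw [Finset.sum_congr rfl fun e _ => this e, Finset.sum_add_distrib, ih, ← Finset.sum_mul,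
      pow_sum hG n]
    push_cast; ring

open Classical in
lemma mass {G : WGraph} (hG : IsSTGraph G) (θ : ℝ) (h0 : 0 < θ) (h1 : θ < 1)
    (hθ : ∀ e, G.th e < 1 → G.th e ≤ θ) (n : ℕ) :
    n * ∑ e, (if G.th e < 1 then G.th e * G.len e else 0) ≤
    ∑ j : Fin n, ∑ e, (if cov G (θ ^ (j.1 + 1)) (n + 1) e then
      (G.slashPow (n + 1)).th e * (G.slashPow (n + 1)).len e else 0) := by
  rw [← cnt_sum hG n]
  have hm : ∀ j : Fin n, ∑ e, (if cov G (θ ^ (j.1 + 1)) (n + 1) e then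
      (G.slashPow (n + 1)).th e * (G.slashPow (n + 1)).len e else 0)
      = ∑ e, (G.slashPow n).th e * (G.slashPow n).len e *
        (if (G.slashPow n).th e ≤ θ ^ (j.1 + 1) then 1 else 0) := by
    intro j
    refine (sum_slash (G.slashPow n) G fun e => (if cov G (θ ^ (j.1 + 1)) (n + 1) e then
      (G.slashPow (n + 1)).th e * (G.slashPow (n + 1)).len e else 0)).trans ?_
    refine Finset.sum_congr rfl fun e _ => ?_
    have : ∀ e' : G.ι, (if cov G (θ ^ (j.1 + 1)) (n + 1) (e, e') then
      (G.slashPow (n + 1)).th (e, e') * (G.slashPow (n + 1)).len (e, e') else 0)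
      = ((G.slashPow n).th e * (G.slashPow n).len e *
        (if (G.slashPow n).th e ≤ θ ^ (j.1 + 1) then 1 else 0)) * (G.th e' * G.len e') := by
      intro e'
      have hc : cov G (θ ^ (j.1 + 1)) (n + 1) (e, e') ↔ (G.slashPow n).th e ≤ θ ^ (j.1 + 1) :=
        Iff.rfl
      simp only [hc]
      split_ifs
      · change ((G.slashPow n).th e * G.th e') * ((G.slashPow n).len e * G.len e') = _
        ring
      · simp
    rw [Finset.sum_congr rfl fun e' _ => this e', ← Finset.mul_sum, sum_th_len hG, mul_one]
  rw [Finset.sum_congr rfl fun j _ => hm j, Finset.sum_comm]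
  refine Finset.sum_le_sum fun e _ => ?_
  rw [← Finset.mul_sum]
  refine mul_le_mul_of_nonneg_left ?_ (mul_pos (pow_th_pos hG n e) (pow_len_pos hG n e)).le
  rw [Fin.sum_univ_eq_sum_range (fun j => if (G.slashPow n).th e ≤ θ ^ (j + 1) then (1 : ℝ) else 0)]
  have h2 : (cnt G n e : ℝ) = ∑ j ∈ Finset.range (cnt G n e), (1 : ℝ) := by simp
  rw [h2]
  refine le_trans ?_ (Finset.sum_le_sum_of_subset_of_nonneg
    (Finset.range_mono (cnt_le G n e)) fun j _ _ => by split_ifs <;> norm_num)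
  refine Finset.sum_le_sum fun j hj => ?_
  rw [if_pos]
  refine (th_le_cnt hG θ h0 hθ n e).trans (pow_le_pow_of_le_one h0.le h1.le ?_)
  have := Finset.mem_range.1 hj
  omega

/-- The scalar inequality. -/
theorem scalar_ineq {V ι : Type} [Fintype V] [DecidableEq V] [Fintype ι] (src dst : ι → V)
    (th : ι → ℝ) (hth : ∀ e, 0 ≤ th e) (J : ℕ) (S : Fin J → Type) [∀ j, Fintype (S j)]
    [∀ j, DecidableEq (S j)]
    (A B : (j : Fin J) → S j → V) (t : (j : Fin J) → S j → ℝ) (τ θ K : ℝ) (hτ : 0 < τ)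
    (h0 : 0 < θ) (h1 : θ < 1) (hK : 0 < K)
    (hi : ∀ j w, τ * θ ^ (j.1 + 1) ≤ t j w ∧ t j w ≤ θ ^ (j.1 + 1))
    (hii : ∀ j (g : V → ℝ), ∑ w, t j w * |g (A j w) - g (B j w)| ≤
      K * ∑ e, th e * |g (dst e) - g (src e)|) (g : V → ℝ) :
    ∑ j, (2 ^ Fintype.card (S j))⁻¹ * ∑ ε : S j → Bool,
      |∑ w, sg (ε w) * (t j w * (g (A j w) - g (B j w)))| ≤
      ∑ e, (K / (√τ * (1 - √θ)) * th e) * |g (dst e) - g (src e)| := by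
  refine coarea src dst _ (fun g => ∑ j, (2 ^ Fintype.card (S j))⁻¹ * ∑ ε : S j → Bool,
      |∑ w, sg (ε w) * (t j w * (g (A j w) - g (B j w)))|) ?_ ?_ ?_ ?_ g
  · intro g h
    rw [← Finset.sum_add_distrib]
    refine Finset.sum_le_sum fun j _ => ?_
    rw [← mul_add, ← Finset.sum_add_distrib]
    refine mul_le_mul_of_nonneg_left (Finset.sum_le_sum fun ε _ => ?_) (by positivity)
    refine le_trans (le_of_eq ?_) (abs_add_le _ _)
    rw [← Finset.sum_add_distrib]
    congr 1
    refine Finset.sum_congr rfl fun w _ => ?_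
    simp only [Pi.add_apply]; ring
  · intro c g hc
    rw [Finset.mul_sum]
    refine Finset.sum_congr rfl fun j _ => ?_
    rw [mul_left_comm]
    congr 1
    rw [Finset.mul_sum]
    refine Finset.sum_congr rfl fun ε _ => ?_
    rw [← abs_of_nonneg hc, ← abs_mul, abs_of_nonneg hc]
    congr 1
    rw [Finset.mul_sum]
    refine Finset.sum_congr rfl fun w _ => ?_
    simp only [Pi.smul_apply, smul_eq_mul]; ring
  · intro c
    simp
  · intro F
    set g : V → ℝ := fun x => if x ∈ F then 1 else 0 with hg
    set P := ∑ e, th e * |g (dst e) - g (src e)| with hP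
    have hP0 : 0 ≤ P := Finset.sum_nonneg fun e _ => mul_nonneg (hth e) (abs_nonneg _)
    set q := √θ with hq
    have hq0 : 0 < q := Real.sqrt_pos.2 h0
    have hq1 : q < 1 := by rw [hq, Real.sqrt_lt' one_pos]; simpa using h1
    have hqq : ∀ k : ℕ, θ ^ k = (q ^ k) ^ 2 := by
      intro k
      rw [← pow_mul, mul_comm, pow_mul, hq, Real.sq_sqrt h0.le]
    set Y := √(K * P / τ) with hY
    have hKP : 0 ≤ K * P := mul_nonneg hK.le hP0
    have hX : ∀ j : Fin J, (2 ^ Fintype.card (S j))⁻¹ * ∑ ε : S j → Bool,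
      |∑ w, sg (ε w) * (t j w * (g (A j w) - g (B j w)))| ≤
        √(K * P) * (if q ^ (j.1 + 1) ≤ Y then q ^ (j.1 + 1) else 0) := by
      intro j
      refine (sum_sign_abs fun w => t j w * (g (A j w) - g (B j w))).trans ?_
      have hη : 0 < θ ^ (j.1 + 1) := pow_pos h0 _
      have ht0 : ∀ w, 0 < t j w := fun w => lt_of_lt_of_le (mul_pos hτ hη) (hi j w).1
      have hΔ : ∀ w, |g (A j w) - g (B j w)| = 0 ∨ |g (A j w) - g (B j w)| = 1 := by
        intro w
        simp only [hg]
        split_ifs <;> simp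
      have hsum := hii j g
      by_cases hex : ∃ w, |g (A j w) - g (B j w)| = 1
      · obtain ⟨w, hw⟩ := hex
        have h2 : t j w * |g (A j w) - g (B j w)| ≤ K * P :=
          (Finset.single_le_sum (f := fun w => t j w * |g (A j w) - g (B j w)|)
            (fun w _ => mul_nonneg (ht0 w).le (abs_nonneg _)) (Finset.mem_univ w)).trans hsum
        rw [hw, mul_one] at h2
        have h3 : q ^ (j.1 + 1) ≤ Y := by
          refine Real.le_sqrt_of_sq_le ?_
          rw [← hqq, le_div_iff₀ hτ, mul_comm]
          exact (hi j w).1.trans h2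
        rw [if_pos h3]
        refine Real.sqrt_le_iff.2 ⟨by positivity, ?_⟩
        rw [mul_pow, Real.sq_sqrt hKP, ← hqq, mul_comm (K * P)]
        refine le_trans ?_ (mul_le_mul_of_nonneg_left hsum hη.le)
        rw [Finset.mul_sum]
        refine Finset.sum_le_sum fun w _ => ?_
        rw [mul_pow, ← sq_abs (g _ - g _)]
        rcases hΔ w with h | h
        · simp [h]
        · rw [h]
          have := (hi j w).2
          have := ht0 w
          nlinarith
      · push Not at hex
        have : ∀ w, g (A j w) - g (B j w) = 0 := fun w =>
          abs_eq_zero.1 ((hΔ w).resolve_right (hex w))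
        simp only [this, mul_zero]
        simp only [ne_eq, OfNat.ofNat_ne_zero, not_false_eq_true, zero_pow, sum_const_zero,
          Real.sqrt_zero]
        split_ifs <;> positivity
    refine (Finset.sum_le_sum fun j _ => hX j).trans ?_
    rw [← Finset.mul_sum, Fin.sum_univ_eq_sum_range
      (fun j => if q ^ (j + 1) ≤ Y then q ^ (j + 1) else 0)]
    have hY0 : 0 ≤ Y := Real.sqrt_nonneg _
    have hgt := geom_trunc q hq0 hq1 (J + 1) Y hY0
    rw [Finset.sum_range_succ'] at hgt
    have hgt' : (∑ j ∈ Finset.range J, if q ^ (j + 1) ≤ Y then q ^ (j + 1) else 0)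
        ≤ Y / (1 - q) := by
      refine le_trans ?_ hgt
      have : (0 : ℝ) ≤ if q ^ 0 ≤ Y then q ^ 0 else 0 := by split_ifs <;> positivity
      linarith
    refine (mul_le_mul_of_nonneg_left hgt' (Real.sqrt_nonneg _)).trans (le_of_eq ?_)
    have e1 : ∑ e, (K / (√τ * (1 - q)) * th e) * |g (dst e) - g (src e)|
        = K / (√τ * (1 - q)) * P := by
      rw [hP, Finset.mul_sum]
      exact Finset.sum_congr rfl fun e _ => by ring
    refine Eq.trans ?_ e1.symm
    have hτ' : √τ ≠ 0 := (Real.sqrt_pos.2 hτ).ne'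
    have h1q : 1 - q ≠ 0 := by linarith
    rw [hY, Real.sqrt_div hKP]
    have := Real.mul_self_sqrt hKP
    field_simp
    nlinarith

end SlashTC

open Finset MeasureTheory

namespace SlashTC

open WGraph

section TC
variable {V : Type} [Fintype V] [DecidableEq V] (d : V → V → ℝ)

/-- the set of costs of transportation plans -/
def TCset (μ : V → ℝ) : Set ℝ := { c : ℝ | ∃ (n : ℕ) (a : Fin n → ℝ) (x y : Fin n → V),
    (∀ i, 0 ≤ a i) ∧
    (∀ z : V, μ z = ∑ i, a i * ((if x i = z then (1 : ℝ) else 0) -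
      (if y i = z then (1 : ℝ) else 0))) ∧
    c = ∑ i, a i * d (x i) (y i) }

lemma TCnorm_eq (μ : V → ℝ) : TCnorm d μ = sInf (TCset d μ) := rfl

lemma plan_mem {κ : Type} [Fintype κ] (μ : V → ℝ) (a : κ → ℝ) (x y : κ → V) (ha : ∀ i, 0 ≤ a i)
    (h : ∀ z : V, μ z = ∑ i, a i * ((if x i = z then (1 : ℝ) else 0) -
      (if y i = z then (1 : ℝ) else 0))) : ∑ i, a i * d (x i) (y i) ∈ TCset d μ := by
  let e := (Fintype.equivFin κ).symm
  refine ⟨Fintype.card κ, a ∘ e, x ∘ e, y ∘ e, fun i => ha _, fun z => ?_, ?_⟩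
  · rw [h z]
    exact (Equiv.sum_comp e (fun i => a i * ((if x i = z then (1 : ℝ) else 0) -
      (if y i = z then (1 : ℝ) else 0)))).symm
  · exact (Equiv.sum_comp e (fun i => a i * d (x i) (y i))).symm

lemma std_plan_mem (s : V) (μ : V → ℝ) (h0 : ∑ x, μ x = 0) :
    ∑ z, |μ z| * d (if 0 ≤ μ z then z else s) (if 0 ≤ μ z then s else z) ∈ TCset d μ := by
  refine plan_mem d μ (fun z => |μ z|) _ _ (fun z => abs_nonneg _) fun z => ?_
  have : ∀ i, |μ i| * ((if (if 0 ≤ μ i then i else s) = z then (1 : ℝ) else 0) -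
      (if (if 0 ≤ μ i then s else i) = z then (1 : ℝ) else 0))
      = (if i = z then μ i else 0) - μ i * (if s = z then 1 else 0) := by
    intro i
    by_cases hi : 0 ≤ μ i
    · simp only [hi, if_true, abs_of_nonneg hi]
      split_ifs <;> simp
    · simp only [hi, if_false, abs_of_neg (not_le.1 hi)]
      split_ifs <;> simp
  rw [Finset.sum_congr rfl fun i _ => this i, Finset.sum_sub_distrib, ← Finset.sum_mul, h0]
  simp

lemma TC_le (hd : ∀ x y, 0 ≤ d x y) (μ : V → ℝ) (c : ℝ) (hc : c ∈ TCset d μ) :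
    TCnorm d μ ≤ c := by
  refine csInf_le ⟨0, ?_⟩ hc
  rintro c ⟨n, a, x, y, ha, -, rfl⟩
  exact Finset.sum_nonneg fun i _ => mul_nonneg (ha i) (hd _ _)

lemma le_TC (s : V) (μ : V → ℝ) (h0 : ∑ x, μ x = 0) (h : V → ℝ) (hh : ∀ x y, h x - h y ≤ d x y) :
    ∑ z, h z * μ z ≤ TCnorm d μ := by
  refine le_csInf ⟨_, std_plan_mem d s μ h0⟩ ?_
  rintro c ⟨n, a, x, y, ha, hμ, rfl⟩
  have : ∑ z, h z * μ z = ∑ i, a i * (h (x i) - h (y i)) := by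
    calc ∑ z, h z * μ z = ∑ z, ∑ i, h z * (a i * ((if x i = z then (1 : ℝ) else 0) -
        (if y i = z then (1 : ℝ) else 0))) :=
          Finset.sum_congr rfl fun z _ => by rw [hμ z, Finset.mul_sum]
      _ = ∑ i, ∑ z, h z * (a i * ((if x i = z then (1 : ℝ) else 0) -
        (if y i = z then (1 : ℝ) else 0))) := Finset.sum_comm
      _ = _ := Finset.sum_congr rfl fun i _ => by
          have : ∀ z, h z * (a i * ((if x i = z then (1 : ℝ) else 0) -
            (if y i = z then (1 : ℝ) else 0))) =
            (if x i = z then a i * h z else 0) - (if y i = z then a i * h z else 0) := by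
            intro z
            split_ifs <;> ring
          rw [Finset.sum_congr rfl fun z _ => this z, Finset.sum_sub_distrib]
          simp
          ring
  rw [this]
  exact Finset.sum_le_sum fun i _ => mul_le_mul_of_nonneg_left (hh _ _) (ha i)

end TC

/-- the finite-dimensional space embeds with some distortion -/
theorem D_nonempty (H : WGraph) (conn : ∀ x y : H.V, ∃ l, H.IsWalk x y l)
    (hlen : ∀ e, 0 < H.len e) :
    ∃ D : ℝ, 1 ≤ D ∧ ∃ (Ω : Type) (_ : MeasurableSpace Ω) (ν : Measure Ω)
    (f : {μ : H.V → ℝ // ∑ x, μ x = 0} → Lp ℝ 1 ν), ∀ x y,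
      TCnorm H.gdist (fun z => x.1 z - y.1 z) ≤ dist (f x) (f y) ∧
        dist (f x) (f y) ≤ D * TCnorm H.gdist (fun z => x.1 z - y.1 z) := by
  classical
  let _ : MeasurableSpace H.V := ⊤
  have : DiscreteMeasurableSpace H.V := ⟨fun _ => trivial⟩
  obtain ⟨c, hc0, hc⟩ : ∃ c : ℝ, 0 < c ∧ ∀ e, 2 * c ≤ H.len e := by
    by_cases hne : Nonempty H.ι
    · obtain ⟨e0, he0⟩ := Finite.exists_min H.len
      exact ⟨H.len e0 / 2, by have := hlen e0; positivity, fun e => by have := he0 e; linarith⟩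
    · exact ⟨1, one_pos, fun e => (hne ⟨e⟩).elim⟩
  set K' : ℝ := 1 + ∑ x, ∑ y, H.gdist x y with hK'
  have hgn := gdist_nonneg hlen
  have hgK : ∀ x y, H.gdist x y ≤ K' := by
    intro x y
    have h1 : H.gdist x y ≤ ∑ y, H.gdist x y :=
      Finset.single_le_sum (f := fun y => H.gdist x y) (fun y _ => hgn x y) (Finset.mem_univ y)
    have h2 : ∑ y, H.gdist x y ≤ ∑ x, ∑ y, H.gdist x y :=
      Finset.single_le_sum (f := fun x => ∑ y, H.gdist x y)
        (fun x _ => Finset.sum_nonneg fun y _ => hgn x y) (Finset.mem_univ x)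
    linarith
  have hK1 : 1 ≤ K' := by
    have : 0 ≤ ∑ x, ∑ y, H.gdist x y :=
      Finset.sum_nonneg fun x _ => Finset.sum_nonneg fun y _ => hgn x y
    linarith
  have hIntg : ∀ μ : H.V → ℝ, Integrable μ (Measure.count : Measure H.V) :=
    fun μ => Integrable.of_finite
  refine ⟨max 1 (K' / c), le_max_left _ _, H.V, inferInstance, Measure.count,
    fun μ => K' • (hIntg μ.1).toL1 μ.1, fun x y => ?_⟩
  have hdist : dist (K' • (hIntg x.1).toL1 x.1) (K' • (hIntg y.1).toL1 y.1)
      = K' * ∑ z, |x.1 z - y.1 z| := by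
    rw [dist_eq_norm, ← smul_sub, ← Integrable.toL1_sub, norm_smul,
      L1.norm_of_fun_eq_integral_norm, integral_count, Real.norm_of_nonneg (by linarith)]
    rfl
  rw [hdist]
  set μ : H.V → ℝ := fun z => x.1 z - y.1 z with hμ
  have hμ0 : ∑ z, μ z = 0 := by
    simp only [hμ, Finset.sum_sub_distrib, x.2, y.2, sub_self]
  constructor
  · refine (TC_le _ hgn μ _ (std_plan_mem _ H.s μ hμ0)).trans ?_
    rw [Finset.mul_sum]
    refine Finset.sum_le_sum fun z _ => ?_
    rw [mul_comm]
    exact mul_le_mul_of_nonneg_right (hgK _ _) (abs_nonneg _)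
  · have h1 : c * ∑ z, |μ z| ≤ TCnorm H.gdist μ := by
      have := le_TC H.gdist H.s μ hμ0 (fun z => c * (if 0 ≤ μ z then 1 else -1))
        (lip_gdist conn _ fun e => by
          refine le_trans ?_ (hc e)
          rw [← mul_sub, abs_mul, abs_of_pos hc0, mul_comm 2]
          refine mul_le_mul_of_nonneg_left ?_ hc0.le
          split_ifs <;> norm_num)
      refine le_trans (le_of_eq ?_) this
      rw [Finset.mul_sum]
      refine Finset.sum_congr rfl fun z _ => ?_
      rw [mul_assoc]
      congr 1
      split_ifs with h
      · rw [abs_of_nonneg h, one_mul]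
      · rw [abs_of_neg (not_le.1 h), neg_one_mul]
    have hT : 0 ≤ TCnorm H.gdist μ :=
      le_trans (mul_nonneg hc0.le (Finset.sum_nonneg fun z _ => abs_nonneg _)) h1
    calc K' * ∑ z, |μ z| = K' / c * (c * ∑ z, |μ z|) := by field_simp
      _ ≤ K' / c * TCnorm H.gdist μ := mul_le_mul_of_nonneg_left h1 (by positivity)
      _ ≤ _ := mul_le_mul_of_nonneg_right (le_max_right _ _) hT

/-- integer signs -/
def sz (b : Bool) : ℤ := if b then 1 else -1

lemma sz_cast (b : Bool) : ((sz b : ℤ) : ℝ) = sg b := by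
  cases b <;> simp [sz, sg]

/-- the lift of an integer vector to a zero-sum measure -/
def lin {V : Type} [Fintype V] [DecidableEq V] (s : V) (z : V → ℤ) :
    {μ : V → ℝ // ∑ x, μ x = 0} :=
  ⟨fun x => (z x : ℝ) - if x = s then ∑ y, (z y : ℝ) else 0, by
    rw [Finset.sum_sub_distrib]; simp⟩

lemma lin_sub {V : Type} [Fintype V] [DecidableEq V] (s : V) (z z' : V → ℤ) :
    (fun x => (lin s z).1 x - (lin s z').1 x) = (lin s (z - z')).1 := by
  funext x
  simp only [lin, Pi.sub_apply, Int.cast_sub, Finset.sum_sub_distrib]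
  split_ifs <;> ring

open Classical in
theorem key (H : WGraph) (conn : ∀ x y : H.V, ∃ l, H.IsWalk x y l)
    (hlen : ∀ e, 0 < H.len e) (hth : ∀ e, 0 ≤ H.th e) (hsum : ∑ e, H.th e * H.len e = 1)
    (J : ℕ) (c : Fin J → H.ι → Prop) (τ θ K c0 M : ℝ) (hτ : 0 < τ) (h0 : 0 < θ) (h1 : θ < 1)
    (hK : 0 < K) (hc0 : 0 < c0) (hM : 0 < M)
    (hPP : ∀ j : Fin J, PP H (c j) τ (θ ^ (j.1 + 1)) M K c0)
    (D : ℝ) (hD : 1 ≤ D) (Ω : Type) [MeasurableSpace Ω] (ν : Measure Ω)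
    (f : {μ : H.V → ℝ // ∑ x, μ x = 0} → Lp ℝ 1 ν)
    (hf : ∀ x y, TCnorm H.gdist (fun z => x.1 z - y.1 z) ≤ dist (f x) (f y) ∧
        dist (f x) (f y) ≤ D * TCnorm H.gdist (fun z => x.1 z - y.1 z)) :
    c0 * ∑ j, ∑ e, (if c j e then H.th e * H.len e else 0) ≤
      K / (√τ * (1 - √θ)) * D := by
  choose S iS A B t ℓ hi hii hiii hiv using hPP
  choose T hT using fun j w => (hi j w).2.2
  set C := K / (√τ * (1 - √θ)) with hC
  have hq1 : √θ < 1 := by rw [Real.sqrt_lt' one_pos]; simpa using h1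
  have hC0 : 0 ≤ C := by
    have := Real.sqrt_nonneg τ
    have : 0 ≤ 1 - √θ := by linarith
    positivity
  have hgn := gdist_nonneg hlen
  set I := Σ j : Fin J, (S j → Bool) with hI
  set v : I → H.V → ℤ := fun i => ∑ w, (sz (i.2 w) * T i.1 w) • (bv (A i.1 w) - bv (B i.1 w))
    with hv
  have hvs : ∀ (i : I) (u : H.V → ℝ), ∑ x, (v i x : ℝ) * u x
      = M * ∑ w, sg (i.2 w) * (t i.1 w * (u (A i.1 w) - u (B i.1 w))) := by
    intro i u
    have : ∀ x, (v i x : ℝ) * u x = ∑ w, (sg (i.2 w) * (t i.1 w * M)) *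
        ((if x = A i.1 w then u x else 0) - (if x = B i.1 w then u x else 0)) := by
      intro x
      simp only [hv, Finset.sum_apply, Pi.smul_apply, Pi.sub_apply, smul_eq_mul, Int.cast_sum,
        Int.cast_mul, Int.cast_sub, Finset.sum_mul, sz_cast, ← hT, Pi.single_apply]
      refine Finset.sum_congr rfl fun w _ => ?_
      split_ifs <;> push_cast <;> ring
    rw [Finset.sum_congr rfl fun x _ => this x, Finset.sum_comm, Finset.mul_sum]
    refine Finset.sum_congr rfl fun w _ => ?_
    rw [← Finset.mul_sum, Finset.sum_sub_distrib]
    simp only [Finset.sum_ite_eq', Finset.mem_univ, if_true]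
    ring
  set φ : (H.V → ℤ) → Lp ℝ 1 ν := fun z => f (lin H.s z) with hφ
  set α : I → ℝ := fun i => (2 ^ Fintype.card (S i.1))⁻¹ with hα
  set m : Fin J → ℝ := fun j => ∑ w, t j w * ℓ j w with hm
  have hup : ∀ z z' : H.V → ℤ, ‖φ z - φ z'‖ ≤ D * TCnorm H.gdist (lin H.s (z - z')).1 := by
    intro z z'
    rw [← dist_eq_norm, ← lin_sub]
    exact (hf _ _).2
  have hlo : ∀ z z' : H.V → ℤ, TCnorm H.gdist (lin H.s (z - z')).1 ≤ ‖φ z - φ z'‖ := by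
    intro z z'
    rw [← dist_eq_norm, ← lin_sub]
    exact (hf _ _).1
  have hlin := linearize (ι := H.V) (E := Lp ℝ 1 ν) (I := I) φ
    (fun v => D * TCnorm H.gdist (lin H.s v).1)
    (fun v z => by have := hup (z + v) z; rwa [add_sub_cancel_left] at this)
    (fun y y' => D * H.gdist y y')
    (fun y y' z => by
      refine (hup _ _).trans (mul_le_mul_of_nonneg_left ?_ (by linarith))
      refine TC_le _ hgn _ _ ?_
      have := plan_mem H.gdist (κ := Unit) (lin H.s (z + bv y - (z + bv y'))).1 (fun _ => 1)
        (fun _ => y) (fun _ => y') (fun _ => zero_le_one) (fun x => by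
          rw [add_sub_add_left_eq_sub]
          have hz : ∀ y : H.V, ∑ x, ((bv y x : ℤ) : ℝ) = 1 := by
            intro y
            simp only [Pi.single_apply, Int.cast_ite, Int.cast_one, Int.cast_zero,
              Finset.sum_ite_eq', Finset.mem_univ, if_true]
          simp only [lin, Pi.sub_apply, Int.cast_sub, Finset.sum_sub_distrib, hz, sub_self,
            ite_self, sub_zero, Finset.univ_unique, Finset.sum_singleton, one_mul]
          simp only [Pi.single_apply, Int.cast_ite, Int.cast_one, Int.cast_zero, eq_comm])
      simpa using this)
    v α (fun i => M * (c0 * m i.1)) (fun i => by positivity)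
    (fun i R z => by
      have h2 := hlo (z + R • v i) z
      rw [add_sub_cancel_left] at h2
      refine le_trans ?_ h2
      obtain ⟨h, hh1, -, hh3⟩ := hiv i.1 i.2
      refine le_trans (le_of_eq ?_) (le_TC H.gdist H.s _ (lin H.s (R • v i)).2 h
        (lip_gdist conn h hh1))
      have hs0 : ∑ y, (v i y : ℝ) = 0 := by
        have := hvs i (fun _ => 1)
        simpa using this
      have hs1 : ∑ y, (((R • v i) y : ℤ) : ℝ) = 0 := by
        simp only [Pi.smul_apply, nsmul_eq_mul, Int.cast_mul, Int.cast_natCast]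
        rw [← Finset.mul_sum, hs0, mul_zero]
      have hs2 : ∀ x, h x * (lin H.s (R • v i)).1 x = R * ((v i x : ℝ) * h x) := by
        intro x
        simp only [lin, hs1, ite_self, sub_zero]
        simp only [Pi.smul_apply, nsmul_eq_mul, Int.cast_mul, Int.cast_natCast]
        ring
      rw [Finset.sum_congr rfl fun x _ => hs2 x, ← Finset.mul_sum, hvs]
      congr 2
      rw [hm, Finset.mul_sum]
      refine Finset.sum_congr rfl fun w _ => ?_
      rw [hh3 w]
      have := sg_mul_self (i.2 w)
      linear_combination (- (t i.1 w * c0 * ℓ i.1 w)) * this)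
  have hαsum : ∑ i : I, α i * (M * (c0 * m i.1)) = M * (c0 * ∑ j, m j) := by
    rw [Fintype.sum_sigma, Finset.mul_sum, Finset.mul_sum]
    refine Finset.sum_congr rfl fun j _ => ?_
    change ∑ _ε : S j → Bool, ((2 : ℝ) ^ Fintype.card (S j))⁻¹ * (M * (c0 * m j)) = _
    rw [Finset.sum_const, Finset.card_univ, Fintype.card_fun, Fintype.card_bool, nsmul_eq_mul]
    push_cast
    have : (2 : ℝ) ^ Fintype.card (S j) ≠ 0 := by positivity
    field_simp
  have hscal := scalar_ineq H.src H.dst H.th hth J S A B t τ θ K hτ h0 h1 hK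
    (fun j w => ⟨(hi j w).1, (hi j w).2.1⟩) (fun j g => (hii j g).trans (by
      refine mul_le_mul_of_nonneg_left (Finset.sum_le_sum fun e _ => ?_) hK.le
      split_ifs
      · exact le_rfl
      · exact mul_nonneg (hth e) (abs_nonneg _)))
  have hmain : M * (c0 * ∑ j, m j) ≤ M * (C * D) := by
    refine le_of_forall_pos_le_add fun ε hε => ?_
    obtain ⟨g, hg1, hg2⟩ := hlin ε hε
    rw [hαsum] at hg2
    have hL := L1_ineq (ν := ν) α (fun i y => (v i y : ℝ)) (fun e => M * (C * H.th e))
      (fun e y => (if y = H.dst e then 1 else 0) - (if y = H.src e then 1 else 0))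
      (fun g => by
        have e1 : ∀ e, ∑ y, ((if y = H.dst e then (1 : ℝ) else 0) -
            (if y = H.src e then 1 else 0)) * g y = g (H.dst e) - g (H.src e) := by
          intro e
          simp [sub_mul, Finset.sum_sub_distrib]
        have e2 : ∑ i : I, α i * |∑ y, (v i y : ℝ) * g y| = M * ∑ j, (2 ^ Fintype.card (S j))⁻¹ *
            ∑ ε : S j → Bool, |∑ w, sg (ε w) * (t j w * (g (A j w) - g (B j w)))| := by
          rw [Fintype.sum_sigma, Finset.mul_sum]
          refine Finset.sum_congr rfl fun j _ => ?_
          rw [Finset.mul_sum, Finset.mul_sum]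
          refine Finset.sum_congr rfl fun ε _ => ?_
          rw [hvs, abs_mul, abs_of_pos hM]
          ring
        rw [e2]
        simp only [e1]
        refine (mul_le_mul_of_nonneg_left (hscal g) hM.le).trans (le_of_eq ?_)
        rw [Finset.mul_sum]
        exact Finset.sum_congr rfl fun e _ => by rw [← hC]; ring) g
    have hR : ∑ e, (M * (C * H.th e)) * ‖∑ y, ((if y = H.dst e then (1 : ℝ) else 0) -
            (if y = H.src e then 1 else 0)) • g y‖ ≤ M * (C * D) := by
      calc _ ≤ ∑ e, (M * (C * D)) * (H.th e * H.len e) := by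
            refine Finset.sum_le_sum fun e _ => ?_
            have e1 : ∑ y, ((if y = H.dst e then (1 : ℝ) else 0) -
              (if y = H.src e then 1 else 0)) • g y = g (H.dst e) - g (H.src e) := by
              simp [sub_smul, Finset.sum_sub_distrib]
            rw [e1]
            have h2 : ‖g (H.dst e) - g (H.src e)‖ ≤ D * H.len e :=
              (hg1 _ _).trans (mul_le_mul_of_nonneg_left (gdist_le_len hlen e) (by linarith))
            calc _ ≤ (M * (C * H.th e)) * (D * H.len e) :=
                  mul_le_mul_of_nonneg_left h2 (mul_nonneg hM.le (mul_nonneg hC0 (hth e)))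
              _ = _ := by ring
        _ = _ := by rw [← Finset.mul_sum, hsum, mul_one]
    linarith
  have h2 := le_of_mul_le_mul_left hmain hM
  refine le_trans (mul_le_mul_of_nonneg_left (Finset.sum_le_sum fun j _ => ?_) hc0.le) h2
  exact hiii j

end SlashTC

open Finset MeasureTheory

/-- Let `G` be any `st`-graph that is not an `st`-path and has at least
three vertices. Then there exists a constant `C < ∞` (depending on `G` but not on `n`)
such that `c₁(TC(G^{⊘n})) ≥ C⁻¹·log|V(G^{⊘n})|` for every `n ≥ 0`. -/
theorem c1_TC_slashPow_lower (G : WGraph) (hG : IsSTGraph G) (hnp : ¬ IsSTPath G)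
    (h3 : 3 ≤ Fintype.card G.V) :
    ∃ C : ℝ, 0 < C ∧ ∀ n : ℕ,
      c1TC (G.slashPow n).gdist ≥
        C⁻¹ * Real.log (Fintype.card (G.slashPow n).V) := by
  classical
  obtain ⟨a, has, hat⟩ : ∃ a : G.V, a ≠ G.s ∧ a ≠ G.t := by
    by_contra hcon
    push Not at hcon
    have hsub : (Finset.univ : Finset G.V) ⊆ {G.s, G.t} := by
      intro x _
      by_cases hx : x = G.s
      · simp [hx]
      · simp [hcon x hx]
    have := (Finset.card_le_card hsub).trans Finset.card_le_two
    rw [Finset.card_univ] at this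
    omega
  obtain ⟨e1, he1⟩ := SlashTC.exists_thin hG hnp
  obtain ⟨K, hK, hKa⟩ := SlashTC.vertex_ineq hG a
  have hne : Nonempty G.ι := ⟨e1⟩
  obtain ⟨el, hel⟩ := Finite.exists_min G.len
  obtain ⟨et, het⟩ := Finite.exists_min G.th
  set c0 := G.len el with hc0d
  set τ := G.th et with hτd
  have hc0 : 0 < c0 := hG.len_pos el
  have hτ0 : 0 < τ := hG.th_pos et
  have hτ1 : τ ≤ 1 := SlashTC.th_le_one hG et
  obtain ⟨θ, h0, h1, hθ⟩ : ∃ θ : ℝ, 0 < θ ∧ θ < 1 ∧ ∀ e, G.th e < 1 → G.th e ≤ θ := by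
    obtain ⟨e2, he2m, he2⟩ := Finset.exists_max_image
      (Finset.univ.filter fun e => G.th e < 1) G.th ⟨e1, by simpa using he1⟩
    refine ⟨G.th e2, hG.th_pos e2, by simpa using he2m, fun e he => he2 e (by simpa using he)⟩
  obtain ⟨mm, γ, -, hγ⟩ := hG.th_witness
  set M : ℝ := (mm : ℝ) + 1 with hMd
  have hM : 0 < M := by positivity
  have hMi : ∃ k : ℤ, M = k := ⟨(mm : ℤ) + 1, by push_cast; rfl⟩
  have hMt : ∀ e, ∃ k : ℤ, G.th e * M = k := by
    intro e
    refine ⟨((Finset.univ.filter fun i => e ∈ γ i).card : ℤ), ?_⟩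
    rw [hγ e, div_mul_cancel₀ _ hM.ne']
    push_cast
    rfl
  set p := ∑ e, (if G.th e < 1 then G.th e * G.len e else 0) with hp
  have hpos : ∀ e, 0 < G.th e * G.len e := fun e => mul_pos (hG.th_pos e) (hG.len_pos e)
  have hp0 : 0 < p := by
    refine Finset.sum_pos' (fun e _ => ?_) ⟨e1, Finset.mem_univ _, ?_⟩
    · split_ifs
      · exact (hpos e).le
      · exact le_rfl
    · rw [if_pos he1]; exact hpos e1
  set C1 := K / (√τ * (1 - √θ)) with hC1
  have hq1 : √θ < 1 := by rw [Real.sqrt_lt' one_pos]; simpa using h1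
  have hC1p : 0 < C1 := by
    have := Real.sqrt_pos.2 hτ0
    have : 0 < 1 - √θ := by linarith
    positivity
  set R := C1 / (c0 * p) with hR
  have hRp : 0 < R := by positivity
  set B : ℝ := ((Fintype.card G.ι + Fintype.card G.V + 2 : ℕ) : ℝ) with hB
  have hB2 : 1 < B := by
    have : 1 < Fintype.card G.ι + Fintype.card G.V + 2 := by omega
    rw [hB]; exact_mod_cast this
  have hlB : 0 < Real.log B := Real.log_pos hB2
  refine ⟨(R + 2) * Real.log B, by positivity, fun n => ?_⟩
  have hlogV : Real.log (Fintype.card (G.slashPow n).V) ≤ (n + 1) * Real.log B := by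
    have hcard := SlashTC.pow_card_V (G := G) n
    have hcp : 0 < Fintype.card (G.slashPow n).V := Fintype.card_pos_iff.2 ⟨(G.slashPow n).s⟩
    have := Real.log_le_log (x := (Fintype.card (G.slashPow n).V : ℝ)) (y := B ^ (n + 1))
      (by exact_mod_cast hcp) (by rw [hB]; exact_mod_cast hcard)
    rw [Real.log_pow] at this
    push_cast at this
    exact this
  have hD : (n + 1 : ℝ) / (R + 2) ≤ c1TC (G.slashPow n).gdist := by
    refine le_csInf (SlashTC.D_nonempty _ (SlashTC.pow_conn hG n) (SlashTC.pow_len_pos hG n)) ?_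
    rintro D ⟨hD1, Ω, mΩ, ν, f, hf⟩
    rw [div_le_iff₀ (by positivity)]
    cases n with
    | zero =>
      push_cast
      nlinarith
    | succ n =>
      have hk := SlashTC.key (G.slashPow (n + 1)) (SlashTC.pow_conn hG _)
        (SlashTC.pow_len_pos hG _) (fun e => (SlashTC.pow_th_pos hG _ e).le)
        (SlashTC.pow_sum hG _) n (fun j => SlashTC.cov G (θ ^ (j.1 + 1)) (n + 1)) τ θ K c0
        (M ^ (n + 1)) hτ0 h0 h1 hK hc0 (by positivity)
        (fun j => SlashTC.PP_all hG τ (θ ^ (j.1 + 1)) M K c0 hK hc0 a has hat hKa hel hτ0 hτ1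
          (pow_pos h0 _) (pow_le_one₀ h0.le h1.le) het hMi hMt (n + 1))
        D hD1 Ω ν f hf
      have hm := SlashTC.mass hG θ h0 h1 hθ n
      have h2 : c0 * (n * p) ≤ C1 * D := (mul_le_mul_of_nonneg_left hm hc0.le).trans hk
      have h3' : (n : ℝ) ≤ D * R := by
        rw [hR, ← mul_div_assoc, le_div_iff₀ (by positivity)]
        linarith
      push_cast
      linarith
  change _ ≤ _
  refine le_trans ?_ hD
  rw [inv_mul_le_iff₀ (by positivity)]
  refine hlogV.trans (le_of_eq ?_)
  field_simp
end

section
/- For every n ≥ 0, the diamond graph satisfies c₁(TC(D^{⊘n})) ≥ ((2−√2)/4)·n. -/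
open Finset MeasureTheory

open Finset MeasureTheory

/-- The diamond `st`-graph `D`: two directed paths of two edges each from `s` to `t`,
sharing only `s` and `t`, all four edges of length `1/2` and thickness `1/2`.
Vertices: `0 = s`, `1 = t`, `2`, `3`. -/
noncomputable def diamond : WGraph where
  V := Fin 4
  ι := Fin 4
  finV := inferInstance
  decV := inferInstance
  finι := inferInstance
  decι := inferInstance
  src := ![0, 2, 0, 3]
  dst := ![2, 1, 3, 1]
  len := fun _ => 1 / 2
  th := fun _ => 1 / 2
  s := 0
  t := 1

section Lin

/-- Averaging operator in one direction. -/
noncomputable def avgDir {G E : Type*} [AddCommGroup G] [NormedAddCommGroup E] [NormedSpace ℝ E]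
    (K : ℕ) (e : G) (h : G → E) (x : G) : E :=
  (K : ℝ)⁻¹ • ∑ j ∈ Finset.range K, h (x + j • e)

lemma avgDir_norm_le {G E : Type*} [AddCommGroup G] [NormedAddCommGroup E] [NormedSpace ℝ E]
    (K : ℕ) (hK : 0 < K) (e : G) (h : G → E) (c : ℝ) (hc : ∀ x, ‖h x‖ ≤ c) (x : G) :
    ‖avgDir K e h x‖ ≤ c := by
  have hK' : (0 : ℝ) < K := by exact_mod_cast hK
  unfold avgDir
  rw [norm_smul, norm_inv, Real.norm_natCast, inv_mul_le_iff₀ hK']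
  calc ‖∑ j ∈ Finset.range K, h (x + j • e)‖ ≤ ∑ j ∈ Finset.range K, c :=
        norm_sum_le_of_le _ fun j _ => hc _
    _ = K * c := by simp

lemma exists_smooth {G E ι : Type*} [AddCommGroup G] [NormedAddCommGroup E] [NormedSpace ℝ E]
    (f : G → E) (B : G → ℝ) (hB : ∀ x w, ‖f (x + w) - f x‖ ≤ B w) (e : ι → G)
    (K : ℕ) (hK : 0 < K) (S : Finset ι) :
    ∃ g : G → E, (∀ x w, ‖g (x + w) - g x‖ ≤ B w) ∧ (∃ c, ∀ x, ‖g x - f x‖ ≤ c) ∧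
      ∀ v ∈ S, ∀ x w, ‖(g (x + w + e v) - g (x + w)) - (g (x + e v) - g x)‖ ≤ 2 * B w / K := by
  classical
  have hK' : (0 : ℝ) < K := by exact_mod_cast hK
  induction S using Finset.induction_on with
  | empty => exact ⟨f, hB, ⟨0, by simp⟩, by simp⟩
  | insert a S ha ih =>
    obtain ⟨g, h1, ⟨c, hc⟩, h3⟩ := ih
    have key : ∀ (x w : G), avgDir K (e a) g (x + w) - avgDir K (e a) g x
        = avgDir K (e a) (fun y => g (y + w) - g y) x := by
      intro x w
      unfold avgDir
      rw [← smul_sub, ← Finset.sum_sub_distrib]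
      congr 1
      refine Finset.sum_congr rfl fun j _ => ?_
      rw [add_right_comm]
    refine ⟨avgDir K (e a) g, ?_, ?_, ?_⟩
    · intro x w
      rw [key]
      exact avgDir_norm_le K hK _ _ _ (fun y => h1 y w) x
    · refine ⟨∑ j ∈ Finset.range K, B (j • e a) + c, fun x => ?_⟩
      have hBn : ∀ w, 0 ≤ B w := fun w => (norm_nonneg _).trans (hB 0 w)
      have e1 : avgDir K (e a) g x - g x
          = (K : ℝ)⁻¹ • ∑ j ∈ Finset.range K, (g (x + j • e a) - g x) := by
        unfold avgDir
        rw [Finset.sum_sub_distrib, smul_sub]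
        congr 1
        simp only [Finset.sum_const, Finset.card_range]
        rw [← Nat.cast_smul_eq_nsmul ℝ, smul_smul, inv_mul_cancel₀ hK'.ne', one_smul]
      have e2 : ‖avgDir K (e a) g x - g x‖ ≤ ∑ j ∈ Finset.range K, B (j • e a) := by
        rw [e1, norm_smul, norm_inv, Real.norm_natCast]
        have : ‖∑ j ∈ Finset.range K, (g (x + j • e a) - g x)‖ ≤ ∑ j ∈ Finset.range K, B (j • e a) :=
          norm_sum_le_of_le _ fun j _ => h1 _ _
        have h1K : (1 : ℝ) ≤ K := by exact_mod_cast hK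
        calc _ ≤ 1 * ‖∑ j ∈ Finset.range K, (g (x + j • e a) - g x)‖ := by
              gcongr
              exact inv_le_one_of_one_le₀ h1K
          _ ≤ _ := by simpa using this
      calc ‖avgDir K (e a) g x - f x‖ = ‖(avgDir K (e a) g x - g x) + (g x - f x)‖ := by
            congr 1; abel
        _ ≤ _ := (norm_add_le _ _).trans (add_le_add e2 (hc x))
    · intro v hv x w
      rcases Finset.mem_insert.1 hv with rfl | hv
      · have t : ∀ y, avgDir K (e v) g (y + e v) - avgDir K (e v) g y
            = (K : ℝ)⁻¹ • (g (y + K • e v) - g y) := by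
          intro y
          unfold avgDir
          rw [← smul_sub, ← Finset.sum_sub_distrib]
          congr 1
          have := Finset.sum_range_sub (fun j => g (y + j • e v)) K
          simp only [zero_smul, add_zero] at this
          rw [← this]
          refine Finset.sum_congr rfl fun j _ => ?_
          rw [succ_nsmul', add_assoc]
        rw [t, t, ← smul_sub, norm_smul, norm_inv, Real.norm_natCast, inv_mul_le_iff₀ hK']
        have : g (x + w + K • e v) - g (x + w) - (g (x + K • e v) - g x)
            = (g (x + K • e v + w) - g (x + K • e v)) - (g (x + w) - g x) := by
          rw [add_right_comm x w]; abel
        rw [this]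
        have e0 : (K : ℝ) * (2 * B w / K) = B w + B w := by field_simp; ring
        rw [e0]
        exact (norm_sub_le _ _).trans (add_le_add (h1 _ _) (h1 _ _))
      · have : avgDir K (e a) g (x + w + e v) - avgDir K (e a) g (x + w)
            - (avgDir K (e a) g (x + e v) - avgDir K (e a) g x)
            = avgDir K (e a) (fun y => (g (y + w + e v) - g (y + w)) - (g (y + e v) - g y)) x := by
          rw [key (x + w), key x]
          unfold avgDir
          rw [← smul_sub, ← Finset.sum_sub_distrib]
          congr 1
          refine Finset.sum_congr rfl fun j _ => ?_
          rw [add_right_comm x w]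
        rw [this]
        exact avgDir_norm_le K hK _ _ _ (fun y => h3 v hv y w) x

lemma approx_linear {V E : Type*} [Fintype V] [DecidableEq V] [NormedAddCommGroup E]
    [NormedSpace ℝ E] (B : (V → ℤ) → ℝ) (w : V → ℤ) :
    ∃ c : ℝ, ∀ (K : ℕ) (_ : 0 < K) (g : (V → ℤ) → E)
      (_ : ∀ v, ∀ x w, ‖(g (x + w + Pi.single v 1) - g (x + w)) - (g (x + Pi.single v 1) - g x)‖
        ≤ 2 * B w / K) (x : V → ℤ),
      ‖g (x + w) - g x - ∑ v, (w v : ℝ) • (g (x + Pi.single v 1) - g x)‖ ≤ c / K := by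
  let P : AddSubgroup (V → ℤ) :=
  { carrier := {w | ∃ c : ℝ, ∀ (K : ℕ) (_ : 0 < K) (g : (V → ℤ) → E)
      (_ : ∀ v, ∀ x w, ‖(g (x + w + Pi.single v 1) - g (x + w)) - (g (x + Pi.single v 1) - g x)‖
        ≤ 2 * B w / K) (x : V → ℤ),
      ‖g (x + w) - g x - ∑ v, (w v : ℝ) • (g (x + Pi.single v 1) - g x)‖ ≤ c / K}
    zero_mem' := ⟨0, by intros; simp⟩
    add_mem' := by
      rintro w w' ⟨c, hc⟩ ⟨c', hc'⟩
      refine ⟨c + c' + ∑ v, |(w' v : ℝ)| * (2 * B w), fun K hK g hg x => ?_⟩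
      have a1 := hc K hK g hg x
      have a2 := hc' K hK g hg (x + w)
      have a3 : ‖∑ v, (w' v : ℝ) • ((g (x + w + Pi.single v 1) - g (x + w))
          - (g (x + Pi.single v 1) - g x))‖ ≤ ∑ v, |(w' v : ℝ)| * (2 * B w / K) := by
        refine norm_sum_le_of_le _ fun v _ => ?_
        rw [norm_smul, Real.norm_eq_abs]
        exact mul_le_mul_of_nonneg_left (hg v x w) (abs_nonneg _)
      have : g (x + (w + w')) - g x - ∑ v, ((w + w') v : ℝ) • (g (x + Pi.single v 1) - g x)
          = (g (x + w) - g x - ∑ v, (w v : ℝ) • (g (x + Pi.single v 1) - g x))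
          + (g (x + w + w') - g (x + w)
            - ∑ v, (w' v : ℝ) • (g (x + w + Pi.single v 1) - g (x + w)))
          + ∑ v, (w' v : ℝ) • ((g (x + w + Pi.single v 1) - g (x + w))
          - (g (x + Pi.single v 1) - g x)) := by
        simp only [Pi.add_apply, Int.cast_add, add_smul, Finset.sum_add_distrib, smul_sub,
          Finset.sum_sub_distrib, add_assoc]
        abel
      have e4 : (c + c' + ∑ v, |(w' v : ℝ)| * (2 * B w)) / K
          = c / K + c' / K + ∑ v, |(w' v : ℝ)| * (2 * B w / K) := by
        rw [add_div, add_div, Finset.sum_div]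
        congr 1
        refine Finset.sum_congr rfl fun v _ => ?_
        ring
      rw [this, e4]
      exact (norm_add_le _ _).trans (add_le_add ((norm_add_le _ _).trans (add_le_add a1 a2)) a3)
    neg_mem' := by
      rintro w ⟨c, hc⟩
      refine ⟨c + ∑ v, |(w v : ℝ)| * (2 * B (-w)), fun K hK g hg x => ?_⟩
      have a1 := hc K hK g hg (x + -w)
      have a3 : ‖∑ v, (w v : ℝ) • ((g (x + -w + Pi.single v 1) - g (x + -w))
          - (g (x + Pi.single v 1) - g x))‖ ≤ ∑ v, |(w v : ℝ)| * (2 * B (-w) / K) := by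
        refine norm_sum_le_of_le _ fun v _ => ?_
        rw [norm_smul, Real.norm_eq_abs]
        exact mul_le_mul_of_nonneg_left (hg v x (-w)) (abs_nonneg _)
      have : g (x + -w) - g x - ∑ v, ((-w) v : ℝ) • (g (x + Pi.single v 1) - g x)
          = -((g (x + -w + w) - g (x + -w)
              - ∑ v, (w v : ℝ) • (g (x + -w + Pi.single v 1) - g (x + -w)))
          + ∑ v, (w v : ℝ) • ((g (x + -w + Pi.single v 1) - g (x + -w))
          - (g (x + Pi.single v 1) - g x))) := by
        simp only [Pi.neg_apply, Int.cast_neg, neg_smul, Finset.sum_neg_distrib, smul_sub,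
          Finset.sum_sub_distrib, neg_add_cancel_right]
        abel
      have e4 : (c + ∑ v, |(w v : ℝ)| * (2 * B (-w))) / K
          = c / K + ∑ v, |(w v : ℝ)| * (2 * B (-w) / K) := by
        rw [add_div, Finset.sum_div]
        congr 1
        refine Finset.sum_congr rfl fun v _ => ?_
        ring
      rw [this, e4, norm_neg]
      exact (norm_add_le _ _).trans (add_le_add a1 a3) }
  have hs : ∀ v, (Pi.single v 1 : V → ℤ) ∈ P := by
    intro v
    refine ⟨0, fun K hK g hg x => ?_⟩
    have : ∑ u, ((Pi.single v 1 : V → ℤ) u : ℝ) • (g (x + Pi.single u 1) - g x)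
        = g (x + Pi.single v 1) - g x := by
      rw [Finset.sum_eq_single v]
      · simp
      · intro b _ hb; simp [Pi.single_eq_of_ne hb]
      · simp
    rw [this]; simp
  have : w ∈ P := by
    have e : w = ∑ v, (w v) • (Pi.single v 1 : V → ℤ) := by
      ext u
      simp [Finset.sum_apply, Pi.single_apply]
    rw [e]
    exact P.sum_mem fun v _ => P.zsmul_mem (hs v) _
  exact this

lemma box_lemma {G J : Type*} [AddCommGroup G] (φ : J → G) (b : J → ℝ) (R : ℕ) (hR : 0 < R)
    (S : Finset J) : ∀ (u : J → G → ℝ) (T : ℝ)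
    (_ : ∀ j ∈ S, ∀ x, R * b j ≤ ∑ i ∈ Finset.range R, u j (x + i • φ j))
    (_ : ∀ x, ∑ j ∈ S, u j x ≤ T), ∑ j ∈ S, b j ≤ T := by
  classical
  have hR' : (0 : ℝ) < R := by exact_mod_cast hR
  induction S using Finset.induction_on with
  | empty => intro u T _ h2; simpa using h2 0
  | insert a S ha ih =>
    intro u T h1 h2
    rw [Finset.sum_insert ha]
    have := ih (fun j x => (R : ℝ)⁻¹ * ∑ i ∈ Finset.range R, u j (x + i • φ a)) (T - b a) ?_ ?_
    · linarith
    · intro j hj x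
      rw [← Finset.mul_sum, Finset.sum_comm, ← div_eq_inv_mul, le_div_iff₀ hR']
      calc (R : ℝ) * b j * R = ∑ i ∈ Finset.range R, (R * b j) := by simp; ring
        _ ≤ _ := by
          refine Finset.sum_le_sum fun i _ => ?_
          have := h1 j (Finset.mem_insert_of_mem hj) (x + i • φ a)
          refine this.trans (le_of_eq ?_)
          refine Finset.sum_congr rfl fun k _ => ?_
          rw [add_right_comm]
    · intro x
      rw [← Finset.mul_sum, Finset.sum_comm, ← div_eq_inv_mul, div_le_iff₀ hR']
      have h3 : ∑ i ∈ Finset.range R, ∑ j ∈ insert a S, u j (x + i • φ a) ≤ R * T := by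
        calc _ ≤ ∑ i ∈ Finset.range R, T := Finset.sum_le_sum fun i _ => h2 _
          _ = _ := by simp
      simp only [Finset.sum_insert ha] at h3
      rw [Finset.sum_add_distrib] at h3
      have := h1 a (Finset.mem_insert_self _ _) x
      linarith

lemma lin_lemma {V E J : Type*} [Fintype V] [DecidableEq V] [Fintype J] [NormedAddCommGroup E]
    [NormedSpace ℝ E] (f : (V → ℤ) → E) (B : (V → ℤ) → ℝ)
    (hB : ∀ x w, ‖f (x + w) - f x‖ ≤ B w) (φ : J → V → ℤ) (b : J → ℝ)
    (hb : ∀ j x (R : ℕ), R * b j ≤ ‖f (x + R • φ j) - f x‖) (δ : ℝ) (hδ : 0 < δ) :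
    ∃ F : V → E, (∀ u v, ‖F u - F v‖ ≤ B (Pi.single u 1 - Pi.single v 1) + δ) ∧
      ∑ j, b j - δ ≤ ∑ j, ‖∑ v, (φ j v : ℝ) • F v‖ := by
  choose c hc using fun w => approx_linear (E := E) B w
  obtain ⟨K, hK⟩ := exists_nat_gt
    ((∑ u : V, ∑ v : V, |c (Pi.single u 1 - Pi.single v 1)| + ∑ j, |c (φ j)|) / (δ / 3))
  have hnn : 0 ≤ (∑ u : V, ∑ v : V, |c (Pi.single u 1 - Pi.single v 1)| + ∑ j, |c (φ j)|) := by
    positivity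
  have hK0' : (0 : ℝ) < K := lt_of_le_of_lt (by positivity) hK
  have hK0 : 0 < K := by exact_mod_cast hK0'
  rw [div_lt_iff₀ (by positivity)] at hK
  obtain ⟨g, g1, ⟨c', g2⟩, g3⟩ := exists_smooth f B hB (fun v : V => Pi.single v (1 : ℤ)) K hK0
    Finset.univ
  have hap := fun w => hc w K hK0 g (fun v => g3 v (Finset.mem_univ v))
  have hc'0 : 0 ≤ c' := (norm_nonneg _).trans (g2 0)
  obtain ⟨R, hR⟩ := exists_nat_gt ((2 * c' * Fintype.card J) / (δ / 3))
  have hR0' : (0 : ℝ) < R := lt_of_le_of_lt (by positivity) hR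
  have hR0 : 0 < R := by exact_mod_cast hR0'
  rw [div_lt_iff₀ (by positivity)] at hR
  -- find the point
  have hx : ∃ x, ∑ j, b j - 2 * δ / 3 ≤ ∑ j, ‖g (x + φ j) - g x‖ := by
    by_contra hcon
    push Not at hcon
    have := box_lemma φ (fun j => b j - 2 * c' / R) R hR0 Finset.univ
      (fun j x => ‖g (x + φ j) - g x‖) (∑ j, b j - 2 * δ / 3) ?_ (fun x => (hcon x).le)
    · rw [Finset.sum_sub_distrib, Finset.sum_const, nsmul_eq_mul, Finset.card_univ] at this
      have h2 : (Fintype.card J : ℝ) * (2 * c' / R) < δ / 3 := by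
        rw [← mul_div_assoc, div_lt_iff₀ hR0']; linarith
      linarith
    · intro j _ x
      have e1 : (R : ℝ) * (b j - 2 * c' / R) = R * b j - 2 * c' := by field_simp
      have e2 : ‖g (x + R • φ j) - g x‖ ≤ ∑ i ∈ Finset.range R,
          ‖g (x + i • φ j + φ j) - g (x + i • φ j)‖ := by
        have := Finset.sum_range_sub (fun i => g (x + i • φ j)) R
        simp only [zero_smul, add_zero] at this
        rw [← this]
        refine norm_sum_le_of_le _ fun i _ => ?_
        rw [succ_nsmul, add_assoc]
      have e3 := hb j x R
      have e4 : ‖f (x + R • φ j) - f x‖ ≤ ‖g (x + R • φ j) - g x‖ + c' + c' := by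
        have : f (x + R • φ j) - f x = (g (x + R • φ j) - g x)
          - (g (x + R • φ j) - f (x + R • φ j)) + (g x - f x) := by abel
        rw [this]
        refine (norm_add_le _ _).trans (add_le_add ((norm_sub_le _ _).trans ?_) (g2 _))
        exact add_le_add le_rfl (g2 _)
      rw [e1]; linarith
  obtain ⟨x, hx⟩ := hx
  refine ⟨fun v => g (x + Pi.single v 1) - g x, ?_, ?_⟩
  · intro u v
    have h1 := hap (Pi.single u 1 - Pi.single v 1) x
    have h2 : ∑ z, (((Pi.single u 1 - Pi.single v 1 : V → ℤ) z : ℤ) : ℝ) • (g (x + Pi.single z 1) - g x)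
        = (g (x + Pi.single u 1) - g x) - (g (x + Pi.single v 1) - g x) := by
      simp only [Pi.sub_apply, Int.cast_sub, sub_smul, Finset.sum_sub_distrib]
      congr 1
      · rw [Finset.sum_eq_single u]
        · simp
        · intro b _ hb; simp [Pi.single_eq_of_ne hb]
        · simp
      · rw [Finset.sum_eq_single v]
        · simp
        · intro b _ hb; simp [Pi.single_eq_of_ne hb]
        · simp
    rw [h2] at h1
    have h3 : c (Pi.single u 1 - Pi.single v 1) / K ≤ δ := by
      rw [div_le_iff₀ hK0']
      have t1 : |c (Pi.single u 1 - Pi.single v 1)|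
          ≤ ∑ u : V, ∑ v : V, |c (Pi.single u 1 - Pi.single v 1)| :=
        (Finset.single_le_sum (f := fun v => |c (Pi.single u 1 - Pi.single v 1)|)
          (fun _ _ => abs_nonneg _) (Finset.mem_univ v)).trans
        (Finset.single_le_sum (f := fun u => ∑ v : V, |c (Pi.single u 1 - Pi.single v 1)|)
          (fun _ _ => Finset.sum_nonneg fun _ _ => abs_nonneg _) (Finset.mem_univ u))
      have t2 : 0 ≤ ∑ j, |c (φ j)| := by positivity
      have t3 := le_abs_self (c (Pi.single u 1 - Pi.single v 1))
      have : 0 < K * δ := by positivity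
      linarith
    have h4 := g1 x (Pi.single u 1 - Pi.single v 1)
    have h5 := norm_sub_norm_le ((g (x + Pi.single u 1) - g x) - (g (x + Pi.single v 1) - g x))
      (g (x + (Pi.single u 1 - Pi.single v 1)) - g x)
    rw [norm_sub_rev] at h1
    linarith
  · have h1 : ∀ j, ‖g (x + φ j) - g x‖ ≤
        ‖∑ v, (φ j v : ℝ) • (g (x + Pi.single v 1) - g x)‖ + c (φ j) / K := by
      intro j
      have h1 := hap (φ j) x
      have h5 := norm_sub_norm_le (g (x + φ j) - g x)
        (∑ v, (φ j v : ℝ) • (g (x + Pi.single v 1) - g x))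
      linarith
    have h2 := Finset.sum_le_sum (s := Finset.univ) fun j _ => h1 j
    rw [Finset.sum_add_distrib, ← Finset.sum_div] at h2
    have h3 : (∑ j, c (φ j)) / K ≤ δ / 3 := by
      rw [div_le_iff₀ hK0']
      have t1 : ∑ j, c (φ j) ≤ ∑ j, |c (φ j)| := Finset.sum_le_sum fun j _ => le_abs_self _
      have t2 : 0 ≤ ∑ u : V, ∑ v : V, |c (Pi.single u 1 - Pi.single v 1)| := by positivity
      linarith
    linarith

end Lin
section Slash

/-- The midpoints of the diamond replacing the edge `e`. -/
noncomputable def midPt (G : WGraph) (e : G.ι) (b : Bool) : (G.slash diamond).V :=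
  Sum.inr (e, if b then
    ⟨(2 : Fin 4), show (2 : Fin 4) ≠ 0 by decide, show (2 : Fin 4) ≠ 1 by decide⟩
    else ⟨(3 : Fin 4), show (3 : Fin 4) ≠ 0 by decide, show (3 : Fin 4) ≠ 1 by decide⟩)

/-- Old vertices. -/
noncomputable def oldPt (G : WGraph) (v : G.V) : (G.slash diamond).V := Sum.inl v

/-- The edges of the diamond replacing the edge `e`. -/
def mkE (G : WGraph) (e : G.ι) (i : Fin 4) : (G.slash diamond).ι := (e, i)

/-- Which of the two midpoints an edge of the diamond touches. -/
def side (i : Fin 4) : Bool := if i.1 < 2 then true else false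

lemma slash_src0 (G : WGraph) (e : G.ι) :
    (G.slash diamond).src (mkE G e 0) = oldPt G (G.src e) := by rfl
lemma slash_dst0 (G : WGraph) (e : G.ι) :
    (G.slash diamond).dst (mkE G e 0) = midPt G e true := by rfl
lemma slash_src1 (G : WGraph) (e : G.ι) :
    (G.slash diamond).src (mkE G e 1) = midPt G e true := by rfl
lemma slash_dst1 (G : WGraph) (e : G.ι) :
    (G.slash diamond).dst (mkE G e 1) = oldPt G (G.dst e) := by rfl
lemma slash_src2 (G : WGraph) (e : G.ι) :
    (G.slash diamond).src (mkE G e 2) = oldPt G (G.src e) := by rfl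
lemma slash_dst2 (G : WGraph) (e : G.ι) :
    (G.slash diamond).dst (mkE G e 2) = midPt G e false := by rfl
lemma slash_src3 (G : WGraph) (e : G.ι) :
    (G.slash diamond).src (mkE G e 3) = midPt G e false := by rfl
lemma slash_dst3 (G : WGraph) (e : G.ι) :
    (G.slash diamond).dst (mkE G e 3) = oldPt G (G.dst e) := by rfl

lemma slash_len (G : WGraph) (e : G.ι) (i : Fin 4) :
    (G.slash diamond).len (mkE G e i) = G.len e * (1 / 2) := by rfl

lemma slash_sum_ι (G : WGraph) {M : Type*} [AddCommMonoid M] (f : (G.slash diamond).ι → M) :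
    ∑ p, f p = ∑ e, (f (mkE G e 0) + f (mkE G e 1) + f (mkE G e 2) + f (mkE G e 3)) := by
  have h : ∑ p, f p = ∑ p : G.ι × Fin 4, f (mkE G p.1 p.2) := by rfl
  rw [h, Fintype.sum_prod_type]
  refine Finset.sum_congr rfl fun e _ => ?_
  rw [Fin.sum_univ_four]

lemma slash_forall_ι (G : WGraph) {P : (G.slash diamond).ι → Prop}
    (h : ∀ e i, P (mkE G e i)) : ∀ p, P p := fun p => h p.1 p.2

lemma slash_V_cases (G : WGraph) {P : (G.slash diamond).V → Prop}
    (h1 : ∀ v, P (oldPt G v)) (h2 : ∀ e b, P (midPt G e b)) : ∀ p, P p := by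
  rintro (v | ⟨e, ⟨v, hv⟩⟩)
  · exact h1 v
  · have : ∀ v : Fin 4, v ≠ 0 ∧ v ≠ 1 → v = 2 ∨ v = 3 := by decide
    rcases this v hv with rfl | rfl
    · exact h2 e true
    · exact h2 e false

/-- Whether a vertex of the diamond is the first midpoint. -/
def isTwo (w : Fin 4) : Bool := decide (w = 2)

/-- Build a function on the vertices of `G ⊘ D`. -/
noncomputable def mkF (G : WGraph) {M : Type*} (f : G.V → M) (m : G.ι → Bool → M) :
    (G.slash diamond).V → M :=
  Sum.elim f (fun q => m q.1 (isTwo q.2.1))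

lemma mkF_old (G : WGraph) {M : Type*} (f : G.V → M) (m : G.ι → Bool → M) (v : G.V) :
    mkF G f m (oldPt G v) = f v := rfl

lemma mkF_mid (G : WGraph) {M : Type*} (f : G.V → M) (m : G.ι → Bool → M) (e : G.ι) (b : Bool) :
    mkF G f m (midPt G e b) = m e b := by
  cases b <;> rfl

lemma slash_sum_V (G : WGraph) {M : Type*} [AddCommMonoid M] (f : (G.slash diamond).V → M) :
    ∑ p, f p = ∑ v, f (oldPt G v) + ∑ e, (f (midPt G e true) + f (midPt G e false)) := by
  have : ∑ p, f p = ∑ p : G.V ⊕ (G.ι × Bool),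
      f (Sum.elim (oldPt G) (fun q => midPt G q.1 q.2) p) := by
    symm
    apply Fintype.sum_bijective (Sum.elim (oldPt G) (fun q => midPt G q.1 q.2))
    · constructor
      · have : Function.LeftInverse
            (mkF G (M := G.V ⊕ (G.ι × Bool)) Sum.inl (fun e b => Sum.inr (e, b)))
            (Sum.elim (oldPt G) (fun q => midPt G q.1 q.2)) := by
          rintro (v | ⟨e, b⟩)
          · rfl
          · exact mkF_mid G _ _ e b
        exact this.injective
      · apply slash_V_cases
        · intro v; exact ⟨Sum.inl v, rfl⟩
        · intro e b; exact ⟨Sum.inr (e, b), rfl⟩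
    · intro x; rfl
  rw [this, Fintype.sum_sum_type, Fintype.sum_prod_type]
  simp

end Slash

section Ineq

lemma sqrt_sum_le {ι : Type*} (s : Finset ι) (X Y Z : ι → ℝ) (hY : ∀ e, 0 ≤ Y e)
    (hZ : ∀ e, 0 ≤ Z e) (hX : ∀ e, X e ≤ (Y e + Z e) ^ 2) :
    ∀ A : ℝ, 0 ≤ A → √(A + ∑ e ∈ s, X e) ≤ √(A + ∑ e ∈ s, Y e ^ 2) + ∑ e ∈ s, Z e := by
  classical
  induction s using Finset.induction_on with
  | empty => intro A hA; simp
  | insert a s ha ih =>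
    intro A hA
    rw [Finset.sum_insert ha, Finset.sum_insert ha, Finset.sum_insert ha]
    have h1 : √(A + (X a + ∑ e ∈ s, X e)) ≤ √((A + (Y a + Z a) ^ 2) + ∑ e ∈ s, X e) := by
      apply Real.sqrt_le_sqrt
      linarith [hX a]
    have h2 := ih (A + (Y a + Z a) ^ 2) (by positivity)
    have h0 : 0 ≤ A + (Y a ^ 2 + ∑ e ∈ s, Y e ^ 2) := by positivity
    have h3 : √((A + (Y a + Z a) ^ 2) + ∑ e ∈ s, Y e ^ 2)
        ≤ √(A + (Y a ^ 2 + ∑ e ∈ s, Y e ^ 2)) + Z a := by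
      rw [Real.sqrt_le_left (add_nonneg (Real.sqrt_nonneg _) (hZ a))]
      have h4 : Y a ≤ √(A + (Y a ^ 2 + ∑ e ∈ s, Y e ^ 2)) := by
        apply Real.le_sqrt_of_sq_le
        have : 0 ≤ ∑ e ∈ s, Y e ^ 2 := by positivity
        linarith
      have h5 := Real.sq_sqrt h0
      nlinarith [hZ a, mul_le_mul_of_nonneg_right h4 (hZ a)]
    linarith

/-- A sign. -/
def sgn (b : Bool) : ℤ := if b then 1 else -1

lemma sum_signs_sq {ι : Type*} [Fintype ι] [DecidableEq ι] (p : ℝ) (x : ι → ℝ) :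
    ∑ ε : ι → Bool, (p + ∑ e, (sgn (ε e) : ℝ) * x e) ^ 2
      = (Fintype.card (ι → Bool) : ℝ) * (p ^ 2 + ∑ e, x e ^ 2) := by
  let flip : ι → (ι → Bool) ≃ (ι → Bool) := fun i =>
    Function.Involutive.toPerm (fun ε => Function.update ε i (!(ε i))) (by intro ε; simp)
  have hfl : ∀ i ε, flip i ε = Function.update ε i (!(ε i)) := fun _ _ => rfl
  have hs : ∀ b, sgn (!b) = - sgn b := by intro b; cases b <;> simp [sgn]
  have hq : ∀ b, (sgn b : ℝ) * sgn b = 1 := by intro b; cases b <;> simp [sgn]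
  have h1 : ∀ i, ∑ ε : ι → Bool, (sgn (ε i) : ℝ) = 0 := by
    intro i
    have := (flip i).sum_comp (fun ε => (sgn (ε i) : ℝ))
    simp only [hfl, Function.update_self, hs, Int.cast_neg,
      Finset.sum_neg_distrib] at this
    linarith
  have h2 : ∀ i j, i ≠ j → ∑ ε : ι → Bool, (sgn (ε i) : ℝ) * sgn (ε j) = 0 := by
    intro i j hij
    have := (flip i).sum_comp (fun ε => (sgn (ε i) : ℝ) * sgn (ε j))
    simp only [hfl, Function.update_self, hs, Int.cast_neg,
      Finset.sum_neg_distrib, Function.update_of_ne hij.symm, neg_mul] at this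
    linarith
  have h3 : ∀ ε : ι → Bool, (p + ∑ e, (sgn (ε e) : ℝ) * x e) ^ 2 = p ^ 2
      + ∑ e, (2 * p * x e) * (sgn (ε e) : ℝ)
      + ∑ e, ∑ e', (x e * x e') * ((sgn (ε e) : ℝ) * sgn (ε e')) := by
    intro ε
    have : (p + ∑ e, (sgn (ε e) : ℝ) * x e) ^ 2 = p ^ 2 + 2 * p * (∑ e, (sgn (ε e) : ℝ) * x e)
      + (∑ e, (sgn (ε e) : ℝ) * x e) * (∑ e, (sgn (ε e) : ℝ) * x e) := by ring
    rw [this, Finset.sum_mul_sum, Finset.mul_sum]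
    congr 1
    · congr 1
      exact Finset.sum_congr rfl fun e _ => by ring
    · exact Finset.sum_congr rfl fun e _ => Finset.sum_congr rfl fun e' _ => by ring
  simp only [h3, Finset.sum_add_distrib]
  rw [Finset.sum_comm (γ := ι → Bool)]
  have h4 : ∑ y : ι, ∑ ε : ι → Bool, 2 * p * x y * (sgn (ε y) : ℝ) = 0 := by
    refine Finset.sum_eq_zero fun y _ => ?_
    rw [← Finset.mul_sum, h1, mul_zero]
  rw [h4, Finset.sum_comm (γ := ι → Bool)]
  have h5 : ∀ y : ι, ∑ ε : ι → Bool, ∑ e', x y * x e' * ((sgn (ε y) : ℝ) * sgn (ε e'))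
      = (Fintype.card (ι → Bool) : ℝ) * x y ^ 2 := by
    intro y
    rw [Finset.sum_comm, Finset.sum_eq_single y]
    · rw [← Finset.mul_sum]
      simp only [hq, Finset.sum_const, nsmul_eq_mul, mul_one, Finset.card_univ]; ring
    · intro e' _ he'
      rw [← Finset.mul_sum, h2 y e' he'.symm, mul_zero]
    · simp
  simp only [h5]
  rw [← Finset.mul_sum, Finset.sum_const, nsmul_eq_mul, Finset.card_univ]
  ring

lemma sum_signs_sqrt {ι : Type*} [Fintype ι] [DecidableEq ι] (p R : ℝ) (hR : 0 ≤ R) (x : ι → ℝ) :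
    ∑ ε : ι → Bool, √((p + ∑ e, (sgn (ε e) : ℝ) * x e) ^ 2 + R)
      ≤ (Fintype.card (ι → Bool) : ℝ) * √(p ^ 2 + ∑ e, x e ^ 2 + R) := by
  have h := sum_signs_sq p x
  set M : ℝ := (Fintype.card (ι → Bool) : ℝ) with hM
  have hM0 : 0 ≤ M := by positivity
  have h0 : 0 ≤ p ^ 2 + ∑ e, x e ^ 2 + R := by positivity
  apply abs_le_of_sq_le_sq' _ (by positivity) |>.2
  rw [mul_pow, Real.sq_sqrt h0]
  calc _ ≤ (Finset.univ.card : ℝ) * ∑ ε : ι → Bool, √((p + ∑ e, (sgn (ε e) : ℝ) * x e) ^ 2 + R) ^ 2 :=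
        sq_sum_le_card_mul_sum_sq
    _ = M * ∑ ε : ι → Bool, ((p + ∑ e, (sgn (ε e) : ℝ) * x e) ^ 2 + R) := by
        rw [Finset.card_univ]
        congr 1
        refine Finset.sum_congr rfl fun ε _ => Real.sq_sqrt (by positivity)
    _ = _ := by
        rw [Finset.sum_add_distrib, h, Finset.sum_const, nsmul_eq_mul, Finset.card_univ, ← hM]
        ring

end Ineq
section GoodSec

/-- The random flow data used to bound the distortion from below. -/
def Good (G : WGraph) (κ S H : ℝ) : Prop :=
  ∃ (Ω : Type) (_ : Fintype Ω) (_ : Nonempty Ω) (c : Ω → G.ι → ℤ) (φ : Ω → G.V → ℤ),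
    (∀ ω e, 0 ≤ c ω e) ∧
    (∀ ω, ∑ v, φ ω v = 0) ∧
    (∀ e, ∑ ω, (c ω e : ℝ) = Fintype.card Ω) ∧
    (∀ ω, ∑ e, (c ω e : ℝ) = S) ∧
    (∀ F : G.V → ℝ, ∑ ω, √((∑ v, (φ ω v : ℝ) * F v) ^ 2
        + κ * ∑ e, (c ω e : ℝ) ^ 2 * |F (G.src e) - F (G.dst e)| ^ 2)
      ≤ 1.65 * Fintype.card Ω * ∑ e, |F (G.src e) - F (G.dst e)|) ∧
    (∀ ω, ∃ F : G.V → ℝ, (∀ e, |F (G.src e) - F (G.dst e)| ≤ 1) ∧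
      (∀ e, c ω e ≠ 0 → F (G.src e) = F (G.dst e)) ∧ ∑ v, (φ ω v : ℝ) * F v = H)

lemma good_base : Good WGraph.edgeGraph 2 1 0 := by
  refine ⟨Unit, inferInstance, inferInstance, fun _ _ => 1, fun _ _ => 0, ?_, ?_, ?_, ?_, ?_, ?_⟩
  · intros; norm_num
  · intros; simp
  · intros; simp
  · intros
    have hs : ∀ f : WGraph.edgeGraph.ι → ℝ, ∑ e, f e = f () := fun f => Finset.sum_singleton f ()
    rw [hs]; norm_num
  · intro F
    have hs : ∀ f : WGraph.edgeGraph.ι → ℝ, ∑ e, f e = f () := fun f => Finset.sum_singleton f ()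
    simp only [hs]
    simp only [Int.cast_zero, zero_mul, Finset.sum_const_zero, Int.cast_one, one_pow, one_mul,
      Finset.sum_const, Finset.card_univ, Fintype.card_unit, one_smul, Nat.cast_one, mul_one]
    apply Real.sqrt_le_iff.2
    constructor
    · positivity
    · nlinarith [sq_nonneg (|F (WGraph.edgeGraph.src ()) - F (WGraph.edgeGraph.dst ())|)]
  · intro ω
    exact ⟨fun _ => 0, by simp, by simp, by simp⟩

lemma mpoint (g g0 g1 g2 g3 : ℝ) (h : 0 ≤ g) (h0 : 0 ≤ g0) (h1 : 0 ≤ g1) (h2 : 0 ≤ g2)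
    (h3 : 0 ≤ g3) (ha : g ≤ g0 + g1) (hb : g ≤ g2 + g3) :
    (g0 ^ 2 + g1 ^ 2 + g2 ^ 2 + g3 ^ 2) / 2
      ≤ (g + 1.65 * ((g0 + g1 + g2 + g3) / 2 - g)) ^ 2 := by
  obtain ⟨α, hα⟩ : ∃ α, α = g0 + g1 - g := ⟨_, rfl⟩
  obtain ⟨β, hβ⟩ : ∃ β, β = g2 + g3 - g := ⟨_, rfl⟩
  have hα0 : 0 ≤ α := by linarith
  have hβ0 : 0 ≤ β := by linarith
  have e1 : g0 ^ 2 + g1 ^ 2 ≤ (g + α) ^ 2 := by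
    have : g + α = g0 + g1 := by linarith
    rw [this]; nlinarith [mul_nonneg h0 h1]
  have e2 : g2 ^ 2 + g3 ^ 2 ≤ (g + β) ^ 2 := by
    have : g + β = g2 + g3 := by linarith
    rw [this]; nlinarith [mul_nonneg h2 h3]
  have e3 : (g0 + g1 + g2 + g3) / 2 - g = (α + β) / 2 := by linarith
  rw [e3]
  nlinarith [mul_nonneg h hα0, mul_nonneg h hβ0, mul_nonneg hα0 hβ0, sq_nonneg α, sq_nonneg β]

lemma ppoint (d g g1 g2 τ : ℝ) (h : 0 ≤ g) (h1 : 0 ≤ g1) (h2 : 0 ≤ g2)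
    (ha : g ≤ g1 + g2) (hd : |d| ≤ g + τ) (hτ : g1 + g2 - g ≤ 2 * τ) :
    d ^ 2 + (g1 ^ 2 + g2 ^ 2) ≤ (√2 * g + (τ + 0.65 * (g1 + g2 - g))) ^ 2 := by
  obtain ⟨α, hα⟩ : ∃ α, α = g1 + g2 - g := ⟨_, rfl⟩
  have hα0 : 0 ≤ α := by linarith
  rw [← hα] at hτ ⊢
  have e1 : g1 ^ 2 + g2 ^ 2 ≤ (g + α) ^ 2 := by
    have : g + α = g1 + g2 := by linarith
    rw [this]; nlinarith [mul_nonneg h1 h2]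
  have e2 : d ^ 2 ≤ (g + τ) ^ 2 := by
    rw [← sq_abs d]; gcongr
  have hs : (1.414 : ℝ) ≤ √2 := Real.le_sqrt_of_sq_le (by norm_num)
  have hs2 : √2 ^ 2 = 2 := Real.sq_sqrt (by norm_num)
  have hτ0 : 0 ≤ τ := by linarith
  have e3 : (√2 * g + (τ + 0.65 * α)) ^ 2 = 2 * g ^ 2 + 2 * (√2 * (g * (τ + 0.65 * α)))
      + (τ + 0.65 * α) ^ 2 := by
    have : (√2 * g + (τ + 0.65 * α)) ^ 2 = √2 ^ 2 * g ^ 2 + 2 * (√2 * (g * (τ + 0.65 * α)))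
      + (τ + 0.65 * α) ^ 2 := by ring
    rw [this, hs2]
  have e4 : 1.414 * (g * (τ + 0.65 * α)) ≤ √2 * (g * (τ + 0.65 * α)) := by
    gcongr
  nlinarith [mul_nonneg h hα0, mul_nonneg h hτ0, mul_nonneg hα0 hτ0, mul_nonneg h (sub_nonneg.2 hτ),
    mul_nonneg hα0 (sub_nonneg.2 hτ)]

lemma good_m {G : WGraph} {S H : ℝ} (hG : Good G 1 S H) :
    Good (G.slash diamond) 2 (4 * S) (4 * H) := by
  obtain ⟨Ω, iF, iN, c, φ, hc0, hz, hcΩ, hcS, hin, hF⟩ := hG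
  refine ⟨Ω, iF, iN, fun ω p => c ω p.1, fun ω => mkF G (fun v => 2 * φ ω v) (fun _ _ => 0),
    ?_, ?_, ?_, ?_, ?_, ?_⟩
  · intro ω e; exact hc0 _ _
  · intro ω
    rw [slash_sum_V]
    simp only [mkF_old, mkF_mid, add_zero, Finset.sum_const_zero]
    rw [← Finset.mul_sum, hz, mul_zero]
  · intro e; exact hcΩ _
  · intro ω
    rw [slash_sum_ι, ← hcS ω, Finset.mul_sum]
    refine Finset.sum_congr rfl fun e _ => ?_
    simp only [mkE]; ring
  · intro F
    simp only [slash_sum_ι, slash_sum_V, slash_src0, slash_src1, slash_src2, slash_src3,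
      slash_dst0, slash_dst1, slash_dst2, slash_dst3, mkF_old, mkF_mid]
    simp only [Int.cast_zero, zero_mul, add_zero, Finset.sum_const_zero]
    obtain ⟨f, hf⟩ : ∃ f : G.V → ℝ, f = fun v => F (oldPt G v) := ⟨_, rfl⟩
    have hf' : ∀ v, F (oldPt G v) = f v := fun v => by rw [hf]
    simp only [hf']
    obtain ⟨m, hm⟩ : ∃ m : G.ι → Bool → ℝ, m = fun e b => F (midPt G e b) := ⟨_, rfl⟩
    have hm' : ∀ e b, F (midPt G e b) = m e b := fun e b => by rw [hm]
    simp only [hm']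
    have hmk : ∀ (e : G.ι) (i : Fin 4), (mkE G e i).1 = e := fun _ _ => rfl
    simp only [hmk]
    have key := hin f
    let g : G.ι → ℝ := fun e => |f (G.src e) - f (G.dst e)|
    let T : G.ι → ℝ := fun e => |f (G.src e) - m e true| + |m e true - f (G.dst e)| +
              |f (G.src e) - m e false| + |m e false - f (G.dst e)|
    have hgT : ∀ e, 0 ≤ T e / 2 - g e := by
      intro e
      have h1 := abs_sub_le (f (G.src e)) (m e true) (f (G.dst e))
      have h2 := abs_sub_le (f (G.src e)) (m e false) (f (G.dst e))
      simp only [T, g]; linarith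
    have step : ∀ ω, √((∑ v, ((2 * φ ω v : ℤ) : ℝ) * f v) ^ 2 + 2 * ∑ e,
        ((c ω e : ℝ) ^ 2 * |f (G.src e) - m e true| ^ 2
          + (c ω e : ℝ) ^ 2 * |m e true - f (G.dst e)| ^ 2
          + (c ω e : ℝ) ^ 2 * |f (G.src e) - m e false| ^ 2
          + (c ω e : ℝ) ^ 2 * |m e false - f (G.dst e)| ^ 2))
        ≤ 2 * (√((∑ v, (φ ω v : ℝ) * f v) ^ 2
            + 1 * ∑ e, (c ω e : ℝ) ^ 2 * |f (G.src e) - f (G.dst e)| ^ 2)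
            + ∑ e, (c ω e : ℝ) * (1.65 * (T e / 2 - g e))) := by
      intro ω
      have hp : ∑ v, ((2 * φ ω v : ℤ) : ℝ) * f v = 2 * ∑ v, (φ ω v : ℝ) * f v := by
        rw [Finset.mul_sum]
        refine Finset.sum_congr rfl fun v _ => ?_
        push_cast; ring
      rw [hp]
      set p := ∑ v, (φ ω v : ℝ) * f v
      have hcr : ∀ e, (0 : ℝ) ≤ c ω e := fun e => by exact_mod_cast hc0 ω e
      have h1 := sqrt_sum_le (Finset.univ : Finset G.ι)
        (fun e => (c ω e : ℝ) ^ 2 * ((|f (G.src e) - m e true| ^ 2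
          + |m e true - f (G.dst e)| ^ 2
          + |f (G.src e) - m e false| ^ 2
          + |m e false - f (G.dst e)| ^ 2) / 2))
        (fun e => (c ω e : ℝ) * g e) (fun e => (c ω e : ℝ) * (1.65 * (T e / 2 - g e)))
        (fun e => mul_nonneg (hcr e) (abs_nonneg _))
        (fun e => mul_nonneg (hcr e) (mul_nonneg (by norm_num) (hgT e)))
        (fun e => by
          rw [← mul_add, mul_pow]
          apply mul_le_mul_of_nonneg_left _ (sq_nonneg _)
          exact mpoint _ _ _ _ _ (abs_nonneg _) (abs_nonneg _) (abs_nonneg _) (abs_nonneg _)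
            (abs_nonneg _) (abs_sub_le _ _ _) (abs_sub_le _ _ _))
        (p ^ 2) (sq_nonneg _)
      have h2 : ∀ y : ℝ, 2 * √y = √(4 * y) := by
        intro y
        rw [Real.sqrt_mul (by norm_num), show (4 : ℝ) = 2 ^ 2 by norm_num,
          Real.sqrt_sq (by norm_num)]
      have h3 : (2 * p) ^ 2 + 2 * ∑ e,
        ((c ω e : ℝ) ^ 2 * |f (G.src e) - m e true| ^ 2
          + (c ω e : ℝ) ^ 2 * |m e true - f (G.dst e)| ^ 2
          + (c ω e : ℝ) ^ 2 * |f (G.src e) - m e false| ^ 2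
          + (c ω e : ℝ) ^ 2 * |m e false - f (G.dst e)| ^ 2) = 4 * (p ^ 2 + ∑ e,
          (c ω e : ℝ) ^ 2 * ((|f (G.src e) - m e true| ^ 2
          + |m e true - f (G.dst e)| ^ 2
          + |f (G.src e) - m e false| ^ 2
          + |m e false - f (G.dst e)| ^ 2) / 2)) := by
        have h4 : ∀ u w : G.ι → ℝ, (∀ e, u e = 2 * w e) → (2 * p) ^ 2 + 2 * ∑ e, u e
            = 4 * (p ^ 2 + ∑ e, w e) := by
          intro u w huw
          simp only [huw, ← Finset.mul_sum]; ring
        exact h4 _ _ fun e => by ring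
      rw [h3, ← h2]
      apply mul_le_mul_of_nonneg_left _ (by norm_num)
      refine h1.trans (le_of_eq ?_)
      simp only [mul_pow, one_mul, g]
    refine (Finset.sum_le_sum fun ω _ => step ω).trans ?_
    rw [← Finset.mul_sum, Finset.sum_add_distrib, Finset.sum_comm (γ := Ω)]
    simp only [← Finset.sum_mul, hcΩ]
    rw [← Finset.mul_sum, ← Finset.mul_sum, Finset.sum_sub_distrib, ← Finset.sum_div]
    have hg : ∑ e, |f (G.src e) - f (G.dst e)| = ∑ e, g e := rfl
    rw [hg] at key
    change _ ≤ 1.65 * (Fintype.card Ω : ℝ) * ∑ e, T e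
    nlinarith [key]
  · intro ω
    obtain ⟨F, h1, h2, h3⟩ := hF ω
    refine ⟨mkF G (fun v => 2 * F v) (fun e _ => F (G.src e) + F (G.dst e)), ?_, ?_, ?_⟩
    · apply slash_forall_ι
      intro e i
      have := abs_le.1 (h1 e)
      fin_cases i
      · change |mkF G _ _ ((G.slash diamond).src (mkE G e 0)) - mkF G _ _ ((G.slash diamond).dst (mkE G e 0))| ≤ 1
        rw [slash_src0, slash_dst0, mkF_old, mkF_mid, abs_le]
        constructor <;> linarith
      · change |mkF G _ _ ((G.slash diamond).src (mkE G e 1)) - mkF G _ _ ((G.slash diamond).dst (mkE G e 1))| ≤ 1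
        rw [slash_src1, slash_dst1, mkF_old, mkF_mid, abs_le]
        constructor <;> linarith
      · change |mkF G _ _ ((G.slash diamond).src (mkE G e 2)) - mkF G _ _ ((G.slash diamond).dst (mkE G e 2))| ≤ 1
        rw [slash_src2, slash_dst2, mkF_old, mkF_mid, abs_le]
        constructor <;> linarith
      · change |mkF G _ _ ((G.slash diamond).src (mkE G e 3)) - mkF G _ _ ((G.slash diamond).dst (mkE G e 3))| ≤ 1
        rw [slash_src3, slash_dst3, mkF_old, mkF_mid, abs_le]
        constructor <;> linarith
    · apply slash_forall_ι
      intro e i he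
      have := h2 e he
      fin_cases i
      · change mkF G _ _ ((G.slash diamond).src (mkE G e 0)) = mkF G _ _ ((G.slash diamond).dst (mkE G e 0))
        rw [slash_src0, slash_dst0, mkF_old, mkF_mid]; linarith
      · change mkF G _ _ ((G.slash diamond).src (mkE G e 1)) = mkF G _ _ ((G.slash diamond).dst (mkE G e 1))
        rw [slash_src1, slash_dst1, mkF_old, mkF_mid]; linarith
      · change mkF G _ _ ((G.slash diamond).src (mkE G e 2)) = mkF G _ _ ((G.slash diamond).dst (mkE G e 2))
        rw [slash_src2, slash_dst2, mkF_old, mkF_mid]; linarith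
      · change mkF G _ _ ((G.slash diamond).src (mkE G e 3)) = mkF G _ _ ((G.slash diamond).dst (mkE G e 3))
        rw [slash_src3, slash_dst3, mkF_old, mkF_mid]; linarith
    · rw [slash_sum_V, ← h3, Finset.mul_sum]
      simp only [mkF_old, mkF_mid]
      simp only [Int.cast_zero, zero_mul, add_zero, Finset.sum_const_zero]
      refine Finset.sum_congr rfl fun v _ => ?_
      push_cast; ring

end GoodSec
section GoodP

/-- Indicator of the edges of the diamond lying on the path `ρ`. -/
def onP (ρ : Bool) (i : Fin 4) : ℤ := if decide (i.1 < 2) = ρ then 1 else 0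

lemma two_sqrt (y : ℝ) : 2 * √y = √(4 * y) := by
  rw [Real.sqrt_mul (by norm_num), show (4 : ℝ) = 2 ^ 2 by norm_num, Real.sqrt_sq (by norm_num)]

/-- The core estimate for a fixed path `ρ`. -/
lemma pcore {V ι Ω : Type} [Fintype V] [Fintype ι] [DecidableEq ι] [Fintype Ω]
    (src dst : ι → V) (c : Ω → ι → ℤ) (φ : Ω → V → ℤ) (f : V → ℝ) (m : ι → Bool → ℝ)
    (hc0 : ∀ ω e, 0 ≤ c ω e) (hcΩ : ∀ e, ∑ ω, (c ω e : ℝ) = Fintype.card Ω)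
    (hin : ∑ ω, √((∑ v, (φ ω v : ℝ) * f v) ^ 2
        + 2 * ∑ e, (c ω e : ℝ) ^ 2 * |f (src e) - f (dst e)| ^ 2)
      ≤ 1.65 * Fintype.card Ω * ∑ e, |f (src e) - f (dst e)|) (ρ : Bool)
    (T : ι → ℝ) (hT : ∀ e, T e = |f (src e) - m e true| + |m e true - f (dst e)| +
              |f (src e) - m e false| + |m e false - f (dst e)|) :
    ∑ ω, ∑ ε : ι → Bool, √((2 * (∑ v, (φ ω v : ℝ) * f v
        + ∑ e, (sgn (ε e) : ℝ) * ((c ω e : ℝ) * (m e true - m e false)))) ^ 2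
        + 4 * ∑ e, (c ω e : ℝ) ^ 2 * (|f (src e) - m e ρ| ^ 2 + |m e ρ - f (dst e)| ^ 2))
      ≤ (Fintype.card (ι → Bool) : ℝ) * (2 * (1.65 * Fintype.card Ω * ∑ e, |f (src e) - f (dst e)|
        + Fintype.card Ω * ∑ e, ((T e / 2 - |f (src e) - f (dst e)|)
          + 0.65 * (|f (src e) - m e ρ| + |m e ρ - f (dst e)| - |f (src e) - f (dst e)|)))) := by
  have hcr : ∀ ω e, (0 : ℝ) ≤ c ω e := fun ω e => by exact_mod_cast hc0 ω e
  let g : ι → ℝ := fun e => |f (src e) - f (dst e)|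
  let α : ι → ℝ := fun e => |f (src e) - m e ρ| + |m e ρ - f (dst e)| - |f (src e) - f (dst e)|
  have hα : ∀ e, 0 ≤ α e := fun e => by
    have := abs_sub_le (f (src e)) (m e ρ) (f (dst e))
    simp only [α]; linarith
  have hατ : ∀ e, α e ≤ 2 * (T e / 2 - g e) := fun e => by
    have h1 := abs_sub_le (f (src e)) (m e true) (f (dst e))
    have h2 := abs_sub_le (f (src e)) (m e false) (f (dst e))
    rw [hT e]
    cases ρ <;> simp only [α, g] <;> linarith
  have hd : ∀ e, |m e true - m e false| ≤ g e + (T e / 2 - g e) := fun e => by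
    have h1 := abs_sub_le (m e true) (f (src e)) (m e false)
    have h2 := abs_sub_le (m e true) (f (dst e)) (m e false)
    rw [abs_sub_comm (m e true) (f (src e))] at h1
    rw [abs_sub_comm (f (dst e)) (m e false)] at h2
    rw [hT e]; linarith
  have step : ∀ ω, ∑ ε : ι → Bool, √((2 * (∑ v, (φ ω v : ℝ) * f v
        + ∑ e, (sgn (ε e) : ℝ) * ((c ω e : ℝ) * (m e true - m e false)))) ^ 2
        + 4 * ∑ e, (c ω e : ℝ) ^ 2 * (|f (src e) - m e ρ| ^ 2 + |m e ρ - f (dst e)| ^ 2))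
      ≤ (Fintype.card (ι → Bool) : ℝ) * (2 * (√((∑ v, (φ ω v : ℝ) * f v) ^ 2
        + 2 * ∑ e, (c ω e : ℝ) ^ 2 * |f (src e) - f (dst e)| ^ 2)
        + ∑ e, (c ω e : ℝ) * ((T e / 2 - g e) + 0.65 * α e))) := by
    intro ω
    set p := ∑ v, (φ ω v : ℝ) * f v
    set R := ∑ e, (c ω e : ℝ) ^ 2 * (|f (src e) - m e ρ| ^ 2 + |m e ρ - f (dst e)| ^ 2) with hR
    have hR0 : 0 ≤ R := Finset.sum_nonneg fun e _ => by positivity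
    have h1 : ∀ ε : ι → Bool, √((2 * (p
        + ∑ e, (sgn (ε e) : ℝ) * ((c ω e : ℝ) * (m e true - m e false)))) ^ 2 + 4 * R)
        = 2 * √((p + ∑ e, (sgn (ε e) : ℝ) * ((c ω e : ℝ) * (m e true - m e false))) ^ 2 + R) := by
      intro ε
      rw [two_sqrt]; congr 1; ring
    simp only [h1]
    rw [← Finset.mul_sum, mul_left_comm]
    apply mul_le_mul_of_nonneg_left _ (by norm_num)
    refine (sum_signs_sqrt p R hR0 _).trans ?_
    apply mul_le_mul_of_nonneg_left _ (by positivity)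
    have h2 := sqrt_sum_le (Finset.univ : Finset ι)
      (fun e => ((c ω e : ℝ) * (m e true - m e false)) ^ 2
        + (c ω e : ℝ) ^ 2 * (|f (src e) - m e ρ| ^ 2 + |m e ρ - f (dst e)| ^ 2))
      (fun e => (c ω e : ℝ) * (√2 * g e))
      (fun e => (c ω e : ℝ) * ((T e / 2 - g e) + 0.65 * α e))
      (fun e => mul_nonneg (hcr ω e) (mul_nonneg (Real.sqrt_nonneg _) (abs_nonneg _)))
      (fun e => mul_nonneg (hcr ω e) (by linarith [hα e, hατ e]))
      (fun e => by
        rw [← mul_add, mul_pow, mul_pow, ← mul_add]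
        apply mul_le_mul_of_nonneg_left _ (sq_nonneg _)
        exact ppoint _ _ _ _ _ (abs_nonneg _) (abs_nonneg _) (abs_nonneg _)
          (abs_sub_le _ _ _) (hd e) (hατ e))
      (p ^ 2) (sq_nonneg _)
    have h3 : p ^ 2 + ∑ e, ((c ω e : ℝ) * (m e true - m e false)) ^ 2 + R
        = p ^ 2 + ∑ e, (((c ω e : ℝ) * (m e true - m e false)) ^ 2
        + (c ω e : ℝ) ^ 2 * (|f (src e) - m e ρ| ^ 2 + |m e ρ - f (dst e)| ^ 2)) := by
      rw [Finset.sum_add_distrib, hR, add_assoc]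
    rw [h3]
    refine h2.trans (le_of_eq ?_)
    congr 3
    rw [Finset.mul_sum]
    refine Finset.sum_congr rfl fun e _ => ?_
    rw [mul_pow, mul_pow, Real.sq_sqrt (by norm_num)]
    simp only [g]; ring
  refine (Finset.sum_le_sum fun ω _ => step ω).trans ?_
  rw [← Finset.mul_sum, ← Finset.mul_sum, Finset.sum_add_distrib, Finset.sum_comm (γ := Ω)]
  simp only [← Finset.sum_mul, hcΩ]
  rw [← Finset.mul_sum]
  apply mul_le_mul_of_nonneg_left _ (by positivity)
  apply mul_le_mul_of_nonneg_left _ (by norm_num)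
  simp only [g, α]
  linarith

lemma good_p {G : WGraph} {S H : ℝ} (hG : Good G 2 S H) :
    Good (G.slash diamond) 1 (4 * S) (4 * H + 2 * S) := by
  obtain ⟨Ω, iF, iN, c, φ, hc0, hz, hcΩ, hcS, hin, hF⟩ := hG
  refine ⟨Ω × Bool × (G.ι → Bool), inferInstance, inferInstance,
    fun ω p => 2 * c ω.1 p.1 * onP ω.2.1 p.2,
    fun ω => mkF G (fun v => 2 * φ ω.1 v) (fun e b => 2 * c ω.1 e * (sgn (ω.2.2 e) * sgn b)),
    ?_, ?_, ?_, ?_, ?_, ?_⟩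
  · intro ω e
    have : 0 ≤ onP ω.2.1 e.2 := by unfold onP; split_ifs <;> norm_num
    have := hc0 ω.1 e.1
    positivity
  · intro ω
    rw [slash_sum_V]
    simp only [mkF_old, mkF_mid]
    rw [← Finset.mul_sum, hz, mul_zero, zero_add]
    refine Finset.sum_eq_zero fun e _ => ?_
    simp [sgn]
  · apply slash_forall_ι
    intro e i
    have hmk : (mkE G e i).1 = e := rfl
    have hmk2 : (mkE G e i).2 = i := rfl
    simp only [Fintype.sum_prod_type, Fintype.sum_bool, hmk, hmk2]
    have : ∀ i, (onP true i : ℝ) + onP false i = 1 := by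
      intro i; unfold onP; by_cases h : i.1 < 2 <;> simp [h]
    simp only [Int.cast_mul, Int.cast_ofNat, Finset.sum_const, ← smul_add, ← mul_add, this, mul_one,
      nsmul_eq_mul, Finset.card_univ, Fintype.card_prod, Fintype.card_bool, Nat.cast_mul]
    rw [← Finset.mul_sum, ← Finset.mul_sum, hcΩ]
    push_cast; ring
  · intro ω
    have hmk : ∀ e i, (mkE G e i).1 = e := fun _ _ => rfl
    have hmk2 : ∀ e i, (mkE G e i).2 = i := fun _ _ => rfl
    rw [slash_sum_ι, ← hcS ω.1, Finset.mul_sum]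
    refine Finset.sum_congr rfl fun e _ => ?_
    simp only [hmk, hmk2]
    rcases ω with ⟨ω, ρ, ε⟩
    cases ρ <;> simp [onP] <;> ring
  · intro F
    simp only [slash_sum_ι, slash_sum_V, slash_src0, slash_src1, slash_src2, slash_src3,
      slash_dst0, slash_dst1, slash_dst2, slash_dst3, mkF_old, mkF_mid]
    obtain ⟨f, hf⟩ : ∃ f : G.V → ℝ, f = fun v => F (oldPt G v) := ⟨_, rfl⟩
    have hf' : ∀ v, F (oldPt G v) = f v := fun v => by rw [hf]
    simp only [hf']
    obtain ⟨m, hm⟩ : ∃ m : G.ι → Bool → ℝ, m = fun e b => F (midPt G e b) := ⟨_, rfl⟩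
    have hm' : ∀ e b, F (midPt G e b) = m e b := fun e b => by rw [hm]
    simp only [hm']
    have hmk : ∀ (e : G.ι) (i : Fin 4), (mkE G e i).1 = e := fun _ _ => rfl
    have hmk2 : ∀ e i, (mkE G e i).2 = i := fun _ _ => rfl
    simp only [hmk, hmk2]
    have key := pcore G.src G.dst c φ f m hc0 hcΩ (hin f)
    obtain ⟨T, hT⟩ : ∃ T : G.ι → ℝ, ∀ e, T e = |f (G.src e) - m e true| + |m e true - f (G.dst e)| +
              |f (G.src e) - m e false| + |m e false - f (G.dst e)| := ⟨_, fun e => rfl⟩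
    have kt := key true T hT
    have kf := key false T hT
    simp only [← hT]
    have hre : ∀ (ω : Ω) (ρ : Bool) (ε : G.ι → Bool),
        √((∑ v, ((2 * φ ω v : ℤ) : ℝ) * f v +
            ∑ e, (((2 * c ω e * (sgn (ε e) * sgn true) : ℤ) : ℝ) * m e true +
              ((2 * c ω e * (sgn (ε e) * sgn false) : ℤ) : ℝ) * m e false)) ^ 2 +
          1 * ∑ e, (((2 * c ω e * onP ρ 0 : ℤ) : ℝ) ^ 2 * |f (G.src e) - m e true| ^ 2
            + ((2 * c ω e * onP ρ 1 : ℤ) : ℝ) ^ 2 * |m e true - f (G.dst e)| ^ 2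
            + ((2 * c ω e * onP ρ 2 : ℤ) : ℝ) ^ 2 * |f (G.src e) - m e false| ^ 2
            + ((2 * c ω e * onP ρ 3 : ℤ) : ℝ) ^ 2 * |m e false - f (G.dst e)| ^ 2))
        = √((2 * (∑ v, (φ ω v : ℝ) * f v
        + ∑ e, (sgn (ε e) : ℝ) * ((c ω e : ℝ) * (m e true - m e false)))) ^ 2
        + 4 * ∑ e, (c ω e : ℝ) ^ 2 * (|f (G.src e) - m e ρ| ^ 2 + |m e ρ - f (G.dst e)| ^ 2)) := by
      intro ω ρ ε
      congr 2
      · congr 1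
        rw [mul_add, Finset.mul_sum, Finset.mul_sum]
        congr 1
        · refine Finset.sum_congr rfl fun v _ => ?_
          push_cast; ring
        · refine Finset.sum_congr rfl fun e _ => ?_
          have h1 : sgn true = 1 := rfl
          have h2 : sgn false = -1 := rfl
          rw [h1, h2]
          push_cast; ring
      · rw [one_mul, Finset.mul_sum]
        refine Finset.sum_congr rfl fun e _ => ?_
        cases ρ <;> simp [onP] <;> ring
    rw [Fintype.sum_prod_type]
    simp only [Fintype.sum_prod_type, Fintype.sum_bool]
    simp only [hre]
    rw [Finset.sum_add_distrib]
    refine (add_le_add kt kf).trans (le_of_eq ?_)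
    have hsum : ∑ e, T e = (∑ e, (|f (G.src e) - m e true| + |m e true - f (G.dst e)|
        - |f (G.src e) - f (G.dst e)|)) + (∑ e, (|f (G.src e) - m e false| + |m e false - f (G.dst e)|
        - |f (G.src e) - f (G.dst e)|)) + 2 * ∑ e, |f (G.src e) - f (G.dst e)| := by
      rw [Finset.mul_sum, ← Finset.sum_add_distrib, ← Finset.sum_add_distrib]
      refine Finset.sum_congr rfl fun e _ => ?_
      rw [hT]; ring
    rw [Finset.sum_add_distrib, Finset.sum_add_distrib, Finset.sum_sub_distrib, ← Finset.sum_div,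
      ← Finset.mul_sum, ← Finset.mul_sum]
    have hs1 := hsum
    set A := (∑ e, (|f (G.src e) - m e true| + |m e true - f (G.dst e)|
        - |f (G.src e) - f (G.dst e)|))
    set B := (∑ e, (|f (G.src e) - m e false| + |m e false - f (G.dst e)|
        - |f (G.src e) - f (G.dst e)|))
    rw [hs1]
    simp only [Fintype.card_prod, Fintype.card_bool]
    push_cast
    ring
  · rintro ⟨ω, ρ, ε⟩
    obtain ⟨F, h1, h2, h3⟩ := hF ω
    obtain ⟨m, hm⟩ : ∃ m : G.ι → Bool → ℝ, m = fun e b => if c ω e = 0 then F (G.src e) + F (G.dst e)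
      else if b = ρ then 2 * F (G.src e) else 2 * F (G.src e) + (sgn (ε e) : ℝ) * sgn b := ⟨_, rfl⟩
    have hsg : ∀ b, sgn b = 1 ∨ sgn b = -1 := by intro b; cases b <;> simp [sgn]
    have hma : ∀ e b, |2 * F (G.src e) - m e b| ≤ 1 := by
      intro e b
      have := abs_le.1 (h1 e)
      rw [hm]; dsimp only
      split_ifs
      · rw [abs_le]; constructor <;> linarith
      · simp
      · rcases hsg (ε e) with h | h <;> rcases hsg b with h' | h' <;> rw [h, h'] <;>
          norm_num
    have hmb : ∀ e b, |m e b - 2 * F (G.dst e)| ≤ 1 := by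
      intro e b
      by_cases hce : c ω e = 0
      · have := abs_le.1 (h1 e)
        rw [hm]; dsimp only
        rw [if_pos hce, abs_le]; constructor <;> linarith
      · rw [← h2 e hce, abs_sub_comm]; exact hma e b
    have hmc : ∀ e b, c ω e ≠ 0 → b = ρ → m e b = 2 * F (G.src e) := by
      intro e b he hb
      rw [hm]; dsimp only
      rw [if_neg he, if_pos hb]
    have hmd : ∀ e, (c ω e : ℝ) * (sgn (ε e) * (m e true - m e false)) = c ω e := by
      intro e
      by_cases hce : c ω e = 0
      · simp [hce]
      · rw [hm]; dsimp only
        rw [if_neg hce, if_neg hce]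
        have : (sgn (ε e) : ℝ) * sgn (ε e) = 1 := by
          rcases hsg (ε e) with h | h <;> rw [h] <;> norm_num
        have h1 : sgn true = 1 := rfl
        have h2 : sgn false = -1 := rfl
        rw [h1, h2]
        cases ρ
        · simp only [Bool.true_eq_false, if_false, if_true]
          push_cast
          linear_combination (c ω e : ℝ) * this
        · simp only [Bool.false_eq_true, if_false, if_true]
          push_cast
          linear_combination (c ω e : ℝ) * this
    refine ⟨mkF G (fun v => 2 * F v) m, ?_, ?_, ?_⟩
    · apply slash_forall_ι
      intro e i
      fin_cases i
      · change |mkF G _ _ ((G.slash diamond).src (mkE G e 0)) - mkF G _ _ ((G.slash diamond).dst (mkE G e 0))| ≤ 1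
        rw [slash_src0, slash_dst0, mkF_old, mkF_mid]; exact hma _ _
      · change |mkF G _ _ ((G.slash diamond).src (mkE G e 1)) - mkF G _ _ ((G.slash diamond).dst (mkE G e 1))| ≤ 1
        rw [slash_src1, slash_dst1, mkF_old, mkF_mid]; exact hmb _ _
      · change |mkF G _ _ ((G.slash diamond).src (mkE G e 2)) - mkF G _ _ ((G.slash diamond).dst (mkE G e 2))| ≤ 1
        rw [slash_src2, slash_dst2, mkF_old, mkF_mid]; exact hma _ _
      · change |mkF G _ _ ((G.slash diamond).src (mkE G e 3)) - mkF G _ _ ((G.slash diamond).dst (mkE G e 3))| ≤ 1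
        rw [slash_src3, slash_dst3, mkF_old, mkF_mid]; exact hmb _ _
    · apply slash_forall_ι
      intro e i he
      have he' : 2 * c ω e * onP ρ i ≠ 0 := he
      have hce : c ω e ≠ 0 := by
        intro h; rw [h] at he'; simp at he'
      have hon : decide (i.1 < 2) = ρ := by
        by_contra h
        apply he'
        rw [onP, if_neg h, mul_zero]
      have := h2 e hce
      fin_cases i
      · change mkF G _ _ ((G.slash diamond).src (mkE G e 0)) = mkF G _ _ ((G.slash diamond).dst (mkE G e 0))
        rw [slash_src0, slash_dst0, mkF_old, mkF_mid, hmc e _ hce (by rw [← hon]; rfl)]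
      · change mkF G _ _ ((G.slash diamond).src (mkE G e 1)) = mkF G _ _ ((G.slash diamond).dst (mkE G e 1))
        rw [slash_src1, slash_dst1, mkF_old, mkF_mid, hmc e _ hce (by rw [← hon]; rfl), this]
      · change mkF G _ _ ((G.slash diamond).src (mkE G e 2)) = mkF G _ _ ((G.slash diamond).dst (mkE G e 2))
        rw [slash_src2, slash_dst2, mkF_old, mkF_mid, hmc e _ hce (by rw [← hon]; rfl)]
      · change mkF G _ _ ((G.slash diamond).src (mkE G e 3)) = mkF G _ _ ((G.slash diamond).dst (mkE G e 3))
        rw [slash_src3, slash_dst3, mkF_old, mkF_mid, hmc e _ hce (by rw [← hon]; rfl), this]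
    · rw [slash_sum_V, ← h3, Finset.mul_sum, ← hcS ω, Finset.mul_sum]
      simp only [mkF_old, mkF_mid]
      congr 1
      · refine Finset.sum_congr rfl fun v _ => ?_
        push_cast; ring
      · refine Finset.sum_congr rfl fun e _ => ?_
        rw [← hmd e]
        have h1 : sgn true = 1 := rfl
        have h2 : sgn false = -1 := rfl
        rw [h1, h2]
        push_cast
        rw [hmd e]
        linear_combination 2 * hmd e

lemma good_all (n : ℕ) :
    Good (diamond.slashPow (2 * n)) 2 (4 ^ (2 * n)) (4 ^ (2 * n) * ((n : ℝ) / 2)) := by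
  induction n with
  | zero =>
    have e : diamond.slashPow (2 * 0) = WGraph.edgeGraph := rfl
    rw [e]
    convert good_base using 1 <;> simp
  | succ n hg =>
    have := good_m (good_p hg)
    have e : diamond.slashPow (2 * (n + 1)) = ((diamond.slashPow (2 * n)).slash diamond).slash diamond := rfl
    rw [e]
    convert this using 1
    · rw [show 2 * (n + 1) = 2 * n + 2 by ring, pow_add]; ring
    · rw [show 2 * (n + 1) = 2 * n + 2 by ring, pow_add]; push_cast; ring

lemma good_exists (n : ℕ) : ∃ h κ : ℝ, (n : ℝ) / 4 ≤ h ∧ 0 ≤ κ ∧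
    Good (diamond.slashPow n) κ (4 ^ n) (4 ^ n * h) := by
  rcases Nat.even_or_odd' n with ⟨k, rfl | rfl⟩
  · have hg := good_all k
    exact ⟨(k : ℝ) / 2, 2, by push_cast; linarith, by norm_num, hg⟩
  · have hg := good_all k
    refine ⟨(k : ℝ) / 2 + 1 / 2, 1, by push_cast; linarith, by norm_num, ?_⟩
    have := good_p hg
    have e : diamond.slashPow (2 * k + 1) = (diamond.slashPow (2 * k)).slash diamond := rfl
    rw [e]
    convert this using 1
    · rw [pow_succ]; ring
    · rw [pow_succ]; ring

end GoodP
section GraphTC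

/-- Two vertices joined by a walk. -/
def Reach (G : WGraph) (x y : G.V) : Prop := ∃ l, G.IsWalk x y l

lemma Reach.rfl' (G : WGraph) (x : G.V) : Reach G x x := ⟨[], rfl⟩

lemma Reach.step (G : WGraph) (p : G.ι × Bool) {y : G.V} (h : Reach G (G.stepDst p) y) :
    Reach G (G.stepSrc p) y := by
  obtain ⟨l, hl⟩ := h
  exact ⟨p :: l, rfl, hl⟩

lemma Reach.trans' {G : WGraph} {x y z : G.V} (h : Reach G x y) (h' : Reach G y z) :
    Reach G x z := by
  obtain ⟨l, hl⟩ := h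
  induction l generalizing x with
  | nil => have : x = y := hl
           rw [this]; exact h'
  | cons p l ih =>
    obtain ⟨h1, h2⟩ := hl
    rw [← h1]
    exact Reach.step G p (ih h2)

lemma Reach.edge (G : WGraph) (e : G.ι) : Reach G (G.src e) (G.dst e) :=
  Reach.step G (e, true) (Reach.rfl' G _)

lemma Reach.edge' (G : WGraph) (e : G.ι) : Reach G (G.dst e) (G.src e) :=
  Reach.step G (e, false) (Reach.rfl' G _)

lemma Reach.map {G G' : WGraph} (f : G.V → G'.V)
    (h1 : ∀ e, Reach G' (f (G.src e)) (f (G.dst e)))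
    (h2 : ∀ e, Reach G' (f (G.dst e)) (f (G.src e))) {x y : G.V} (h : Reach G x y) :
    Reach G' (f x) (f y) := by
  obtain ⟨l, hl⟩ := h
  induction l generalizing x with
  | nil => have : x = y := hl
           rw [this]; exact Reach.rfl' _ _
  | cons p l ih =>
    obtain ⟨h3, h4⟩ := hl
    rw [← h3]
    refine Reach.trans' ?_ (ih h4)
    rcases p with ⟨e, b⟩
    cases b
    · exact h2 e
    · exact h1 e

lemma conn_slash {G : WGraph} (hG : ∀ x y, Reach G x y) :
    ∀ x y, Reach (G.slash diamond) x y := by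
  have e0 := fun e => Reach.edge (G.slash diamond) (mkE G e 0)
  have e1 := fun e => Reach.edge (G.slash diamond) (mkE G e 1)
  have e2 := fun e => Reach.edge (G.slash diamond) (mkE G e 2)
  have e0' := fun e => Reach.edge' (G.slash diamond) (mkE G e 0)
  have e1' := fun e => Reach.edge' (G.slash diamond) (mkE G e 1)
  have e2' := fun e => Reach.edge' (G.slash diamond) (mkE G e 2)
  simp only [slash_src0, slash_dst0, slash_src1, slash_dst1, slash_src2, slash_dst2] at e0 e1 e2 e0' e1' e2'
  have hold : ∀ x y, Reach (G.slash diamond) (oldPt G x) (oldPt G y) := fun x y =>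
    Reach.map (oldPt G) (fun e => (e0 e).trans' (e1 e)) (fun e => (e1' e).trans' (e0' e)) (hG x y)
  have hto : ∀ x, ∃ v, Reach (G.slash diamond) x (oldPt G v) ∧ Reach (G.slash diamond) (oldPt G v) x := by
    apply slash_V_cases
    · intro v; exact ⟨v, Reach.rfl' _ _, Reach.rfl' _ _⟩
    · intro e b
      cases b
      · exact ⟨G.src e, e2' e, e2 e⟩
      · exact ⟨G.src e, e0' e, e0 e⟩
  intro x y
  obtain ⟨u, hu, _⟩ := hto x
  obtain ⟨v, _, hv⟩ := hto y
  exact hu.trans' ((hold u v).trans' hv)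

lemma conn_pow (n : ℕ) : ∀ x y, Reach (diamond.slashPow n) x y := by
  induction n with
  | zero =>
    have h1 : Reach (diamond.slashPow 0) false true := Reach.edge WGraph.edgeGraph ()
    have h2 : Reach (diamond.slashPow 0) true false := Reach.edge' WGraph.edgeGraph ()
    intro x y
    change Bool at x y
    cases x <;> cases y
    · exact Reach.rfl' _ _
    · exact h1
    · exact h2
    · exact Reach.rfl' _ _
  | succ n ih => exact conn_slash ih

lemma len_pow (n : ℕ) : ∀ e, (diamond.slashPow n).len e = (1 / 2) ^ n := by
  induction n with
  | zero => intro e; rfl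
  | succ n ih =>
    intro e
    have : (diamond.slashPow (n + 1)).len e = (diamond.slashPow n).len e.1 * (1 / 2) := rfl
    rw [this, ih, pow_succ]

lemma card_pow (n : ℕ) : (Fintype.card (diamond.slashPow n).ι : ℝ) = 4 ^ n := by
  induction n with
  | zero =>
    have : Fintype.card (diamond.slashPow 0).ι = 1 := rfl
    rw [this]; simp
  | succ n ih =>
    have h := slash_sum_ι (diamond.slashPow n) (fun _ => (1 : ℝ))
    simp only [Finset.sum_const, Finset.card_univ, nsmul_eq_mul, mul_one] at h
    have : Fintype.card (diamond.slashPow (n + 1)).ι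
      = Fintype.card ((diamond.slashPow n).slash diamond).ι := rfl
    rw [this, h, ih, pow_succ]; norm_num

variable {G : WGraph}

lemma walk_lip {F : G.V → ℝ} (hF : ∀ e, |F (G.src e) - F (G.dst e)| ≤ G.len e)
    {y : G.V} (l : List (G.ι × Bool)) : ∀ x, G.IsWalk x y l →
    F x - F y ≤ (l.map fun p => G.len p.1).sum := by
  induction l with
  | nil => intro x h
           have : x = y := h
           simp [this]
  | cons p l ih =>
    rintro x ⟨h1, h2⟩
    have h3 := ih _ h2
    rw [List.map_cons, List.sum_cons]
    have h4 := abs_le.1 (hF p.1)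
    have h5 : F (G.stepSrc p) - F (G.stepDst p) ≤ G.len p.1 := by
      rcases p with ⟨e, b⟩
      cases b
      · change F (G.dst e) - F (G.src e) ≤ G.len e
        simp only at h4; linarith
      · change F (G.src e) - F (G.dst e) ≤ G.len e
        exact h4.2
    rw [← h1]; linarith

lemma gdist_lip (hc : ∀ x y, Reach G x y) {F : G.V → ℝ}
    (hF : ∀ e, |F (G.src e) - F (G.dst e)| ≤ G.len e) (x y : G.V) :
    F x - F y ≤ G.gdist x y := by
  apply le_csInf
  · obtain ⟨l, hl⟩ := hc x y
    exact ⟨_, l, hl, rfl⟩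
  · rintro _ ⟨l, hl, rfl⟩
    exact walk_lip hF l x hl

lemma walk_nonneg (hl : ∀ e, 0 ≤ G.len e) (l : List (G.ι × Bool)) :
    0 ≤ (l.map fun p => G.len p.1).sum := by
  apply List.sum_nonneg
  intro a ha
  obtain ⟨p, _, rfl⟩ := List.mem_map.1 ha
  exact hl _

lemma gdist_nonneg' (hl : ∀ e, 0 ≤ G.len e) (x y : G.V) : 0 ≤ G.gdist x y := by
  apply Real.sInf_nonneg
  rintro _ ⟨l, _, rfl⟩
  exact walk_nonneg hl l

lemma gdist_edge (hl : ∀ e, 0 ≤ G.len e) (e : G.ι) : G.gdist (G.src e) (G.dst e) ≤ G.len e := by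
  apply csInf_le
  · refine ⟨0, ?_⟩
    rintro _ ⟨l, _, rfl⟩
    exact walk_nonneg hl l
  · exact ⟨[(e, true)], ⟨rfl, rfl⟩, by simp⟩

section TC
variable {V : Type*} [Fintype V] [DecidableEq V] {d : V → V → ℝ}

lemma tc_nonneg (hd : ∀ x y, 0 ≤ d x y) (μ : V → ℝ) : 0 ≤ TCnorm d μ := by
  apply Real.sInf_nonneg
  rintro _ ⟨n, a, x, y, ha, _, rfl⟩
  exact Finset.sum_nonneg fun i _ => mul_nonneg (ha i) (hd _ _)

lemma tc_mem {I : Type*} [Fintype I] (μ : V → ℝ) (a : I → ℝ) (x y : I → V) (ha : ∀ i, 0 ≤ a i)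
    (h : ∀ z : V, μ z = ∑ i, a i * ((if x i = z then (1 : ℝ) else 0) -
      (if y i = z then (1 : ℝ) else 0))) :
    (∑ i, a i * d (x i) (y i)) ∈ { c : ℝ | ∃ (n : ℕ) (a : Fin n → ℝ) (x y : Fin n → V),
    (∀ i, 0 ≤ a i) ∧
    (∀ z : V, μ z = ∑ i, a i * ((if x i = z then (1 : ℝ) else 0) -
      (if y i = z then (1 : ℝ) else 0))) ∧
    c = ∑ i, a i * d (x i) (y i) } := by
  let E := (Fintype.equivFin I).symm
  refine ⟨Fintype.card I, a ∘ E, x ∘ E, y ∘ E, fun i => ha _, fun z => ?_, ?_⟩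
  · rw [h z]
    exact (E.sum_comp (fun i => a i * ((if x i = z then (1 : ℝ) else 0) -
      (if y i = z then (1 : ℝ) else 0)))).symm
  · exact (E.sum_comp (fun i => a i * d (x i) (y i))).symm

lemma tc_le {I : Type*} [Fintype I] (hd : ∀ x y, 0 ≤ d x y) (μ : V → ℝ) (a : I → ℝ) (x y : I → V)
    (ha : ∀ i, 0 ≤ a i)
    (h : ∀ z : V, μ z = ∑ i, a i * ((if x i = z then (1 : ℝ) else 0) -
      (if y i = z then (1 : ℝ) else 0))) :
    TCnorm d μ ≤ ∑ i, a i * d (x i) (y i) := by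
  apply csInf_le
  · refine ⟨0, ?_⟩
    rintro _ ⟨n, a, x, y, ha, _, rfl⟩
    exact Finset.sum_nonneg fun i _ => mul_nonneg (ha i) (hd _ _)
  · exact tc_mem μ a x y ha h

lemma star_plan (s : V) (μ : V → ℝ) (hμ : ∑ v, μ v = 0) (z : V) :
    μ z = ∑ i : V × Bool, (if i.2 then max (μ i.1) 0 else max (-μ i.1) 0) *
      ((if (if i.2 then i.1 else s) = z then (1 : ℝ) else 0) -
      (if (if i.2 then s else i.1) = z then (1 : ℝ) else 0)) := by
  rw [Fintype.sum_prod_type]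
  simp only [Fintype.sum_bool, if_true, Bool.false_eq_true, if_false]
  have : ∀ v, max (μ v) 0 * ((if v = z then (1 : ℝ) else 0) - if s = z then 1 else 0)
      + max (-μ v) 0 * ((if s = z then (1 : ℝ) else 0) - if v = z then 1 else 0)
      = (if v = z then μ v else 0) - μ v * (if s = z then 1 else 0) := by
    intro v
    have h : max (μ v) 0 - max (-μ v) 0 = μ v := max_zero_sub_eq_self _
    split_ifs <;> linarith
  simp only [this]
  rw [Finset.sum_sub_distrib, ← Finset.sum_mul, hμ]
  simp

lemma tc_ge (hd : ∀ x y, 0 ≤ d x y) (s : V) (F : V → ℝ) (hF : ∀ x y, F x - F y ≤ d x y)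
    (μ : V → ℝ) (hμ : ∑ v, μ v = 0) : ∑ v, F v * μ v ≤ TCnorm d μ := by
  apply le_csInf
  · exact ⟨_, tc_mem (d := d) μ _ _ _ (fun i => by split_ifs <;> positivity) (star_plan s μ hμ)⟩
  · rintro _ ⟨n, a, x, y, ha, h, rfl⟩
    have : ∑ v, F v * μ v = ∑ i, a i * (F (x i) - F (y i)) := by
      simp only [h, Finset.mul_sum]
      rw [Finset.sum_comm]
      refine Finset.sum_congr rfl fun i _ => ?_
      have : ∀ v, F v * (a i * ((if x i = v then (1 : ℝ) else 0) - if y i = v then 1 else 0))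
        = (if x i = v then a i * F v else 0) - (if y i = v then a i * F v else 0) := by
        intro v; split_ifs <;> ring
      simp only [this, Finset.sum_sub_distrib, Finset.sum_ite_eq, Finset.mem_univ, if_true]
      ring
    rw [this]
    exact Finset.sum_le_sum fun i _ => mul_le_mul_of_nonneg_left (hF _ _) (ha i)

lemma tc_le_l1 (hd : ∀ x y, 0 ≤ d x y) (s : V) (μ : V → ℝ) (hμ : ∑ v, μ v = 0) :
    TCnorm d μ ≤ (∑ v, (d v s + d s v)) * ∑ v, |μ v| := by
  refine (tc_le hd μ _ _ _ (fun i => by split_ifs <;> positivity) (star_plan s μ hμ)).trans ?_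
  rw [Fintype.sum_prod_type, Finset.mul_sum]
  refine Finset.sum_le_sum fun v _ => ?_
  simp only [Fintype.sum_bool, if_true, Bool.false_eq_true, if_false]
  have h1 : max (μ v) 0 ≤ |μ v| := max_le (le_abs_self _) (abs_nonneg _)
  have h2 : max (-μ v) 0 ≤ |μ v| := max_le (neg_le_abs _) (abs_nonneg _)
  have h3 : d v s + d s v ≤ ∑ v, (d v s + d s v) :=
    Finset.single_le_sum (f := fun v => d v s + d s v)
      (fun v _ => add_nonneg (hd _ _) (hd _ _)) (Finset.mem_univ v)
  have h4 := mul_le_mul_of_nonneg_right h1 (hd v s)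
  have h5 := mul_le_mul_of_nonneg_right h2 (hd s v)
  have h6 := mul_le_mul_of_nonneg_right h3 (abs_nonneg (μ v))
  linarith

lemma tc_edge (hd : ∀ x y, 0 ≤ d x y) (u v : V) :
    TCnorm d (fun z => (if u = z then (1 : ℝ) else 0) - (if v = z then (1 : ℝ) else 0)) ≤ d u v := by
  have := tc_le (I := Unit) hd
    (fun z => (if u = z then (1 : ℝ) else 0) - (if v = z then (1 : ℝ) else 0))
    (fun _ => 1) (fun _ => u) (fun _ => v) (by simp) (by simp)
  simpa using this

end TC

lemma l1_le_tc (hc : ∀ x y, Reach G x y) (r : ℝ) (hr : 0 < r) (hl : ∀ e, G.len e = r)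
    (μ : G.V → ℝ) (hμ : ∑ v, μ v = 0) : r / 2 * ∑ v, |μ v| ≤ TCnorm G.gdist μ := by
  have h0 : ∀ e, 0 ≤ G.len e := fun e => by rw [hl]; exact hr.le
  have := tc_ge (gdist_nonneg' h0) G.s (fun v => r / 2 * SignType.sign (μ v))
    (gdist_lip hc (fun e => ?_)) μ hμ
  · refine le_trans (le_of_eq ?_) this
    rw [Finset.mul_sum]
    refine Finset.sum_congr rfl fun v _ => ?_
    rw [mul_assoc, sign_mul_self]
  · rw [hl, ← mul_sub, abs_mul, abs_of_pos (by positivity : (0:ℝ) < r / 2)]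
    have : |((SignType.sign (μ (G.src e)) : SignType) : ℝ) - SignType.sign (μ (G.dst e))| ≤ 2 := by
      generalize SignType.sign (μ (G.src e)) = a
      generalize SignType.sign (μ (G.dst e)) = b
      cases a <;> cases b <;> norm_num [SignType.cast]
    nlinarith

lemma set_nonempty (hc : ∀ x y, Reach G x y) (r : ℝ) (hr : 0 < r) (hl : ∀ e, G.len e = r) :
    { D : ℝ | 1 ≤ D ∧ ∃ (Ω : Type) (_ : MeasurableSpace Ω) (ν : Measure Ω)
    (f : {μ : G.V → ℝ // ∑ x, μ x = 0} → Lp ℝ 1 ν), ∀ x y : {μ : G.V → ℝ // ∑ x, μ x = 0},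
      TCnorm G.gdist (fun v => x.1 v - y.1 v) ≤ dist (f x) (f y) ∧
      dist (f x) (f y) ≤ D * TCnorm G.gdist (fun v => x.1 v - y.1 v) }.Nonempty := by
  have h0 : ∀ e, 0 ≤ G.len e := fun e => by rw [hl]; exact hr.le
  set K := ∑ v, (G.gdist v G.s + G.gdist G.s v) with hK
  have hK0 : 0 ≤ K := Finset.sum_nonneg fun v _ =>
    add_nonneg (gdist_nonneg' h0 _ _) (gdist_nonneg' h0 _ _)
  letI : MeasurableSpace G.V := ⊤
  haveI : DiscreteMeasurableSpace G.V := ⟨fun _ => trivial⟩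
  have hm : ∀ h : G.V → ℝ, MemLp h 1 (Measure.count : Measure G.V) := fun h => MemLp.of_discrete
  refine ⟨max 1 (2 * K / r), le_max_left _ _, G.V, ⊤, Measure.count,
    fun μ => (hm (fun v => K * μ.1 v)).toLp _, ?_⟩
  intro x y
  have hd : dist ((hm (fun v => K * x.1 v)).toLp _) ((hm (fun v => K * y.1 v)).toLp _)
      = K * ∑ v, |x.1 v - y.1 v| := by
    rw [dist_eq_norm, ← MemLp.toLp_sub, L1.norm_eq_integral_norm]
    refine (integral_congr_ae ((MemLp.coeFn_toLp _).fun_comp (fun z => ‖z‖))).trans ?_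
    rw [integral_count, Finset.mul_sum]
    refine Finset.sum_congr rfl fun v _ => ?_
    simp only [Function.comp_apply, Pi.sub_apply]
    rw [← mul_sub, norm_mul, Real.norm_eq_abs, Real.norm_eq_abs, abs_of_nonneg hK0]
  have hz : ∑ v, (x.1 v - y.1 v) = 0 := by rw [Finset.sum_sub_distrib, x.2, y.2, sub_zero]
  rw [hd]
  have hA := tc_le_l1 (gdist_nonneg' h0) G.s _ hz
  have hB := l1_le_tc hc r hr hl _ hz
  refine ⟨hA, ?_⟩
  have hT := tc_nonneg (gdist_nonneg' h0) (fun v => x.1 v - y.1 v)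
  calc K * ∑ v, |x.1 v - y.1 v| = 2 * K / r * (r / 2 * ∑ v, |x.1 v - y.1 v|) := by
        field_simp
    _ ≤ 2 * K / r * TCnorm G.gdist (fun v => x.1 v - y.1 v) := by
        apply mul_le_mul_of_nonneg_left hB (by positivity)
    _ ≤ _ := mul_le_mul_of_nonneg_right (le_max_right _ _) hT

end GraphTC
section Final

lemma l1_integrate {Ω J K : Type*} [Fintype J] [Fintype K] {_ : MeasurableSpace Ω}
    {ν : Measure Ω} (u : J → Lp ℝ 1 ν) (w : K → Lp ℝ 1 ν) (C : ℝ)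
    (h : ∀ᵐ x ∂ν, ∑ j, |u j x| ≤ C * ∑ k, |w k x|) :
    ∑ j, ‖u j‖ ≤ C * ∑ k, ‖w k‖ := by
  simp only [L1.norm_eq_integral_norm]
  rw [← integral_finset_sum _ (fun j _ => (L1.integrable_coeFn (u j)).norm),
    ← integral_finset_sum _ (fun j _ => (L1.integrable_coeFn (w j)).norm), ← integral_const_mul]
  refine integral_mono_ae ?_ ?_ ?_
  · exact integrable_finset_sum _ (fun j _ => (L1.integrable_coeFn (u j)).norm)
  · exact (integrable_finset_sum _ (fun j _ => (L1.integrable_coeFn (w j)).norm)).const_mul _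
  · exact h

/-- Balanced measure attached to an integer valued function. -/
def balance (G : WGraph) (k : G.V → ℤ) : {μ : G.V → ℝ // ∑ x, μ x = 0} :=
  ⟨fun v => (k v : ℝ) - if G.s = v then ((∑ x, k x : ℤ) : ℝ) else 0, by
    rw [Finset.sum_sub_distrib, Finset.sum_ite_eq]; simp⟩

lemma balance_of_zero (G : WGraph) (k : G.V → ℤ) (hk : ∑ x, k x = 0) :
    (balance G k).1 = fun v => (k v : ℝ) := by
  funext v
  simp [balance, hk]

lemma balance_add (G : WGraph) (k l : G.V → ℤ) :
    (fun v => (balance G (k + l)).1 v - (balance G k).1 v) = (balance G l).1 := by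
  funext v
  simp only [balance, Pi.add_apply, Finset.sum_add_distrib]
  push_cast
  split_ifs <;> ring

lemma good_bound {G : WGraph} (hc : ∀ x y, Reach G x y) (r : ℝ) (hr : 0 < r)
    (hl : ∀ e, G.len e = r) {κ S H : ℝ} (hκ : 0 ≤ κ) (hG : Good G κ S H) (D : ℝ) (hD : 1 ≤ D)
    {Ω : Type} [MeasurableSpace Ω] {ν : Measure Ω}
    (f : {μ : G.V → ℝ // ∑ x, μ x = 0} → Lp ℝ 1 ν)
    (hf : ∀ x y : {μ : G.V → ℝ // ∑ x, μ x = 0},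
      TCnorm G.gdist (fun v => x.1 v - y.1 v) ≤ dist (f x) (f y) ∧
      dist (f x) (f y) ≤ D * TCnorm G.gdist (fun v => x.1 v - y.1 v)) :
    H ≤ 1.65 * (Fintype.card G.ι * D) := by
  have h0 : ∀ e, 0 ≤ G.len e := fun e => by rw [hl]; exact hr.le
  obtain ⟨J, iJ, iN, c, φ, hc0, hz, hcΩ, hcS, hin, hF⟩ := hG
  have key : ∀ δ : ℝ, 0 < δ → (Fintype.card J : ℝ) * (H * r) - δ
      ≤ 1.65 * Fintype.card J * (Fintype.card G.ι * (D * r + δ)) := by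
    intro δ hδ
    obtain ⟨F, hF1, hF2⟩ := lin_lemma (fun k : G.V → ℤ => f (balance G k))
      (fun w => D * TCnorm G.gdist (balance G w).1)
      (fun x w => by
        have := (hf (balance G (x + w)) (balance G x)).2
        rw [balance_add, dist_eq_norm] at this
        exact this) φ (fun _ => H * r)
      (fun j x R => by
        have h1 := (hf (balance G (x + R • φ j)) (balance G x)).1
        rw [balance_add, dist_eq_norm] at h1
        refine le_trans ?_ h1
        obtain ⟨g, hg1, hg2, hg3⟩ := hF j
        have hzR : ∑ v, (R • φ j) v = 0 := by
          simp only [Pi.smul_apply]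
          rw [← Finset.smul_sum, hz, smul_zero]
        have h2 := tc_ge (gdist_nonneg' h0) G.s (fun v => r * g v)
          (gdist_lip hc (fun e => by
            rw [hl, ← mul_sub, abs_mul, abs_of_pos hr]
            nlinarith [hg1 e])) _ (balance G (R • φ j)).2
        refine le_trans (le_of_eq ?_) h2
        rw [balance_of_zero _ _ hzR, ← hg3, Finset.sum_mul, Finset.mul_sum]
        refine Finset.sum_congr rfl fun v _ => ?_
        simp only [Pi.smul_apply, nsmul_eq_mul]
        push_cast; ring) δ hδ
    have h3 : ∑ j, ‖∑ v, (φ j v : ℝ) • F v‖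
        ≤ 1.65 * Fintype.card J * ∑ e, ‖F (G.src e) - F (G.dst e)‖ := by
      apply l1_integrate
      have a1 : ∀ j, ∀ᵐ x ∂ν, (∑ v, (φ j v : ℝ) • F v : Lp ℝ 1 ν) x = ∑ v, (φ j v : ℝ) * F v x := by
        intro j
        have b1 := Lp.coeFn_finsetSum (p := 1) (μ := ν) Finset.univ (fun v => (φ j v : ℝ) • F v)
        have b2 : ∀ v, ∀ᵐ x ∂ν, ((φ j v : ℝ) • F v : Lp ℝ 1 ν) x = (φ j v : ℝ) * F v x :=
          fun v => Lp.coeFn_smul _ _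
        filter_upwards [b1, ae_all_iff.2 b2] with x h1 h2
        rw [h1, Finset.sum_apply]
        exact Finset.sum_congr rfl fun v _ => h2 v
      have a2 : ∀ e, ∀ᵐ x ∂ν, (F (G.src e) - F (G.dst e) : Lp ℝ 1 ν) x
          = F (G.src e) x - F (G.dst e) x := fun e => Lp.coeFn_sub _ _
      filter_upwards [ae_all_iff.2 a1, ae_all_iff.2 a2] with x h1 h2
      simp only [h1, h2]
      refine le_trans (Finset.sum_le_sum fun j _ => ?_) (hin (fun v => F v x))
      apply Real.abs_le_sqrt
      have : 0 ≤ ∑ e, (c j e : ℝ) ^ 2 * |F (G.src e) x - F (G.dst e) x| ^ 2 :=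
        Finset.sum_nonneg fun e _ => by positivity
      nlinarith [mul_nonneg hκ this]
    have h4 : ∑ e, ‖F (G.src e) - F (G.dst e)‖ ≤ Fintype.card G.ι * (D * r + δ) := by
      have : ∀ e, ‖F (G.src e) - F (G.dst e)‖ ≤ D * r + δ := by
        intro e
        refine (hF1 _ _).trans ?_
        have hb : (balance G (Pi.single (G.src e) 1 - Pi.single (G.dst e) 1)).1
            = fun z => (if G.src e = z then (1 : ℝ) else 0) - (if G.dst e = z then (1 : ℝ) else 0) := by
          rw [balance_of_zero]
          · funext z
            simp only [Pi.sub_apply, Pi.single_apply, eq_comm (a := z)]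
            push_cast
            rfl
          · simp [Finset.sum_sub_distrib]
        have h5 := (tc_edge (gdist_nonneg' h0) (G.src e) (G.dst e)).trans (gdist_edge h0 e)
        rw [← hb, hl] at h5
        have := mul_le_mul_of_nonneg_left h5 (by linarith : (0 : ℝ) ≤ D)
        linarith
      calc _ ≤ ∑ e : G.ι, (D * r + δ) := Finset.sum_le_sum fun e _ => this e
        _ = _ := by rw [Finset.sum_const, Finset.card_univ, nsmul_eq_mul]
    have h5 : (∑ j : J, H * r) = (Fintype.card J : ℝ) * (H * r) := by simp
    rw [h5] at hF2
    exact hF2.trans (h3.trans (mul_le_mul_of_nonneg_left h4 (by positivity)))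
  have hJ : (0 : ℝ) < Fintype.card J := by exact_mod_cast Fintype.card_pos
  have lim : (Fintype.card J : ℝ) * (H * r)
      ≤ 1.65 * Fintype.card J * (Fintype.card G.ι * (D * r)) := by
    apply le_of_forall_pos_le_add
    intro ε hε
    set M : ℝ := 1 + 1.65 * Fintype.card J * Fintype.card G.ι with hM
    have hM0 : 0 < M := by positivity
    have := key (ε / M) (by positivity)
    have e1 : M * (ε / M) = ε := by field_simp
    have e2 : M * (ε / M) = ε / M + 1.65 * Fintype.card J * Fintype.card G.ι * (ε / M) := by
      nth_rewrite 1 [hM]; ring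
    nlinarith
  have : (Fintype.card J * r : ℝ) * H ≤ (Fintype.card J * r : ℝ) * (1.65 * (Fintype.card G.ι * D)) := by
    linarith
  exact le_of_mul_le_mul_left this (by positivity)

end Final

/-- For every `n ≥ 0`, the diamond graphs satisfy
`c₁(TC(D^{⊘n})) ≥ ((2−√2)/4)·n`. -/
theorem c1_TC_diamond_lower (n : ℕ) :
    c1TC (diamond.slashPow n).gdist ≥ (2 - Real.sqrt 2) / 4 * n := by
  have hr : (0 : ℝ) < (1 / 2) ^ n := by positivity
  apply le_csInf
  · exact set_nonempty (conn_pow n) _ hr (len_pow n)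
  · rintro D ⟨hD, Ω, iΩ, ν, f, hf⟩
    obtain ⟨h, κ, hh, hκ, hG⟩ := good_exists n
    have hb := good_bound (conn_pow n) _ hr (len_pow n) hκ hG D hD f hf
    rw [card_pow] at hb
    have h4 : (0 : ℝ) < 4 ^ n := by positivity
    have h5 : h ≤ 1.65 * D := by
      have : (4 : ℝ) ^ n * h ≤ 4 ^ n * (1.65 * D) := by linarith
      exact le_of_mul_le_mul_left this h4
    have hs : (1.414 : ℝ) ≤ √2 := Real.le_sqrt_of_sq_le (by norm_num)
    have hn : (0 : ℝ) ≤ n := by positivity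
    nlinarith
end
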